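/- Assume in addition that there is no interval in which f is affine. Then the sequence of functionals {H_ε} is equicoercive on 𝒳: for each M>0 there exists a compact set K_M⊂𝒳 such that {u∈𝒳 : H_ε(u)≤M}⊂K_M for every ε∈(0,1]. -/

import Mathlib

/-!
Why the sublevel sets of `H_ε` lie in one compact set.

*Representation.* If `H_ε(u) ≤ M`, optimizing the cost over multiples of a test function and
applying Riesz's theorem gives a control `P` with `‖P‖² ≤ 2εM` such that `u_t + Φ_x = 0`, where
`Φ = f(u) - ((ε/2) D(u) u_x - √σ(u) P)` (`cost_repr`). Multiplying by `u` and a cutoff yields a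
bound, locally in space and uniformly in `ε ≤ 1`, for the dissipation `∫ ε u_x² + |f(u) - Φ|² / ε`
(`dis_bound`). The chain rule is justified by mollification (`exists_approx`).

*Time.* The flux is the sum of a bounded term and of a term bounded in local `L²`, so the primitives
in space `∫₀ˣ u(t, ·)` are equicontinuous in time (`time_mod`).

*Space.* Let `(η, q)` be an entropy pair, `q' = η' f'`, and let `Δ` denote the increment in `x` by
`h`. Testing the entropy balance with the potential `∫₀ʰ u(t, x + y) dy` of `Δu`, which is at most
`h`, gives an interaction estimate of compensated-compactness type: the local integral of
`Δu Δq(u) - Δf(u) Δη(u)` is `O(h)` uniformly in `ε` (`inter_est`). For `η' = f'` the integrand would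
be the Cauchy-Schwarz defect `(a - b) ∫ f'² - (f(a) - f(b))²`, which is positive for `a ≠ b` because
`f` is not affine on any interval (`Gf_pos`), hence bounded below away from the diagonal. Taking for
`η'` a polynomial close to `f'` in `L¹` (`exists_ent`) gives a modulus of continuity in `L¹` for
space translations, uniform on the sublevel sets (`transl`).

*Compactness.* The paths with these two moduli of continuity form a compact set (`kset_compact`):
Arzelà–Ascoli applied to the primitives gives convergence in `d_𝒰`, and the translation modulus
upgrades it to local `L¹` convergence (`l1_conv`).

The coefficients matter only on `[0,1]` and are extended to `ℝ` by their boundary values (`ext01`).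
-/

open MeasureTheory Set Filter Topology
open scoped ENNReal Classical

noncomputable section

namespace GammaSCL

/-! ### Spatial test functions and the metric on `U` -/

/-- Smooth compactly supported test functions on `ℝ`, supported in `(-N, N)`. -/
structure STest (N : ℝ) where
  toFun : ℝ → ℝ
  smooth : ContDiff ℝ (⊤ : ℕ∞) toFun
  cpt : HasCompactSupport toFun
  supp : Function.support toFun ⊆ Ioo (-N) N

/-- The negative Sobolev seminorm `‖w‖_{-1,N}`. -/
def negNorm (N : ℝ) (w : ℝ → ℝ) : ℝ :=
  sSup { r : ℝ | ∃ φ : STest N, (∫ x, deriv φ.toFun x ^ 2) = 1 ∧ r = ∫ x, w x * φ.toFun x }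

/-- The metric `d_U` on the space `U` of measurable `[0,1]`-valued functions. -/
def dU (u v : ℝ → ℝ) : ℝ :=
  ∑' n : ℕ, (2 : ℝ)⁻¹ ^ (n + 1) *
    (negNorm ((n : ℝ) + 1) (fun x => u x - v x) /
      (1 + negNorm ((n : ℝ) + 1) (fun x => u x - v x)))

/-- The space `𝒰 = C([0,T]; U)`. -/
structure cU (T : ℝ) where
  toFun : ℝ × ℝ → ℝ
  meas : Measurable toFun
  mem01 : ∀ p, toFun p ∈ Icc (0:ℝ) 1
  cont : ∀ t₀ ∈ Icc (0:ℝ) T, ∀ δ > 0, ∃ ζ > 0, ∀ t ∈ Icc (0:ℝ) T,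
    |t - t₀| < ζ → dU (fun x => toFun (t, x)) (fun x => toFun (t₀, x)) < δ

/-- The uniform metric `d_𝒰` on `𝒰`. -/
def dcU (T : ℝ) (u v : cU T) : ℝ :=
  sSup { r : ℝ | ∃ t ∈ Icc (0:ℝ) T,
    r = dU (fun x => u.toFun (t, x)) (fun x => v.toFun (t, x)) }

/-- The metric `d_𝒳` on `𝒳`. -/
def dX (T : ℝ) (u v : cU T) : ℝ :=
  (∑' n : ℕ, (2 : ℝ)⁻¹ ^ (n + 1) *
    ∫ p in Icc (0:ℝ) T ×ˢ Icc (-((n : ℝ) + 1)) ((n : ℝ) + 1), |u.toFun p - v.toFun p|) +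
  dcU T u v

/-! ### Space-time test functions -/

/-- Smooth test functions compactly supported in `(0,T) × ℝ`. -/
structure TTest (T : ℝ) where
  toFun : ℝ × ℝ → ℝ
  smooth : ContDiff ℝ (⊤ : ℕ∞) toFun
  cpt : HasCompactSupport toFun
  supp : Function.support toFun ⊆ Ioo (0 : ℝ) T ×ˢ (univ : Set ℝ)

/-- Smooth test functions compactly supported in `[0,T] × ℝ` (no vanishing at `t = 0, T`). -/
structure TTestC where
  toFun : ℝ × ℝ → ℝ
  smooth : ContDiff ℝ (⊤ : ℕ∞) toFun
  cpt : HasCompactSupport toFun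

/-- Partial derivative in `t`. -/
def ptF (ψ : ℝ × ℝ → ℝ) : ℝ × ℝ → ℝ := fun p => fderiv ℝ ψ p (1, 0)
/-- Partial derivative in `x`. -/
def pxF (ψ : ℝ × ℝ → ℝ) : ℝ × ℝ → ℝ := fun p => fderiv ℝ ψ p (0, 1)

/-- The `L²([0,T] × ℝ)` inner product `⟨⟨g, h⟩⟩`. -/
def pair (T : ℝ) (g h : ℝ × ℝ → ℝ) : ℝ :=
  ∫ p in Icc (0:ℝ) T ×ˢ (univ : Set ℝ), g p * h p

/-! ### Weak derivatives -/

/-- Locally square integrable on `[0,T] × ℝ`. -/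
def L2loc (T : ℝ) (w : ℝ × ℝ → ℝ) : Prop :=
  Measurable w ∧ ∀ R > 0, IntegrableOn (fun p => w p ^ 2) (Icc (0:ℝ) T ×ˢ Icc (-R) R)

/-- `w` is the weak `x`-derivative of `u`. -/
def HasWeakDx (T : ℝ) (u w : ℝ × ℝ → ℝ) : Prop :=
  ∀ φ : TTest T, pair T u (pxF φ.toFun) = - pair T w φ.toFun

/-- `u` admits a locally square integrable weak `x`-derivative. -/
def hasDx (T : ℝ) (u : ℝ × ℝ → ℝ) : Prop := ∃ w, L2loc T w ∧ HasWeakDx T u w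

/-- A choice of weak `x`-derivative. -/
def wDx (T : ℝ) (u : ℝ × ℝ → ℝ) : ℝ × ℝ → ℝ :=
  if h : hasDx T u then h.choose else 0

/-! ### The parabolic cost functional -/

/-- The expression inside the supremum defining `I_ε`. -/
def IexprW (f D σ : ℝ → ℝ) (T ε : ℝ) (u w : ℝ × ℝ → ℝ) (φ : TTest T) : ℝ :=
  - pair T u (ptF φ.toFun) - pair T (fun p => f (u p)) (pxF φ.toFun)
    + ε / 2 * pair T (fun p => D (u p) * w p) (pxF φ.toFun)
    - 1 / 2 * pair T (fun p => σ (u p) * pxF φ.toFun p) (pxF φ.toFun)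

/-- The cost functional `I_ε : 𝒰 → [0,+∞]`. -/
def Ieps (f D σ : ℝ → ℝ) (T ε : ℝ) (u : cU T) : ℝ≥0∞ :=
  if hasDx T u.toFun then
    ⨆ φ : TTest T, ENNReal.ofReal (IexprW f D σ T ε u.toFun (wDx T u.toFun) φ)
  else ⊤

/-- The rescaled cost functional `H_ε := ε⁻¹ I_ε`. -/
def Heps (f D σ : ℝ → ℝ) (T ε : ℝ) (u : cU T) : ℝ≥0∞ :=
  ENNReal.ofReal ε⁻¹ * Ieps f D σ T ε u

/-! ### Young measures -/

/-- The space `𝓜` of Young measures. -/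
structure YM (T : ℝ) where
  m : ℝ × ℝ → Measure ℝ
  prob : ∀ p, IsProbabilityMeasure (m p)
  supp01 : ∀ p, m p (Icc (0:ℝ) 1)ᶜ = 0
  meas : ∀ F : ℝ → ℝ, Continuous F → Measurable fun p => ∫ l, F l ∂ m p
  bar_mem : ∀ p, (∫ l, l ∂ m p) ∈ Icc (0:ℝ) 1
  bar_cont : ∀ t₀ ∈ Icc (0:ℝ) T, ∀ δ > 0, ∃ ζ > 0, ∀ t ∈ Icc (0:ℝ) T,
    |t - t₀| < ζ →
      dU (fun x => ∫ l, l ∂ m (t, x)) (fun x => ∫ l, l ∂ m (t₀, x)) < δ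

/-- The moment `μ(F)`. -/
def YM.mom {T : ℝ} (μ : YM T) (F : ℝ → ℝ) : ℝ × ℝ → ℝ := fun p => ∫ l, F l ∂ μ.m p

/-- The barycenter `μ(ι)` of a Young measure, as an element of `𝒰`. -/
def YM.bar {T : ℝ} (μ : YM T) : cU T :=
  ⟨fun p => ∫ l, l ∂ μ.m p, μ.meas (fun l => l) continuous_id', μ.bar_mem, μ.bar_cont⟩

/-- The metric `d_𝓜 = d_w + d_𝒰(μ(ι), ν(ι))`. -/
def dM (T : ℝ) (dw : YM T → YM T → ℝ) (μ ν : YM T) : ℝ :=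
  dw μ ν + dcU T μ.bar ν.bar

/-- `dw` is a distance generating the weak* topology on Young measures. -/
def GeneratesWeakStar (T : ℝ) (dw : YM T → YM T → ℝ) : Prop :=
  (∀ μ ν, dw μ ν = dw ν μ) ∧ (∀ μ ν, 0 ≤ dw μ ν) ∧
  ∀ (μ : ℕ → YM T) (ν : YM T),
    Tendsto (fun n => dw (μ n) ν) atTop (𝓝 0) ↔
      ∀ g : ℝ × (ℝ × ℝ) → ℝ, Continuous g → HasCompactSupport g →
        Tendsto
          (fun n => ∫ p in Icc (0:ℝ) T ×ˢ (univ : Set ℝ), ∫ l, g (l, p) ∂ (μ n).m p)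
          atTop
          (𝓝 (∫ p in Icc (0:ℝ) T ×ˢ (univ : Set ℝ), ∫ l, g (l, p) ∂ ν.m p))

/-- The lift `𝓘_ε` of `I_ε` to Young measures. -/
def calIeps (f D σ : ℝ → ℝ) (T ε : ℝ) (μ : YM T) : ℝ≥0∞ :=
  if h : ∃ u : cU T, ∀ p, μ.m p = Measure.dirac (u.toFun p) then
    Ieps f D σ T ε h.choose
  else ⊤

/-- The limiting functional `𝓘` on Young measures. -/
def calI (f σ : ℝ → ℝ) (T : ℝ) (μ : YM T) : ℝ≥0∞ :=
  ⨆ φ : TTest T, ENNReal.ofReal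
    (- pair T (μ.mom (fun l => l)) (ptF φ.toFun) - pair T (μ.mom f) (pxF φ.toFun)
      - 1 / 2 * pair T (fun p => μ.mom σ p * pxF φ.toFun p) (pxF φ.toFun))

/-! ### Γ-convergence via sequences -/

/-- Sequential compactness with respect to a distance function. -/
def SeqCompactIn {α : Type*} (d : α → α → ℝ) (K : Set α) : Prop :=
  ∀ x : ℕ → α, (∀ n, x n ∈ K) → ∃ y ∈ K, ∃ s : ℕ → ℕ, StrictMono s ∧
    Tendsto (fun n => d (x (s n)) y) atTop (𝓝 0)

/-- Equicoercivity of a family of functionals. -/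
def Equicoercive {α : Type*} (d : α → α → ℝ) (F : ℝ → α → ℝ≥0∞) : Prop :=
  ∀ M : ℝ, 0 < M → ∃ K : Set α, SeqCompactIn d K ∧
    ∀ ε ∈ Ioc (0:ℝ) 1, { x : α | F ε x ≤ ENNReal.ofReal M } ⊆ K

/-- The Γ-liminf inequality `Γ-liminf F_ε ≥ G`. -/
def GammaLiminfGE {α : Type*} (d : α → α → ℝ) (F : ℝ → α → ℝ≥0∞) (G : α → ℝ≥0∞) : Prop :=
  ∀ (x : α) (e : ℕ → ℝ) (xs : ℕ → α), (∀ n, 0 < e n) → Tendsto e atTop (𝓝 0) →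
    Tendsto (fun n => d (xs n) x) atTop (𝓝 0) →
    G x ≤ Filter.liminf (fun n => F (e n) (xs n)) atTop

/-- The Γ-limsup inequality `Γ-limsup F_ε ≤ G`. -/
def GammaLimsupLE {α : Type*} (d : α → α → ℝ) (F : ℝ → α → ℝ≥0∞) (G : α → ℝ≥0∞) : Prop :=
  ∀ (x : α) (e : ℕ → ℝ), (∀ n, 0 < e n) → Tendsto e atTop (𝓝 0) →
    ∃ xs : ℕ → α, Tendsto (fun n => d (xs n) x) atTop (𝓝 0) ∧
      Filter.limsup (fun n => F (e n) (xs n)) atTop ≤ G x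

/-- Γ-convergence of `F_ε` to `G`. -/
def GammaConvergesTo {α : Type*} (d : α → α → ℝ) (F : ℝ → α → ℝ≥0∞) (G : α → ℝ≥0∞) : Prop :=
  GammaLiminfGE d F G ∧ GammaLimsupLE d F G

/-! ### Entropies, entropy production, kinetic measures -/

/-- Weak solutions to `u_t + f(u)_x = 0`. -/
def IsWeakSolution (f : ℝ → ℝ) (T : ℝ) (u : ℝ × ℝ → ℝ) : Prop :=
  ∀ φ : TTest T, pair T u (ptF φ.toFun) + pair T (fun p => f (u p)) (pxF φ.toFun) = 0

/-- Derivative within `[0,1]`. -/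
def dIcc (g : ℝ → ℝ) : ℝ → ℝ := fun v => derivWithin g (Icc 0 1) v

/-- An entropy–entropy flux pair. -/
structure Entropy (f : ℝ → ℝ) where
  eta : ℝ → ℝ
  q : ℝ → ℝ
  smooth : ContDiffOn ℝ 2 eta (Icc 0 1)
  qcont : ContinuousOn q (Icc 0 1)
  flux : ∀ a ∈ Icc (0:ℝ) 1, ∀ b ∈ Icc (0:ℝ) 1,
    q b - q a = ∫ v in a..b, dIcc eta v * deriv f v

/-- The `η`-entropy production `℘_{η,u}(φ)`. -/
def entProd (f : ℝ → ℝ) (T : ℝ) (E : Entropy f) (u : ℝ × ℝ → ℝ) (φ : TTest T) : ℝ :=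
  - pair T (fun p => E.eta (u p)) (ptF φ.toFun) - pair T (fun p => E.q (u p)) (pxF φ.toFun)

/-- `‖℘_{η,u}‖_{TV,L}`. -/
def TVabs (f : ℝ → ℝ) (T : ℝ) (E : Entropy f) (L : ℝ) (u : ℝ × ℝ → ℝ) : ℝ≥0∞ :=
  ⨆ φ : { φ : TTest T // Function.support φ.toFun ⊆ Ioo (0:ℝ) T ×ˢ Ioo (-L) L ∧
          ∀ p, |φ.toFun p| ≤ 1 },
    ENNReal.ofReal (entProd f T E u φ.1)

/-- `‖℘⁺_{η,u}‖_{TV,L}`. -/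
def TVpos (f : ℝ → ℝ) (T : ℝ) (E : Entropy f) (L : ℝ) (u : ℝ × ℝ → ℝ) : ℝ≥0∞ :=
  ⨆ φ : { φ : TTest T // Function.support φ.toFun ⊆ Ioo (0:ℝ) T ×ˢ Ioo (-L) L ∧
          ∀ p, φ.toFun p ∈ Icc (0:ℝ) 1 },
    ENNReal.ofReal (entProd f T E u φ.1)

/-- Entropy-measure solutions: every entropy production extends to a Radon measure. -/
def EMsol (f : ℝ → ℝ) (T : ℝ) (u : cU T) : Prop :=
  IsWeakSolution f T u.toFun ∧ ∀ E : Entropy f, ∀ L > 0, TVabs f T E L u.toFun ≠ ⊤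

/-- `v`-derivative (within `[0,1]`) of a sampler. -/
def dv1 (θ : ℝ → ℝ × ℝ → ℝ) : ℝ → ℝ × ℝ → ℝ :=
  fun v p => derivWithin (fun w => θ w p) (Icc 0 1) v

/-- An entropy sampler together with a conjugated entropy flux sampler. -/
structure Sampler (f : ℝ → ℝ) (T : ℝ) where
  θ : ℝ → ℝ × ℝ → ℝ
  Q : ℝ → ℝ × ℝ → ℝ
  cpt : HasCompactSupport (Function.uncurry θ)
  supp : Function.support (Function.uncurry θ) ⊆
    Icc (0:ℝ) 1 ×ˢ (Ioo (0:ℝ) T ×ˢ (univ : Set ℝ))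
  smooth_p : ∀ v, ContDiff ℝ (⊤ : ℕ∞) (θ v)
  smooth_v : ∀ p, ContDiffOn ℝ 2 (fun v => θ v p) (Icc 0 1)
  cont0 : Continuous (Function.uncurry θ)
  cont1 : ContinuousOn (Function.uncurry (dv1 θ)) (Icc (0:ℝ) 1 ×ˢ (univ : Set (ℝ × ℝ)))
  cont2 : ContinuousOn (Function.uncurry (dv1 (dv1 θ))) (Icc (0:ℝ) 1 ×ˢ (univ : Set (ℝ × ℝ)))
  Qsmooth : ∀ v, ContDiff ℝ 1 (Q v)
  Qflux : ∀ (p : ℝ × ℝ), ∀ a ∈ Icc (0:ℝ) 1, ∀ b ∈ Icc (0:ℝ) 1,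
    Q b p - Q a p = ∫ v in a..b, dv1 θ v p * deriv f v

/-- The `ϑ`-sampled entropy production `P_{ϑ,u}`. -/
def Ptheta (f : ℝ → ℝ) (T : ℝ) (S : Sampler f T) (u : ℝ × ℝ → ℝ) : ℝ :=
  - ∫ p in Icc (0:ℝ) T ×ˢ (univ : Set ℝ),
      (fderiv ℝ (S.θ (u p)) p (1, 0) + fderiv ℝ (S.Q (u p)) p (0, 1))

/-- `(ρp, ρn)` is a decomposition of the kinetic measure `ϱ_u` of a weak solution `u`. -/
def IsKineticMeasure (f : ℝ → ℝ) (T : ℝ) (u : ℝ × ℝ → ℝ)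
    (ρp ρn : ℝ → Measure (ℝ × ℝ)) : Prop :=
  (∀ v, ρp v ((Ioo (0:ℝ) T ×ˢ (univ : Set ℝ))ᶜ) = 0 ∧
        ρn v ((Ioo (0:ℝ) T ×ˢ (univ : Set ℝ))ᶜ) = 0) ∧
  (∀ L > 0, ∃ C : ℝ≥0∞, C ≠ ⊤ ∧ ∀ v ∈ Icc (0:ℝ) 1,
      ρp v (Icc (0:ℝ) T ×ˢ Icc (-L) L) + ρn v (Icc (0:ℝ) T ×ˢ Icc (-L) L) ≤ C) ∧
  (∀ g : ℝ × ℝ → ℝ, Continuous g → HasCompactSupport g →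
      Measurable fun v => (∫ p, g p ∂ ρp v) - ∫ p, g p ∂ ρn v) ∧
  ∀ S : Sampler f T, Ptheta f T S u =
    ∫ v in Icc (0:ℝ) 1,
      ((∫ p, dv1 (dv1 S.θ) v p ∂ ρp v) - ∫ p, dv1 (dv1 S.θ) v p ∂ ρn v)

/-- The Γ-entropy cost functional `H`. -/
def Hfun (f D σ : ℝ → ℝ) (T : ℝ) (u : cU T) : ℝ≥0∞ :=
  if IsWeakSolution f T u.toFun then
    ⨅ ρ : { ρ : (ℝ → Measure (ℝ × ℝ)) × (ℝ → Measure (ℝ × ℝ)) //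
            IsKineticMeasure f T u.toFun ρ.1 ρ.2 },
      ∫⁻ v in Icc (0:ℝ) 1, ENNReal.ofReal (D v / σ v) * ρ.1.1 v univ
  else ⊤

/-- Entropic solutions. -/
def EntropicSol (f : ℝ → ℝ) (T : ℝ) (u : cU T) : Prop :=
  IsWeakSolution f T u.toFun ∧
  ∀ E : Entropy f, (∀ v ∈ Icc (0:ℝ) 1, 0 ≤ dIcc (dIcc E.eta) v) →
    ∀ φ : TTest T, (∀ p, 0 ≤ φ.toFun p) → entProd f T E u.toFun φ ≤ 0

/-- There is no interval in which `f` is affine. -/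
def NoAffinePiece (f : ℝ → ℝ) : Prop :=
  ∀ a b : ℝ, 0 ≤ a → a < b → b ≤ 1 →
    ¬ ∃ c d : ℝ, ∀ v ∈ Icc a b, f v = c * v + d

/-- Entropy-splittable solutions. -/
def Splittable (f : ℝ → ℝ) (T : ℝ) (u : cU T) : Prop :=
  EMsol f T u ∧
  ∃ Ep En : Set (ℝ × ℝ), IsClosed Ep ∧ IsClosed En ∧
    Ep ⊆ Icc (0:ℝ) T ×ˢ (univ : Set ℝ) ∧ En ⊆ Icc (0:ℝ) T ×ˢ (univ : Set ℝ) ∧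
    (∃ ρp ρn : ℝ → Measure (ℝ × ℝ), IsKineticMeasure f T u.toFun ρp ρn ∧
      ∀ᵐ v ∂(volume.restrict (Icc (0:ℝ) 1)), ρp v Epᶜ = 0 ∧ ρn v Enᶜ = 0) ∧
    ∀ L > 0, ∀ a b : ℝ, 0 ≤ a → a < b → b ≤ T →
      ∃ a' b' : ℝ, a ≤ a' ∧ a' < b' ∧ b' ≤ b ∧
        ∀ t ∈ Ioo a' b', ∀ x ∈ Icc (-L) L, (t, x) ∉ Ep ∩ En

/-- Nice solutions with respect to `σ`: the set `𝒮_σ`. -/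
def NiceSol (f D σ : ℝ → ℝ) (T : ℝ) (u : cU T) : Prop :=
  Splittable f T u ∧ Hfun f D σ T u ≠ ⊤ ∧
  ∀ L > 0, ∃ δ > 0,
    ∀ᵐ p ∂(volume.restrict (Icc (0:ℝ) T ×ˢ Icc (-L) L)), δ ≤ σ (u.toFun p)

/-- The relaxed functional `H̄`. -/
def Hbar (f D σ : ℝ → ℝ) (T : ℝ) (u : cU T) : ℝ≥0∞ :=
  ⨅ s : { s : ℕ → cU T // (∀ n, NiceSol f D σ T (s n)) ∧
          Tendsto (fun n => dX T (s n) u) atTop (𝓝 0) },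
    Filter.liminf (fun n => Hfun f D σ T (s.1 n)) atTop

/-- Continuity in time with values in `L¹_loc(ℝ)`. -/
def ContL1 (T : ℝ) (u : ℝ × ℝ → ℝ) : Prop :=
  ∀ t₀ ∈ Icc (0:ℝ) T, ∀ R > 0, ∀ δ > 0, ∃ ζ > 0, ∀ t ∈ Icc (0:ℝ) T,
    |t - t₀| < ζ → (∫ x in Icc (-R) R, |u (t, x) - u (t₀, x)|) < δ

/-! ### The relaxation `R_{f,σ}` and the Γ-limit `I` on `𝒰` -/

/-- The function `R_{f,σ}(w,c)`. -/
def Rfs (f σ : ℝ → ℝ) (w c : ℝ) : ℝ≥0∞ :=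
  ⨅ ν : { ν : Measure ℝ // IsProbabilityMeasure ν ∧ ν (Icc (0:ℝ) 1)ᶜ = 0 ∧ (∫ l, l ∂ν) = w },
    if (∫ l, σ l ∂ν.1) = 0 then (if (∫ l, f l ∂ν.1) = c then 0 else ⊤)
    else ENNReal.ofReal ((∫ l, f l ∂ν.1 - c) ^ 2 / ∫ l, σ l ∂ν.1)

/-- The Γ-limit `I` of `I_ε` on `𝒰`. -/
def Ilim (f σ : ℝ → ℝ) (T : ℝ) (u : cU T) : ℝ≥0∞ :=
  ⨅ Φ : { Φ : ℝ × ℝ → ℝ // L2loc T Φ ∧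
          ∀ φ : TTest T, - pair T Φ (pxF φ.toFun) = pair T u.toFun (ptF φ.toFun) },
    ∫⁻ p in Icc (0:ℝ) T ×ˢ (univ : Set ℝ), Rfs f σ (u.toFun p) (Φ.1 p)

/-! ### The classes `𝓜_g` and `𝓜₀` -/

/-- The class `𝓜_g`. -/
def Mg (f σ : ℝ → ℝ) (T : ℝ) (μ : YM T) : Prop :=
  calI f σ T μ ≠ ⊤ ∧
  ∃ r > 0, ∃ L > 0, ∃ ν : Measure ℝ, IsProbabilityMeasure ν ∧ ν (Icc (0:ℝ) 1)ᶜ = 0 ∧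
    (∀ p : ℝ × ℝ, p.1 ∈ Icc (0:ℝ) T → r ≤ μ.mom (fun l => l) p ∧ r ≤ μ.mom σ p) ∧
    ∀ p : ℝ × ℝ, p.1 ∈ Icc (0:ℝ) T → L < |p.2| → μ.m p = ν

/-- The class `𝓜₀` of Dirac masses of smooth functions in `𝓜_g`. -/
def M0 (f σ : ℝ → ℝ) (T : ℝ) (μ : YM T) : Prop :=
  Mg f σ T μ ∧ ∃ u : ℝ × ℝ → ℝ, ContDiff ℝ 1 u ∧ (∀ p, u p ∈ Icc (0:ℝ) 1) ∧
    ∀ p, μ.m p = Measure.dirac (u p)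

/-! ### The spaces `𝓓¹_a` and the Riesz representation of the cost -/

/-- `P` represents (the gradient of) an element of the Hilbert space `𝓓¹_a`. -/
def InD1 (T : ℝ) (a P : ℝ × ℝ → ℝ) : Prop :=
  Measurable P ∧ IntegrableOn (fun p => a p * P p ^ 2) (Icc (0:ℝ) T ×ˢ (univ : Set ℝ)) ∧
  ∀ δ > 0, ∃ φ : TTestC,
    (∫ p in Icc (0:ℝ) T ×ˢ (univ : Set ℝ), a p * (P p - pxF φ.toFun p) ^ 2) < δ

/-- The extended linear functional `ℓ^u_ε(φ)` with boundary terms. -/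
def ellC (f D : ℝ → ℝ) (T ε : ℝ) (u w : ℝ × ℝ → ℝ) (φ : TTestC) : ℝ :=
  (∫ x, u (T, x) * φ.toFun (T, x)) - (∫ x, u (0, x) * φ.toFun (0, x))
    - pair T u (ptF φ.toFun) - pair T (fun p => f (u p)) (pxF φ.toFun)
    + ε / 2 * pair T (fun p => D (u p) * w p) (pxF φ.toFun)

/-- `u` is a weak solution to `u_t + f(u)_x = (ε/2)(D(u)u_x)_x - (σ(u)Ψ_x)_x` with `Ψ_x = P`. -/
def rieszEq (f D σ : ℝ → ℝ) (T ε : ℝ) (u w P : ℝ × ℝ → ℝ) : Prop :=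
  ∀ φ : TTestC,
    (∫ x, u (T, x) * φ.toFun (T, x)) - (∫ x, u (0, x) * φ.toFun (0, x))
      - (pair T u (ptF φ.toFun)
        + pair T (fun p => f (u p) - ε / 2 * (D (u p) * w p) + σ (u p) * P p)
            (pxF φ.toFun)) = 0

/-- `μ(ι)_t + μ(f)_x = -(μ(σ) P)_x` weakly. -/
def calIEq (f σ : ℝ → ℝ) (T : ℝ) (μ : YM T) (P : ℝ × ℝ → ℝ) : Prop :=
  ∀ φ : TTest T,
    - pair T (μ.mom (fun l => l)) (ptF φ.toFun) - pair T (μ.mom f) (pxF φ.toFun)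
      = pair T (fun p => μ.mom σ p * P p) (pxF φ.toFun)

/-! ### The cost functional on `L¹_loc` -/

/-- Locally integrable on `[0,T] × ℝ`. -/
def L1loc (T : ℝ) (u : ℝ × ℝ → ℝ) : Prop :=
  Measurable u ∧ ∀ R > 0, IntegrableOn u (Icc (0:ℝ) T ×ˢ Icc (-R) R)

/-- The cost functional `Î_ε` on `L¹_loc([0,T] × ℝ)`. -/
def Ihat (f D σ : ℝ → ℝ) (T ε : ℝ) (u : ℝ × ℝ → ℝ) : ℝ≥0∞ :=
  if L2loc T (fun p => f (u p)) ∧ hasDx T u then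
    ⨆ φ : TTest T, ENNReal.ofReal (IexprW f D σ T ε u (wDx T u) φ)
  else ⊤

/-! ### Hamilton–Jacobi equations -/

/-- The space `𝓑` (representatives of equivalence classes modulo additive constants). -/
structure HJ (T : ℝ) where
  b : ℝ × ℝ → ℝ
  meas : Measurable b
  sq : ∀ t ∈ Icc (0:ℝ) T, ∀ R > 0, IntegrableOn (fun x => b (t, x) ^ 2) (Icc (-R) R)
  contL2 : ∀ t₀ ∈ Icc (0:ℝ) T, ∀ R > 0, ∀ δ > 0, ∃ ζ > 0, ∀ t ∈ Icc (0:ℝ) T,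
    |t - t₀| < ζ → (∫ x in Icc (-R) R, (b (t, x) - b (t₀, x)) ^ 2) < δ
  ux : cU T
  hux : ∀ φ : TTest T, pair T b (pxF φ.toFun) = - pair T ux.toFun φ.toFun

/-- The part of the distance on `𝓑` involving the infimum over additive constants. -/
def dConst (T : ℝ) (b1 b2 : HJ T) : ℝ :=
  sInf { r : ℝ | ∃ c : ℝ, r = sSup { s : ℝ | ∃ t ∈ Icc (0:ℝ) T,
    s = ∑' n : ℕ, (2 : ℝ)⁻¹ ^ (n + 1) *
      Real.sqrt (∫ x in Icc (-((n : ℝ) + 1)) ((n : ℝ) + 1),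
        (b1.b (t, x) - b2.b (t, x) + c) ^ 2) } }

/-- The metric `d_𝓑`. -/
def dB (T : ℝ) (b1 b2 : HJ T) : ℝ := dcU T b1.ux b2.ux + dConst T b1 b2

/-- The metric `d_𝒴`. -/
def dY (T : ℝ) (b1 b2 : HJ T) : ℝ := dX T b1.ux b2.ux + dConst T b1 b2

/-- The expression inside the supremum defining `J_ε`. -/
def JexprW (f D σ : ℝ → ℝ) (T ε : ℝ) (bb uxf w2 : ℝ × ℝ → ℝ) (φ : TTest T) : ℝ :=
  - pair T bb (ptF φ.toFun) + pair T (fun p => f (uxf p)) φ.toFun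
    - ε / 2 * pair T (fun p => D (uxf p) * w2 p) φ.toFun
    - 1 / 2 * pair T (fun p => σ (uxf p) * φ.toFun p) φ.toFun

/-- The cost functional `J_ε` on `𝓑`. -/
def Jeps (f D σ : ℝ → ℝ) (T ε : ℝ) (b : HJ T) : ℝ≥0∞ :=
  if hasDx T b.ux.toFun then
    ⨆ φ : TTest T, ENNReal.ofReal (JexprW f D σ T ε b.b b.ux.toFun (wDx T b.ux.toFun) φ)
  else ⊤

/-- The rescaled cost functional `K_ε := ε⁻¹ J_ε`. -/
def Keps (f D σ : ℝ → ℝ) (T ε : ℝ) (b : HJ T) : ℝ≥0∞ :=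
  ENNReal.ofReal ε⁻¹ * Jeps f D σ T ε b

/-- Weak solutions to `b_t + f(b_x) = 0`. -/
def HJWeakSol (f : ℝ → ℝ) (T : ℝ) (b : HJ T) : Prop :=
  ∀ φ : TTest T, - pair T b.b (ptF φ.toFun) + pair T (fun p => f (b.ux.toFun p)) φ.toFun = 0

/-- The compatibility condition `b_x = μ(ι)` defining `𝓐`. -/
def APred (T : ℝ) (bm : HJ T × YM T) : Prop :=
  ∀ᵐ p ∂(volume.restrict (Icc (0:ℝ) T ×ˢ (univ : Set ℝ))),
    bm.1.ux.toFun p = bm.2.mom (fun l => l) p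

/-- The metric `d_𝓐`. -/
def dA (T : ℝ) (dw : YM T → YM T → ℝ)
    (x y : { bm : HJ T × YM T // APred T bm }) : ℝ :=
  dB T x.1.1 y.1.1 + dM T dw x.1.2 y.1.2

/-- The lift `𝓙_ε` of `J_ε` to `𝓐`. -/
def calJeps (f D σ : ℝ → ℝ) (T ε : ℝ) (x : { bm : HJ T × YM T // APred T bm }) : ℝ≥0∞ :=
  if ∀ p, x.1.2.m p = Measure.dirac (x.1.1.ux.toFun p) then Jeps f D σ T ε x.1.1 else ⊤

/-- The limiting functional `𝓙` on `𝓐`. -/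
def calJ (f σ : ℝ → ℝ) (T : ℝ) (x : { bm : HJ T × YM T // APred T bm }) : ℝ≥0∞ :=
  ⨆ φ : TTest T, ENNReal.ofReal
    (- pair T x.1.1.b (ptF φ.toFun) + pair T (x.1.2.mom f) φ.toFun
      - 1 / 2 * pair T (fun p => x.1.2.mom σ p * φ.toFun p) φ.toFun)

/-! ### Jump sets and BV solutions -/

/-- The function `ρ(v, u⁺, u⁻)` of Remark 2.3. -/
def rhoJ (f : ℝ → ℝ) (v a b : ℝ) : ℝ :=
  if v ∈ Icc (min a b) (max a b) then
    f b * (a - v) + f a * (v - b) - f v * (a - b)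
  else 0

/-! ### Mollification in the plane -/

/-- Jensen's inequality for the square and a probability density `ρ`. -/
lemma sq_integral_le {α : Type*} [MeasurableSpace α] {μ : Measure α} {ρ h : α → ℝ}
    (h0 : ∀ x, 0 ≤ ρ x) (hi : Integrable ρ μ) (h1 : ∫ x, ρ x ∂μ = 1)
    (hm : AEStronglyMeasurable h μ) (hh : Integrable (fun x => ρ x * h x ^ 2) μ) :
    Integrable (fun x => ρ x * h x) μ ∧ (∫ x, ρ x * h x ∂μ) ^ 2 ≤ ∫ x, ρ x * h x ^ 2 ∂μ := by
  have hInt : Integrable (fun x => ρ x * h x) μ := by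
    refine Integrable.mono' (hi.add hh) (hi.aestronglyMeasurable.mul hm) (ae_of_all _ fun x => ?_)
    rw [Real.norm_eq_abs, abs_mul, abs_of_nonneg (h0 x)]
    have : |h x| ≤ 1 + h x ^ 2 := by
      nlinarith [sq_nonneg (|h x| - 1), sq_abs (h x), abs_nonneg (h x)]
    have := mul_le_mul_of_nonneg_left this (h0 x)
    simp only [Pi.add_apply]; linarith
  refine ⟨hInt, ?_⟩
  set m := ∫ x, ρ x * h x ∂μ with hmdef
  have key : 0 ≤ ∫ x, (ρ x * h x ^ 2 - 2 * m * (ρ x * h x) + m ^ 2 * ρ x) ∂μ := by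
    apply integral_nonneg
    intro x
    have : ρ x * h x ^ 2 - 2 * m * (ρ x * h x) + m ^ 2 * ρ x = ρ x * (h x - m) ^ 2 := by ring
    simp only [Pi.zero_apply]
    rw [this]; exact mul_nonneg (h0 x) (sq_nonneg _)
  have i1 : Integrable (fun x => ρ x * h x ^ 2 - 2 * m * (ρ x * h x)) μ :=
    hh.sub (hInt.const_mul _)
  rw [integral_add i1 (hi.const_mul _), integral_sub hh (hInt.const_mul _), integral_const_mul, integral_const_mul, h1, ← hmdef] at key
  nlinarith

/-- Bump functions at the origin of the plane with supports shrinking to `0`. -/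
def bmp (n : ℕ) : ContDiffBump (0 : ℝ × ℝ) where
  rIn := 1 / (2 * ((n : ℝ) + 1))
  rOut := 1 / ((n : ℝ) + 1)
  rIn_pos := by positivity
  rIn_lt_rOut := by
    apply one_div_lt_one_div_of_lt <;> [positivity; linarith [(Nat.cast_nonneg n : (0:ℝ) ≤ n)]]

/-- The standard mollifier at scale `1 / (n + 1)`. -/
def rho (n : ℕ) : ℝ × ℝ → ℝ := (bmp n).normed volume

/-- The mollification of `g` at scale `1 / (n + 1)`. -/
def moll (n : ℕ) (g : ℝ × ℝ → ℝ) (p : ℝ × ℝ) : ℝ := ∫ z, g z * rho n (p - z)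

lemma rho_nonneg (n : ℕ) (p) : 0 ≤ rho n p := (bmp n).nonneg_normed p
lemma rho_contDiff (n : ℕ) : ContDiff ℝ (⊤ : ℕ∞) (rho n) := (bmp n).contDiff_normed
lemma rho_cont (n : ℕ) : Continuous (rho n) := (bmp n).continuous_normed
lemma rho_cpt (n : ℕ) : HasCompactSupport (rho n) := (bmp n).hasCompactSupport_normed
lemma rho_int (n : ℕ) : ∫ z, rho n z = 1 := (bmp n).integral_normed
lemma rho_integrable (n : ℕ) : Integrable (rho n) := (bmp n).integrable_normed
lemma rho_supp (n : ℕ) : Function.support (rho n) = Metric.ball 0 (1 / ((n : ℝ) + 1)) :=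
  (bmp n).support_normed_eq

lemma moll_eq_conv (n : ℕ) (g : ℝ × ℝ → ℝ) :
    moll n g = convolution g (rho n) (ContinuousLinearMap.lsmul ℝ ℝ) volume := rfl

lemma moll_eq (n : ℕ) (g : ℝ × ℝ → ℝ) (p) : moll n g p = ∫ z, rho n z * g (p - z) := by
  rw [moll, ← integral_sub_left_eq_self (fun z => rho n z * g (p - z)) volume p]
  simp [mul_comm]

lemma moll_contDiff (n : ℕ) {g : ℝ × ℝ → ℝ} (hg : LocallyIntegrable g) :
    ContDiff ℝ (⊤ : ℕ∞) (moll n g) := by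
  rw [moll_eq_conv]
  exact (rho_cpt n).contDiff_convolution_right _ hg (rho_contDiff n)

lemma moll_fderiv (n : ℕ) {g : ℝ × ℝ → ℝ} (hg : LocallyIntegrable g) (p v : ℝ × ℝ) :
    fderiv ℝ (moll n g) p v = ∫ z, g z * fderiv ℝ (rho n) (p - z) v := by
  rw [moll_eq_conv]
  have h1 : ContDiff ℝ 1 (rho n) := (rho_contDiff n).of_le (by exact_mod_cast le_top)
  rw [((rho_cpt n).hasFDerivAt_convolution_right (ContinuousLinearMap.lsmul ℝ ℝ) hg h1 p).fderiv,
    convolution_precompR_apply _ hg ((rho_cpt n).fderiv ℝ) (h1.continuous_fderiv one_ne_zero)]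
  rfl

lemma moll_mem (n : ℕ) {g : ℝ × ℝ → ℝ} (h : ∀ p, g p ∈ Icc (0:ℝ) 1) (p) :
    moll n g p ∈ Icc (0:ℝ) 1 := by
  rw [moll_eq]
  refine ⟨integral_nonneg fun z => mul_nonneg (rho_nonneg n z) (h _).1, ?_⟩
  rw [← rho_int n]
  refine integral_mono_of_nonneg (ae_of_all _ fun z => mul_nonneg (rho_nonneg n z) (h _).1)
    (rho_integrable n) (ae_of_all _ fun z => ?_)
  exact mul_le_of_le_one_right (rho_nonneg n z) (h _).2

/-- Translations are continuous in `L²`. -/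
lemma translation_tendsto {g : ℝ × ℝ → ℝ} (hg : MemLp g 2 volume) :
    Tendsto (fun z : ℝ × ℝ => eLpNorm (fun p => g (p - z) - g p) 2 volume) (𝓝 0) (𝓝 0) := by
  let G : C((ℝ × ℝ), C((ℝ × ℝ), (ℝ × ℝ))) :=
    (ContinuousMap.mk (fun a : (ℝ × ℝ) × (ℝ × ℝ) => a.2 - a.1) (by fun_prop)).curry
  have hG : ∀ z, MeasurePreserving (G z) (volume : Measure (ℝ × ℝ)) volume :=
    fun z => measurePreserving_sub_right volume z
  have := Tendsto.compMeasurePreservingLp (E := ℝ) (p := 2) (l := 𝓝 (0 : ℝ × ℝ))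
    (f := fun _ => hg.toLp g) (f₀ := hg.toLp g) (g := fun z => G z) (g₀ := G 0)
    tendsto_const_nhds (G.continuous.tendsto 0) hG (hG 0) (by simp)
  rw [tendsto_iff_edist_tendsto_0] at this
  refine this.congr fun z => ?_
  rw [Lp.edist_def]
  apply eLpNorm_congr_ae
  have a1 := Lp.coeFn_compMeasurePreserving (hg.toLp g) (hG z)
  have a2 := Lp.coeFn_compMeasurePreserving (hg.toLp g) (hG 0)
  have b1 := (hG z).quasiMeasurePreserving.ae_eq_comp hg.coeFn_toLp
  have b2 := (hG 0).quasiMeasurePreserving.ae_eq_comp hg.coeFn_toLp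
  filter_upwards [a1, a2, b1, b2] with p h1 h2 h3 h4
  simp only [Pi.sub_apply]
  rw [h1, h2, h3, h4]
  simp [G]

lemma eLpNorm_two_sq {α : Type*} [MeasurableSpace α] {μ : Measure α} (g : α → ℝ) :
    eLpNorm g 2 μ ^ 2 = ∫⁻ x, ENNReal.ofReal (g x ^ 2) ∂μ := by
  have := eLpNorm_nnreal_pow_eq_lintegral (f := g) (μ := μ) (p := 2) (by norm_num)
  simp only [NNReal.coe_ofNat, ENNReal.coe_ofNat, ENNReal.rpow_ofNat] at this
  rw [this]
  congr 1; ext x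
  rw [← ofReal_norm, ← ENNReal.ofReal_pow (norm_nonneg _), Real.norm_eq_abs, sq_abs]

/-- Mollifications converge in `L²`. -/
lemma moll_tendsto {g : ℝ × ℝ → ℝ} (hm : Measurable g) (hg : Integrable (fun p => g p ^ 2)) :
    Tendsto (fun n => ∫⁻ p, ENNReal.ofReal ((moll n g p - g p) ^ 2)) atTop (𝓝 0) := by
  have hL : MemLp g 2 volume := (memLp_two_iff_integrable_sq hm.aestronglyMeasurable).2 hg
  have hT := translation_tendsto hL
  rw [ENNReal.tendsto_atTop_zero]
  intro η hη
  have h2 : Tendsto (fun z : ℝ × ℝ => ∫⁻ p, ENNReal.ofReal ((g (p - z) - g p) ^ 2)) (𝓝 0) (𝓝 0) := by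
    have := (ENNReal.continuous_pow 2).tendsto 0 |>.comp hT
    simp only [ne_eq, OfNat.ofNat_ne_zero, not_false_eq_true, zero_pow] at this
    refine this.congr fun z => ?_
    simp only [Function.comp]
    rw [eLpNorm_two_sq]
  have h3 := (ENNReal.tendsto_nhds_zero.1 h2) η hη
  obtain ⟨r, hr, hb⟩ := Metric.eventually_nhds_iff_ball.1 h3
  obtain ⟨N, hN⟩ := exists_nat_one_div_lt hr
  refine ⟨N, fun n hn => ?_⟩
  have hsm : (1 : ℝ) / (n + 1) < r :=
    lt_of_le_of_lt (one_div_le_one_div_of_le (by positivity) (by gcongr)) hN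
  have hsqi : ∀ p : ℝ × ℝ, Integrable (fun z => rho n z * (g (p - z) - g p) ^ 2) := by
    intro p
    obtain ⟨C, hC⟩ := (rho_cont n).bounded_above_of_compact_support (rho_cpt n)
    have i1 : Integrable (fun z => g (p - z) ^ 2) := hg.comp_sub_left p
    refine Integrable.mono' (((i1.const_mul (2 * C))).add
      ((rho_integrable n).const_mul (2 * g p ^ 2))) ?_ (ae_of_all _ fun z => ?_)
    · exact ((rho_cont n).measurable.mul
        (((hm.comp (measurable_const.sub measurable_id)).sub measurable_const).pow_const 2)).aestronglyMeasurable
    · have hc := hC z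
      rw [Real.norm_eq_abs, abs_of_nonneg (rho_nonneg n z)] at hc
      rw [Real.norm_eq_abs, abs_of_nonneg (mul_nonneg (rho_nonneg n z) (sq_nonneg _))]
      simp only [Pi.add_apply]
      have e : (g (p - z) - g p) ^ 2 ≤ 2 * g (p - z) ^ 2 + 2 * g p ^ 2 := by
        nlinarith [sq_nonneg (g (p - z) + g p)]
      calc _ ≤ rho n z * (2 * g (p - z) ^ 2 + 2 * g p ^ 2) :=
            mul_le_mul_of_nonneg_left e (rho_nonneg n z)
        _ ≤ _ := by nlinarith [mul_le_mul_of_nonneg_right hc (sq_nonneg (g (p - z)))]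
  have hpt : ∀ p, ENNReal.ofReal ((moll n g p - g p) ^ 2) ≤
      ∫⁻ z, ENNReal.ofReal (rho n z) * ENNReal.ofReal ((g (p - z) - g p) ^ 2) := by
    intro p
    have hmz : Measurable fun z : ℝ × ℝ => g (p - z) - g p :=
      (hm.comp (measurable_const.sub measurable_id)).sub measurable_const
    obtain ⟨hi, hj⟩ := sq_integral_le (rho_nonneg n) (rho_integrable n) (rho_int n)
      hmz.aestronglyMeasurable (hsqi p)
    have e1 : moll n g p - g p = ∫ z, rho n z * (g (p - z) - g p) := by
      rw [moll_eq]
      have : (fun z => rho n z * g (p - z)) =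
          fun z => rho n z * (g (p - z) - g p) + rho n z * g p := by ext z; ring
      rw [this, integral_add hi ((rho_integrable n).mul_const _), integral_mul_const, rho_int]
      ring
    rw [e1]
    refine (ENNReal.ofReal_le_ofReal hj).trans ?_
    rw [ofReal_integral_eq_lintegral_ofReal (hsqi p)
      (ae_of_all _ fun z => mul_nonneg (rho_nonneg n z) (sq_nonneg _))]
    apply le_of_eq
    congr 1; ext z
    rw [ENNReal.ofReal_mul (rho_nonneg n z)]
  calc ∫⁻ p, ENNReal.ofReal ((moll n g p - g p) ^ 2)
      ≤ ∫⁻ p, ∫⁻ z, ENNReal.ofReal (rho n z) * ENNReal.ofReal ((g (p - z) - g p) ^ 2) :=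
        lintegral_mono hpt
    _ = ∫⁻ z, ∫⁻ p, ENNReal.ofReal (rho n z) * ENNReal.ofReal ((g (p - z) - g p) ^ 2) := by
        apply lintegral_lintegral_swap
        apply Measurable.aemeasurable
        have a1 := (rho_cont n).measurable
        exact Measurable.mul (f := fun q : (ℝ × ℝ) × (ℝ × ℝ) => ENNReal.ofReal (rho n q.2))
          (a1.comp measurable_snd).ennreal_ofReal
          (((hm.comp (measurable_fst.sub measurable_snd)).sub
            (hm.comp measurable_fst)).pow_const 2).ennreal_ofReal
    _ ≤ ∫⁻ z, ENNReal.ofReal (rho n z) * η := by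
        apply lintegral_mono
        intro z
        simp only
        rw [lintegral_const_mul']
        · by_cases hz : z ∈ Metric.ball (0 : ℝ × ℝ) r
          · gcongr
            exact hb z hz
          · have : rho n z = 0 := by
              by_contra h
              have : z ∈ Function.support (rho n) := h
              rw [rho_supp] at this
              exact hz (Metric.ball_subset_ball hsm.le this)
            simp [this]
        · exact ENNReal.ofReal_ne_top
    _ = η := by
        rw [lintegral_mul_const _ (rho_cont n).measurable.ennreal_ofReal,
          ← ofReal_integral_eq_lintegral_ofReal (rho_integrable n)
            (ae_of_all _ (rho_nonneg n)), rho_int]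
        simp

/-! ### Smooth approximation of weak solutions -/

/-- `u` takes values in `[0,1]`, has weak `x`-derivative `w`, and solves `u_t + Φ_x = 0` weakly
on `(0,T) × ℝ`, with `w` and `Φ` locally square integrable. -/
structure Sol (T : ℝ) (u w Φ : ℝ × ℝ → ℝ) : Prop where
  um : Measurable u
  u01 : ∀ p, u p ∈ Icc (0:ℝ) 1
  w2 : L2loc T w
  Φ2 : L2loc T Φ
  dx : HasWeakDx T u w
  eq : ∀ φ : TTest T, pair T u (ptF φ.toFun) + pair T Φ (pxF φ.toFun) = 0

/-- Smooth approximations `U n`, `Ph n` of `u`, `Φ` on the rectangle `[a,b] × [-R,R]`, solving the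
equation there exactly. The convergence is almost everywhere, and the squares of
`∂ₓ U n` and `Ph n` are dominated by the integrable function `G`. -/
structure Approx (a b R : ℝ) (u w Φ : ℝ × ℝ → ℝ) (U Ph : ℕ → ℝ × ℝ → ℝ) (G : ℝ × ℝ → ℝ) :
    Prop where
  Us : ∀ n, ContDiff ℝ (⊤ : ℕ∞) (U n)
  Ps : ∀ n, ContDiff ℝ (⊤ : ℕ∞) (Ph n)
  U01 : ∀ n p, U n p ∈ Icc (0:ℝ) 1
  eq : ∀ n, ∀ p ∈ Icc a b ×ˢ Icc (-R) R, ptF (U n) p + pxF (Ph n) p = 0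
  Gi : IntegrableOn G (Icc a b ×ˢ Icc (-R) R)
  conv : ∀ᵐ p ∂(volume.restrict (Icc a b ×ˢ Icc (-R) R)),
    Tendsto (fun n => U n p) atTop (𝓝 (u p)) ∧
    Tendsto (fun n => pxF (U n) p) atTop (𝓝 (w p)) ∧
    Tendsto (fun n => Ph n p) atTop (𝓝 (Φ p)) ∧
    ∀ n, pxF (U n) p ^ 2 ≤ G p ∧ Ph n p ^ 2 ≤ G p

/-- A sequence tending to zero in `L¹` has a subsequence that tends to zero almost everywhere and
is dominated by an integrable function. -/
lemma exists_subseq_dom {α : Type*} [MeasurableSpace α] {μ : Measure α} (e : ℕ → α → ℝ≥0∞)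
    (he : ∀ n, Measurable (e n)) (h : Tendsto (fun n => ∫⁻ x, e n x ∂μ) atTop (𝓝 0)) (n0 : ℕ) :
    ∃ s : ℕ → ℕ, (∀ k, n0 ≤ s k) ∧ ∃ H : α → ℝ, Integrable H μ ∧ (∀ x, 0 ≤ H x) ∧
      ∀ᵐ x ∂μ, (∀ k, e (s k) x ≤ ENNReal.ofReal (H x)) ∧
        Tendsto (fun k => e (s k) x) atTop (𝓝 0) := by
  have h1 : ∀ k : ℕ, ∃ m, n0 ≤ m ∧ ∫⁻ x, e m x ∂μ ≤ (2:ℝ≥0∞)⁻¹ ^ k := by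
    intro k
    have := (ENNReal.tendsto_nhds_zero.1 h) ((2:ℝ≥0∞)⁻¹ ^ k)
      (ENNReal.pow_pos (by simp) k)
    obtain ⟨m, hm⟩ := (this.and (eventually_ge_atTop n0)).exists
    exact ⟨m, hm.2, hm.1⟩
  choose s hs0 hs using h1
  have hmeas : Measurable fun x => ∑' k, e (s k) x := Measurable.tsum fun k => he _
  have hfin : ∫⁻ x, ∑' k, e (s k) x ∂μ ≠ ⊤ := by
    rw [lintegral_tsum fun k => (he _).aemeasurable]
    refine ne_top_of_le_ne_top ?_ (ENNReal.tsum_le_tsum hs)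
    rw [ENNReal.tsum_geometric]
    simp
  refine ⟨s, hs0, fun x => (∑' k, e (s k) x).toReal,
    integrable_toReal_of_lintegral_ne_top hmeas.aemeasurable hfin,
    fun x => ENNReal.toReal_nonneg, ?_⟩
  filter_upwards [ae_lt_top hmeas hfin] with x hx
  refine ⟨fun k => ?_, ENNReal.tendsto_atTop_zero_of_tsum_ne_top hx.ne⟩
  rw [ENNReal.ofReal_toReal hx.ne]
  exact ENNReal.le_tsum k

lemma tendsto_of_sq_tendsto {x : ℕ → ℝ} {y : ℝ}
    (h : Tendsto (fun n => ENNReal.ofReal ((x n - y) ^ 2)) atTop (𝓝 0)) :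
    Tendsto x atTop (𝓝 y) := by
  have h1 : Tendsto (fun n => (x n - y) ^ 2) atTop (𝓝 0) := by
    have := (ENNReal.tendsto_toReal ENNReal.zero_ne_top).comp h
    simp only [ENNReal.toReal_zero] at this
    refine this.congr fun n => ?_
    simp [ENNReal.toReal_ofReal, sq_nonneg]
  have h2 := (Real.continuous_sqrt.tendsto 0).comp h1
  rw [Real.sqrt_zero] at h2
  rw [tendsto_iff_dist_tendsto_zero]
  refine h2.congr fun n => ?_
  simp [Real.sqrt_sq_eq_abs, Real.dist_eq]

/-- The mollifier, centred at `p` and reflected, as a test function. -/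
def rhoTest (T : ℝ) (n : ℕ) (p : ℝ × ℝ) (h : 1 / ((n:ℝ) + 1) < p.1 ∧ p.1 + 1 / ((n:ℝ) + 1) < T) :
    TTest T where
  toFun z := rho n (p - z)
  smooth := (rho_contDiff n).comp (contDiff_const.sub contDiff_id)
  cpt := (rho_cpt n).comp_homeomorph (Homeomorph.subLeft p)
  supp := by
    intro z hz
    have : p - z ∈ Function.support (rho n) := hz
    rw [rho_supp, Metric.mem_ball, dist_zero_right, Prod.norm_def, max_lt_iff] at this
    have h1 := abs_lt.1 this.1
    simp only [Prod.fst_sub] at h1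
    exact ⟨⟨by linarith [h.2], by linarith [h.1]⟩, mem_univ _⟩

lemma rhoTest_fderiv (T : ℝ) (n : ℕ) (p : ℝ × ℝ) (h) (z v : ℝ × ℝ) :
    fderiv ℝ (rhoTest T n p h).toFun z v = - fderiv ℝ (rho n) (p - z) v := by
  have h1 : HasFDerivAt (rho n) (fderiv ℝ (rho n) (p - z)) (p - z) :=
    ((rho_contDiff n).differentiable (by simp) _).hasFDerivAt
  have h2 : HasFDerivAt (fun z : ℝ × ℝ => p - z) (-(ContinuousLinearMap.id ℝ (ℝ × ℝ))) z :=
    (hasFDerivAt_id z).const_sub p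
  have := (h1.comp z h2).fderiv
  change fderiv ℝ (rho n ∘ fun z => p - z) z v = _
  rw [this]; simp

/-- The set on which functions are cut off before being mollified. -/
def cutSet (T R : ℝ) : Set (ℝ × ℝ) := Icc 0 T ×ˢ Icc (-(R + 1)) (R + 1)

lemma cutSet_meas (T R : ℝ) : MeasurableSet (cutSet T R) :=
  measurableSet_Icc.prod measurableSet_Icc

/-- The cut-off is invisible to a kernel supported in a small ball around an interior point. -/
lemma cut_int {T R : ℝ} {g k : ℝ × ℝ → ℝ} {p : ℝ × ℝ} {d : ℝ} (hd1 : d ≤ 1)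
    (hp : d ≤ p.1 ∧ p.1 + d ≤ T) (hx : |p.2| ≤ R)
    (hk : ∀ z, d < ‖p - z‖ → k z = 0) :
    ∫ z, (cutSet T R).indicator g z * k z = ∫ z in Icc (0:ℝ) T ×ˢ (univ : Set ℝ), g z * k z := by
  rw [← integral_indicator (measurableSet_Icc.prod MeasurableSet.univ)]
  congr 1; ext z
  by_cases hz : d < ‖p - z‖
  · simp [indicator, hk z hz]
  · push Not at hz
    rw [Prod.norm_def, max_le_iff] at hz
    have h1 := abs_le.1 hz.1
    have h2 := abs_le.1 hz.2
    have h3 := abs_le.1 hx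
    simp only [Prod.fst_sub, Prod.snd_sub] at h1 h2
    have m1 : z ∈ cutSet T R := ⟨⟨by linarith, by linarith⟩, ⟨by linarith, by linarith⟩⟩
    have m2 : z ∈ Icc (0:ℝ) T ×ˢ (univ : Set ℝ) := ⟨m1.1, mem_univ _⟩
    rw [indicator_of_mem m1, indicator_of_mem m2]

lemma cut_sq_integrable {T R : ℝ} (hR : 0 < R) {g : ℝ × ℝ → ℝ} (hg : L2loc T g) :
    Integrable (fun p => (cutSet T R).indicator g p ^ 2) := by
  have := hg.2 (R + 1) (by linarith)
  have h2 := (integrable_indicator_iff (cutSet_meas T R)).2 this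
  refine h2.congr (ae_of_all _ fun p => ?_)
  by_cases hp : p ∈ cutSet T R <;> simp [hp]

lemma cutSet_lt_top (T R : ℝ) : volume (cutSet T R) < ⊤ :=
  (isCompact_Icc.prod isCompact_Icc).measure_lt_top

lemma cut_integrable {T R : ℝ} (hR : 0 < R) {g : ℝ × ℝ → ℝ} (hg : L2loc T g) :
    Integrable ((cutSet T R).indicator g) := by
  refine (integrable_indicator_iff (cutSet_meas T R)).2 ?_
  have h2 := hg.2 (R + 1) (by linarith)
  have h1 : IntegrableOn (fun _ : ℝ × ℝ => (1:ℝ)) (cutSet T R) :=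
    integrableOn_const (cutSet_lt_top T R).ne
  refine Integrable.mono' (h1.add h2) hg.1.aestronglyMeasurable (ae_of_all _ fun p => ?_)
  simp only [Pi.add_apply, Real.norm_eq_abs]
  nlinarith [sq_nonneg (|g p| - 1), sq_abs (g p), abs_nonneg (g p)]

lemma Sol.u2 {T : ℝ} {u w Φ : ℝ × ℝ → ℝ} (h : Sol T u w Φ) : L2loc T u := by
  refine ⟨h.um, fun R _ => ?_⟩
  refine Integrable.mono' (integrableOn_const (C := (1:ℝ))
    (isCompact_Icc.prod isCompact_Icc).measure_lt_top.ne) (h.um.pow_const 2).aestronglyMeasurable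
    (ae_of_all _ fun p => ?_)
  have := h.u01 p
  rw [Real.norm_eq_abs, abs_of_nonneg (sq_nonneg _)]
  nlinarith [this.1, this.2]

lemma rho_fderiv_zero (n : ℕ) (q v : ℝ × ℝ) (h : 1 / ((n:ℝ) + 1) < ‖q‖) :
    fderiv ℝ (rho n) q v = 0 := by
  have : q ∉ tsupport (rho n) := by
    intro hq
    have h2 : tsupport (rho n) = Metric.closedBall 0 (1 / ((n:ℝ) + 1)) :=
      (bmp n).tsupport_normed_eq
    rw [h2, Metric.mem_closedBall, dist_zero_right] at hq
    linarith
  have h3 : q ∉ Function.support (fderiv ℝ (rho n)) := fun h' => this (support_fderiv_subset ℝ h')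
  simp only [Function.mem_support, not_not] at h3
  simp [h3]

lemma rho_zero (n : ℕ) (q : ℝ × ℝ) (h : 1 / ((n:ℝ) + 1) < ‖q‖) : rho n q = 0 := by
  by_contra h'
  have : q ∈ Function.support (rho n) := h'
  rw [rho_supp, Metric.mem_ball, dist_zero_right] at this
  linarith

/-- A weak solution has smooth approximations on every rectangle compactly contained in time: cut off
to a bounded set and mollify. At a small scale the mollifier centred at a point of the rectangle is
an admissible test function, so the mollified functions solve the equation exactly there. -/
lemma exists_approx {T : ℝ} {u w Φ : ℝ × ℝ → ℝ} (hs : Sol T u w Φ) {a b R : ℝ} (ha : 0 < a)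
    (hb : b < T) (hR : 0 < R) : ∃ U Ph G, Approx a b R u w Φ U Ph G := by
  set ut := (cutSet T R).indicator u with hut
  set wt := (cutSet T R).indicator w with hwt
  set Pt := (cutSet T R).indicator Φ with hPt
  have mu : Measurable ut := hs.um.indicator (cutSet_meas T R)
  have mw : Measurable wt := hs.w2.1.indicator (cutSet_meas T R)
  have mP : Measurable Pt := hs.Φ2.1.indicator (cutSet_meas T R)
  have lu : LocallyIntegrable ut := (cut_integrable hR hs.u2).locallyIntegrable
  have lw : LocallyIntegrable wt := (cut_integrable hR hs.w2).locallyIntegrable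
  have lP : LocallyIntegrable Pt := (cut_integrable hR hs.Φ2).locallyIntegrable
  have cm : ∀ n {g}, LocallyIntegrable g → Measurable (moll n g) :=
    fun n g hg => (moll_contDiff n hg).continuous.measurable
  let e : ℕ → ℝ × ℝ → ℝ≥0∞ := fun n p => ENNReal.ofReal ((moll n ut p - ut p) ^ 2) +
    (ENNReal.ofReal ((moll n wt p - wt p) ^ 2) + ENNReal.ofReal ((moll n Pt p - Pt p) ^ 2))
  have me1 : ∀ n, Measurable fun p => ENNReal.ofReal ((moll n ut p - ut p) ^ 2) :=
    fun n => (((cm n lu).sub mu).pow_const 2).ennreal_ofReal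
  have me2 : ∀ n, Measurable fun p => ENNReal.ofReal ((moll n wt p - wt p) ^ 2) :=
    fun n => (((cm n lw).sub mw).pow_const 2).ennreal_ofReal
  have me3 : ∀ n, Measurable fun p => ENNReal.ofReal ((moll n Pt p - Pt p) ^ 2) :=
    fun n => (((cm n lP).sub mP).pow_const 2).ennreal_ofReal
  have he : Tendsto (fun n => ∫⁻ p, e n p) atTop (𝓝 0) := by
    have t := (moll_tendsto mu (cut_sq_integrable hR hs.u2)).add
      ((moll_tendsto mw (cut_sq_integrable hR hs.w2)).add
        (moll_tendsto mP (cut_sq_integrable hR hs.Φ2)))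
    simp only [add_zero] at t
    refine t.congr fun n => ?_
    rw [lintegral_add_left (me1 n), lintegral_add_left (me2 n)]
  have hdpos : 0 < min a (min (T - b) 1) := lt_min ha (lt_min (by linarith) one_pos)
  obtain ⟨n0, hn0⟩ := exists_nat_one_div_lt hdpos
  obtain ⟨s, hs0, H, Hi, Hn, hH⟩ := exists_subseq_dom e
    (fun n => (me1 n).add ((me2 n).add (me3 n))) he n0
  have hsm : ∀ k, 1 / ((s k : ℝ) + 1) < min a (min (T - b) 1) := fun k =>
    lt_of_le_of_lt (one_div_le_one_div_of_le (by positivity) (by gcongr; exact hs0 k)) hn0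
  -- On the rectangle `rhoTest` is admissible, so derivatives commute with mollification.
  have hder : ∀ k, ∀ p ∈ Icc a b ×ˢ Icc (-R) R, pxF (moll (s k) ut) p = moll (s k) wt p ∧
      ptF (moll (s k) ut) p + pxF (moll (s k) Pt) p = 0 := by
    intro k p hp
    have h1 := hsm k
    simp only [lt_min_iff] at h1
    set d := 1 / ((s k : ℝ) + 1)
    have hpd : d < p.1 ∧ p.1 + d < T := ⟨by linarith [hp.1.1], by linarith [hp.1.2]⟩
    have hx : |p.2| ≤ R := abs_le.2 hp.2
    have hf0 : ∀ v z : ℝ × ℝ, d < ‖p - z‖ → fderiv ℝ (rho (s k)) (p - z) v = 0 :=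
      fun v z hz => rho_fderiv_zero _ _ _ hz
    have hpd' : d ≤ p.1 ∧ p.1 + d ≤ T := ⟨hpd.1.le, hpd.2.le⟩
    constructor
    · rw [pxF, moll_fderiv _ lu, moll, hut, hwt, cut_int h1.2.2.le hpd' hx (hf0 (0, 1)),
        cut_int (k := fun z => rho (s k) (p - z)) h1.2.2.le hpd' hx
          (fun z hz => rho_zero _ _ hz)]
      have := hs.dx (rhoTest T (s k) p hpd)
      simp only [pair, pxF, rhoTest_fderiv, mul_neg, integral_neg, neg_inj] at this
      exact this
    · rw [pxF, ptF, moll_fderiv _ lu, moll_fderiv _ lP, hut, hPt,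
        cut_int h1.2.2.le hpd' hx (hf0 (1, 0)), cut_int h1.2.2.le hpd' hx (hf0 (0, 1))]
      have := hs.eq (rhoTest T (s k) p hpd)
      simp only [pair, pxF, ptF, rhoTest_fderiv, mul_neg, integral_neg] at this
      linarith
  refine ⟨fun k => moll (s k) ut, fun k => moll (s k) Pt,
    fun p => 2 * (wt p ^ 2 + Pt p ^ 2) + 2 * H p,
    fun k => moll_contDiff _ lu, fun k => moll_contDiff _ lP, fun k => moll_mem _ ?_,
    fun k p hp => (hder k p hp).2, ?_, ?_⟩
  · intro p
    by_cases hp : p ∈ cutSet T R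
    · rw [hut, indicator_of_mem hp]; exact hs.u01 p
    · rw [hut, indicator_of_notMem hp]; simp
  · exact ((((cut_sq_integrable hR hs.w2).add (cut_sq_integrable hR hs.Φ2)).const_mul 2).add
      (Hi.const_mul 2)).integrableOn
  · have hsub : Icc a b ×ˢ Icc (-R) R ⊆ cutSet T R := by
      apply Set.prod_mono <;> apply Icc_subset_Icc <;> linarith
    filter_upwards [ae_restrict_of_ae hH,
      ae_restrict_mem (measurableSet_Icc.prod measurableSet_Icc)] with p hp hpm
    have hm := hsub hpm
    have c : ∀ g : ℝ × ℝ → ℝ, (cutSet T R).indicator g p = g p := fun g => indicator_of_mem hm g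
    have c1 : ut p = u p := c u
    have c2 : wt p = w p := c w
    have c3 : Pt p = Φ p := c Φ
    have hsq := hp.2
    have small : ∀ k, (moll (s k) wt p - wt p) ^ 2 ≤ H p ∧ (moll (s k) Pt p - Pt p) ^ 2 ≤ H p := by
      intro k
      have h1 := hp.1 k
      constructor <;> rw [← ENNReal.ofReal_le_ofReal_iff (Hn p)] <;> refine le_trans ?_ h1
      · exact le_add_self.trans' le_self_add
      · exact le_add_self.trans' le_add_self
    refine ⟨?_, ?_, ?_, ?_⟩
    · rw [← c1]
      refine tendsto_of_sq_tendsto (tendsto_of_tendsto_of_tendsto_of_le_of_le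
        tendsto_const_nhds hsq (fun _ => zero_le) fun k => le_self_add)
    · rw [← c2]
      have : (fun n => pxF (moll (s n) ut) p) = fun n => moll (s n) wt p := by
        ext n; exact (hder n p hpm).1
      rw [this]
      refine tendsto_of_sq_tendsto (tendsto_of_tendsto_of_tendsto_of_le_of_le
        tendsto_const_nhds hsq (fun _ => zero_le) fun k => le_add_self.trans' le_self_add)
    · rw [← c3]
      refine tendsto_of_sq_tendsto (tendsto_of_tendsto_of_tendsto_of_le_of_le
        tendsto_const_nhds hsq (fun _ => zero_le) fun k => le_add_self.trans' le_add_self)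
    · intro k
      have h1 := small k
      rw [(hder k p hpm).1]
      constructor
      · nlinarith [h1.1, sq_nonneg (Pt p), sq_nonneg (moll (s k) wt p - 2 * wt p)]
      · nlinarith [h1.2, sq_nonneg (wt p), sq_nonneg (moll (s k) Pt p - 2 * Pt p)]

/-! ### Energy and time-increment identities -/

/-- The rectangle `[a,b] × [-R,R]`. -/
abbrev Rect (a b R : ℝ) : Set (ℝ × ℝ) := Icc a b ×ˢ Icc (-R) R

lemma rect_meas (a b R : ℝ) : MeasurableSet (Rect a b R) :=
  measurableSet_Icc.prod measurableSet_Icc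

lemma rect_compact (a b R : ℝ) : IsCompact (Rect a b R) := isCompact_Icc.prod isCompact_Icc

lemma rect_lt_top (a b R : ℝ) : volume (Rect a b R) < ⊤ := (rect_compact a b R).measure_lt_top

lemma rect_vol {a b R : ℝ} (hab : a ≤ b) (hR : 0 ≤ R) :
    volume.real (Rect a b R) = (b - a) * (2 * R) := by
  rw [Rect, Measure.volume_eq_prod, measureReal_prod_prod]
  rw [Real.volume_real_Icc_of_le hab, Real.volume_real_Icc_of_le (by linarith)]
  ring

lemma rect_const (a b R c : ℝ) : IntegrableOn (fun _ : ℝ × ℝ => c) (Rect a b R) :=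
  integrableOn_const (rect_lt_top a b R).ne

lemma hasDerivAt_t {g : ℝ × ℝ → ℝ} (hg : ContDiff ℝ 1 g) (p : ℝ × ℝ) :
    HasDerivAt (fun t => g (t, p.2)) (ptF g p) p.1 := by
  have h1 : HasFDerivAt g (fderiv ℝ g p) (p.1, p.2) :=
    (hg.differentiable one_ne_zero p).hasFDerivAt
  exact h1.comp_hasDerivAt (f := fun t => (t, p.2)) p.1 ((hasDerivAt_id p.1).prodMk (hasDerivAt_const p.1 p.2))

lemma hasDerivAt_x {g : ℝ × ℝ → ℝ} (hg : ContDiff ℝ 1 g) (p : ℝ × ℝ) :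
    HasDerivAt (fun x => g (p.1, x)) (pxF g p) p.2 := by
  have h1 : HasFDerivAt g (fderiv ℝ g p) (p.1, p.2) :=
    (hg.differentiable one_ne_zero p).hasFDerivAt
  exact h1.comp_hasDerivAt (f := fun x => (p.1, x)) p.2 ((hasDerivAt_const p.2 p.1).prodMk (hasDerivAt_id p.2))

lemma cont_ptF {g : ℝ × ℝ → ℝ} (hg : ContDiff ℝ 1 g) : Continuous (ptF g) :=
  (hg.continuous_fderiv one_ne_zero).clm_apply continuous_const

lemma cont_pxF {g : ℝ × ℝ → ℝ} (hg : ContDiff ℝ 1 g) : Continuous (pxF g) :=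
  (hg.continuous_fderiv one_ne_zero).clm_apply continuous_const

/-- The divergence theorem for a `C¹` field `(A, B)` whose second component vanishes on the
lateral sides of the rectangle. -/
lemma div_rect {a b R : ℝ} (hab : a ≤ b) (hR : 0 ≤ R) {A B dv : ℝ × ℝ → ℝ}
    (hA : ContDiff ℝ 1 A) (hB : ContDiff ℝ 1 B) (hB1 : ∀ t, B (t, R) = 0)
    (hB2 : ∀ t, B (t, -R) = 0)
    (hdv : ∀ p ∈ Rect a b R, ∃ At Bx, HasDerivAt (fun t => A (t, p.2)) At p.1 ∧
      HasDerivAt (fun x => B (p.1, x)) Bx p.2 ∧ At + Bx = dv p) :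
    ∫ p in Rect a b R, dv p = (∫ x in Icc (-R) R, A (b, x)) - ∫ x in Icc (-R) R, A (a, x) := by
  have e : Rect a b R = Icc (a, -R) (b, R) := by rw [← Icc_prod_Icc]
  have h := integral_divergence_prod_Icc_of_hasFDerivAt_of_le A B (fderiv ℝ A) (fderiv ℝ B)
    (a, -R) (b, R) ⟨hab, by simp; linarith⟩ hA.continuous.continuousOn hB.continuous.continuousOn
    (fun x _ => (hA.differentiable one_ne_zero x).hasFDerivAt)
    (fun x _ => (hB.differentiable one_ne_zero x).hasFDerivAt)
    (by
      rw [← e]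
      exact ((cont_ptF hA).add (cont_pxF hB)).continuousOn.integrableOn_compact (rect_compact _ _ _))
  rw [← e] at h
  have h2 : ∫ p in Rect a b R, dv p =
      ∫ p in Rect a b R, (fderiv ℝ A p (1, 0) + fderiv ℝ B p (0, 1)) := by
    refine setIntegral_congr_fun (rect_meas a b R) fun p hp => ?_
    obtain ⟨At, Bx, h1, h2, h3⟩ := hdv p hp
    have e1 := h1.unique (hasDerivAt_t hA p)
    have e2 := h2.unique (hasDerivAt_x hB p)
    rw [← h3, e1, e2]; rfl
  rw [h2, h]
  simp only [hB1, hB2]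
  rw [integral_Icc_eq_integral_Ioc, integral_Icc_eq_integral_Ioc,
    ← intervalIntegral.integral_of_le (by linarith), ← intervalIntegral.integral_of_le (by linarith)]
  simp

/-- The primitive of `f` vanishing at `0`. -/
def prim (f : ℝ → ℝ) (v : ℝ) : ℝ := ∫ s in (0:ℝ)..v, f s

lemma prim_hasDerivAt {f : ℝ → ℝ} (hf : Continuous f) (v : ℝ) : HasDerivAt (prim f) (f v) v :=
  intervalIntegral.integral_hasDerivAt_right (hf.intervalIntegrable _ _)
    (hf.stronglyMeasurableAtFilter _ _) hf.continuousAt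

lemma prim_contDiff {f : ℝ → ℝ} (hf : Continuous f) : ContDiff ℝ 1 (prim f) := by
  rw [contDiff_one_iff_deriv]
  refine ⟨fun v => (prim_hasDerivAt hf v).differentiableAt, ?_⟩
  have : deriv (prim f) = f := by ext v; exact (prim_hasDerivAt hf v).deriv
  rwa [this]

lemma prim_bound {f : ℝ → ℝ} {C : ℝ} (hC : ∀ v ∈ Icc (0:ℝ) 1, |f v| ≤ C) {v : ℝ}
    (hv : v ∈ Icc (0:ℝ) 1) : |prim f v| ≤ C := by
  have := intervalIntegral.norm_integral_le_of_norm_le_const (a := 0) (b := v) (f := f) (C := C)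
    (fun s hs => by
      rw [uIoc_of_le hv.1] at hs
      exact hC s ⟨hs.1.le, hs.2.trans hv.2⟩)
  rw [sub_zero, abs_of_nonneg hv.1] at this
  have h0 : 0 ≤ C := (abs_nonneg _).trans (hC 0 (by simp))
  exact this.trans (mul_le_of_le_one_right h0 hv.2)

/-- A smooth spatial cutoff on `[-R,R]`. -/
structure Cut (κ : ℝ → ℝ) (R K : ℝ) : Prop where
  sm : ContDiff ℝ (⊤ : ℕ∞) κ
  mem : ∀ x, κ x ∈ Icc (0:ℝ) 1
  right : κ R = 0
  left : κ (-R) = 0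
  dbd : ∀ x, |deriv κ x| ≤ K

lemma Cut.c1 {κ : ℝ → ℝ} {R K : ℝ} (h : Cut κ R K) : ContDiff ℝ 1 κ :=
  h.sm.of_le (by exact_mod_cast le_top)

lemma Cut.hd {κ : ℝ → ℝ} {R K : ℝ} (h : Cut κ R K) (x : ℝ) : HasDerivAt κ (deriv κ x) x :=
  (h.c1.differentiable one_ne_zero x).hasDerivAt

lemma Cut.cd {κ : ℝ → ℝ} {R K : ℝ} (h : Cut κ R K) : Continuous (deriv κ) :=
  h.c1.continuous_deriv le_rfl

section
variable {a b R : ℝ} {u w Φ : ℝ × ℝ → ℝ} {U Ph : ℕ → ℝ × ℝ → ℝ} {G : ℝ × ℝ → ℝ}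

lemma Approx.U1 (h : Approx a b R u w Φ U Ph G) (n : ℕ) : ContDiff ℝ 1 (U n) :=
  (h.Us n).of_le (by exact_mod_cast le_top)

lemma Approx.P1 (h : Approx a b R u w Φ U Ph G) (n : ℕ) : ContDiff ℝ 1 (Ph n) :=
  (h.Ps n).of_le (by exact_mod_cast le_top)

/-- The localized energy inequality, obtained by passing to the limit in the identity for
`∂ₜ(κ² U² / 2)`. -/
lemma energy_lim (h : Approx a b R u w Φ U Ph G) (hab : a ≤ b) (hR : 0 ≤ R) {κ f : ℝ → ℝ}
    {K Cf : ℝ} (hκ : Cut κ R K) (hf : Continuous f) (hCf : ∀ v ∈ Icc (0:ℝ) 1, |f v| ≤ Cf) :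
    -R ≤ ∫ p in Rect a b R, (κ p.2 ^ 2 * (Φ p - f (u p)) * w p +
      2 * κ p.2 * deriv κ p.2 * (Φ p * u p - prim f (u p))) := by
  have hκc := hκ.sm.continuous
  have hK : 0 ≤ K := (abs_nonneg _).trans (hκ.dbd 0)
  have hC0 : 0 ≤ Cf := (abs_nonneg _).trans (hCf 0 (by simp))
  have hpc := (prim_contDiff hf).continuous
  have hlim : Tendsto (fun n => ∫ p in Rect a b R, (κ p.2 ^ 2 * (Ph n p - f (U n p)) * pxF (U n) p +
      2 * κ p.2 * deriv κ p.2 * (Ph n p * U n p - prim f (U n p)))) atTop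
      (𝓝 (∫ p in Rect a b R, (κ p.2 ^ 2 * (Φ p - f (u p)) * w p +
      2 * κ p.2 * deriv κ p.2 * (Φ p * u p - prim f (u p))))) := by
    refine tendsto_integral_of_dominated_convergence
      (fun p => 2 * G p + Cf ^ 2 + 2 * K * (1 + G p + Cf)) (fun n => ?_) ?_ (fun n => ?_) ?_
    · have c1 := (h.Us n).continuous
      have c2 := (h.Ps n).continuous
      have c3 := cont_pxF (h.U1 n)
      have c4 := hκ.cd
      apply Continuous.aestronglyMeasurable
      fun_prop
    · have g := h.Gi
      exact ((g.const_mul 2).add (rect_const a b R _)).add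
        (((((rect_const a b R 1).add g).add (rect_const a b R Cf))).const_mul (2 * K))
    · filter_upwards [h.conv] with p hp
      obtain ⟨g1, g2⟩ := hp.2.2.2 n
      have hU := h.U01 n p
      have k := hκ.mem p.2
      have kd := hκ.dbd p.2
      have f1 := hCf _ hU
      have f2 := prim_bound hCf hU
      rw [Real.norm_eq_abs]
      set P := Ph n p
      set D := pxF (U n) p
      have b1 : |κ p.2 ^ 2 * (P - f (U n p)) * D| ≤ 2 * G p + Cf ^ 2 := by
        rw [abs_mul, abs_mul, abs_of_nonneg (sq_nonneg (κ p.2))]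
        have : κ p.2 ^ 2 ≤ 1 := by nlinarith [k.1, k.2]
        have e1 : |P - f (U n p)| ≤ |P| + Cf := (abs_sub _ _).trans (by linarith)
        calc κ p.2 ^ 2 * |P - f (U n p)| * |D| ≤ 1 * (|P| + Cf) * |D| := by gcongr
          _ ≤ _ := by
            nlinarith [sq_nonneg (|P| - |D|), sq_nonneg (Cf - |D|), sq_abs P, sq_abs D,
              sq_nonneg Cf]
      have b2 : |2 * κ p.2 * deriv κ p.2 * (P * U n p - prim f (U n p))| ≤
          2 * K * (1 + G p + Cf) := by
        rw [abs_mul, abs_mul, abs_mul, abs_two, abs_of_nonneg k.1]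
        have e1 : |P * U n p - prim f (U n p)| ≤ 1 + G p + Cf := by
          refine (abs_sub _ _).trans ?_
          rw [abs_mul, abs_of_nonneg hU.1]
          nlinarith [hU.2, abs_nonneg P, sq_nonneg (|P| - 1), sq_abs P]
        calc 2 * κ p.2 * |deriv κ p.2| * |P * U n p - prim f (U n p)|
            ≤ 2 * 1 * K * (1 + G p + Cf) := by gcongr; exact k.2
          _ = _ := by ring
      exact (abs_add_le _ _).trans (add_le_add b1 b2)
    · filter_upwards [h.conv] with p hp
      obtain ⟨t1, t2, t3, -⟩ := hp
      have tf := (hf.tendsto (u p)).comp t1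
      have tp := (hpc.tendsto (u p)).comp t1
      exact (((t3.sub tf).const_mul _).mul t2).add (((t3.mul t1).sub tp).const_mul _)
  refine ge_of_tendsto' hlim fun n => ?_
  have hU := h.U1 n
  have hP := h.P1 n
  have hκ2 : ContDiff ℝ 1 fun p : ℝ × ℝ => κ p.2 ^ 2 := (hκ.c1.comp contDiff_snd).pow 2
  rw [div_rect (A := fun p => κ p.2 ^ 2 * (U n p ^ 2 / 2))
    (B := fun p => κ p.2 ^ 2 * (Ph n p * U n p - prim f (U n p))) hab hR
    (hκ2.mul ((hU.pow 2).div_const 2))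
    (hκ2.mul ((hP.mul hU).sub ((prim_contDiff hf).comp hU)))
    (by simp [hκ.right]) (by simp [hκ.left])]
  · have i1 : 0 ≤ ∫ x in Icc (-R) R, κ x ^ 2 * (U n (b, x) ^ 2 / 2) :=
      integral_nonneg fun x => by positivity
    have i2 : ∫ x in Icc (-R) R, κ x ^ 2 * (U n (a, x) ^ 2 / 2) ≤ ∫ x in Icc (-R) R, (1/2 : ℝ) := by
      refine integral_mono_of_nonneg (ae_of_all _ fun x => by positivity)
        (integrableOn_const isCompact_Icc.measure_lt_top.ne) (ae_of_all _ fun x => ?_)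
      have k := hκ.mem x
      have := h.U01 n (a, x)
      have e1 : κ x ^ 2 ≤ 1 := by nlinarith [k.1, k.2]
      have e2 : U n (a, x) ^ 2 ≤ 1 := by nlinarith [this.1, this.2]
      simp only
      nlinarith [sq_nonneg (U n (a, x)), sq_nonneg (κ x)]
    rw [setIntegral_const, Real.volume_real_Icc_of_le (by linarith)] at i2
    simp only [smul_eq_mul] at i2
    linarith
  · intro p hp
    have dUt := hasDerivAt_t hU p
    have dUx := hasDerivAt_x hU p
    have dPx := hasDerivAt_x hP p
    have dF : HasDerivAt (fun x => prim f (U n (p.1, x))) (f (U n p) * pxF (U n) p) p.2 :=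
      HasDerivAt.comp (h₂ := prim f) p.2 (prim_hasDerivAt hf (U n p)) dUx
    refine ⟨_, _, ((dUt.pow 2).div_const 2).const_mul (κ p.2 ^ 2),
      ((hκ.hd p.2).pow 2).mul ((dPx.mul dUx).sub dF), ?_⟩
    have := h.eq n p hp
    have e : ptF (U n) p = - pxF (Ph n) p := by linarith
    rw [e]
    simp only [Nat.cast_ofNat, Prod.mk.eta, Pi.pow_apply]
    ring

/-- For almost every pair of times, the increment of `∫ ψ u` is the integral of the flux against
`ψ'`. -/
lemma time_lim (h : Approx a b R u w Φ U Ph G) (hR : 0 ≤ R) {ψ : ℝ → ℝ} (hψ : ContDiff ℝ 1 ψ)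
    (h1 : ψ R = 0) (h2 : ψ (-R) = 0) :
    ∀ᵐ t ∂(volume.restrict (Icc a b)), ∀ᵐ s ∂(volume.restrict (Icc a b)), s ≤ t →
      (∫ x in Icc (-R) R, ψ x * u (t, x)) - ∫ x in Icc (-R) R, ψ x * u (s, x) =
        ∫ p in Rect s t R, deriv ψ p.2 * Φ p := by
  have hψc := hψ.continuous
  have hψd := hψ.continuous_deriv le_rfl
  obtain ⟨K0, hK0⟩ := isCompact_Icc.exists_bound_of_continuousOn (s := Icc (-R) R) hψc.continuousOn
  obtain ⟨K1, hK1⟩ := isCompact_Icc.exists_bound_of_continuousOn (s := Icc (-R) R) hψd.continuousOn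
  have good : ∀ᵐ t ∂(volume.restrict (Icc a b)),
      Tendsto (fun n => ∫ x in Icc (-R) R, ψ x * U n (t, x)) atTop
        (𝓝 (∫ x in Icc (-R) R, ψ x * u (t, x))) := by
    have hc := h.conv
    rw [Measure.volume_eq_prod, ← Measure.prod_restrict] at hc
    filter_upwards [Measure.ae_ae_of_ae_prod hc] with t ht
    refine tendsto_integral_of_dominated_convergence (fun _ => K0) (fun n => ?_)
      (integrableOn_const isCompact_Icc.measure_lt_top.ne) (fun n => ?_) ?_
    · have := (h.Us n).continuous
      apply Continuous.aestronglyMeasurable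
      fun_prop
    · filter_upwards [ae_restrict_mem measurableSet_Icc] with x hx
      have hU := h.U01 n (t, x)
      have := hK0 x hx
      rw [norm_mul, Real.norm_eq_abs (U n (t,x)), abs_of_nonneg hU.1]
      exact (mul_le_of_le_one_right (norm_nonneg _) hU.2).trans this
    · filter_upwards [ht] with x hx
      exact hx.1.const_mul _
  filter_upwards [good, ae_restrict_mem measurableSet_Icc] with t ht htm
  filter_upwards [good, ae_restrict_mem measurableSet_Icc] with s hs hsm hst
  have hsub : Rect s t R ⊆ Rect a b R := Set.prod_mono (Icc_subset_Icc hsm.1 htm.2) le_rfl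
  have hlim : Tendsto (fun n => ∫ p in Rect s t R, deriv ψ p.2 * Ph n p) atTop
      (𝓝 (∫ p in Rect s t R, deriv ψ p.2 * Φ p)) := by
    refine tendsto_integral_of_dominated_convergence (fun p => K1 * (1 + G p)) (fun n => ?_) ?_
      (fun n => ?_) ?_
    · have := (h.Ps n).continuous
      apply Continuous.aestronglyMeasurable
      fun_prop
    · exact ((rect_const s t R 1).add (h.Gi.mono_set hsub)).const_mul K1
    · filter_upwards [ae_restrict_of_ae_restrict_of_subset hsub h.conv,
        ae_restrict_mem (rect_meas s t R)] with p hp hpm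
      have e := hK1 p.2 hpm.2
      have g := (hp.2.2.2 n).2
      rw [norm_mul]
      have : ‖Ph n p‖ ≤ 1 + G p := by
        rw [Real.norm_eq_abs]
        nlinarith [sq_nonneg (|Ph n p| - 1), sq_abs (Ph n p), abs_nonneg (Ph n p)]
      exact mul_le_mul e this (norm_nonneg _) ((norm_nonneg _).trans e)
    · filter_upwards [ae_restrict_of_ae_restrict_of_subset hsub h.conv] with p hp
      exact hp.2.2.1.const_mul _
  refine tendsto_nhds_unique (ht.sub hs) (hlim.congr fun n => ?_)
  have hψ2 : ContDiff ℝ 1 fun p : ℝ × ℝ => ψ p.2 := hψ.comp contDiff_snd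
  refine div_rect (A := fun p => ψ p.2 * U n p) (B := fun p => ψ p.2 * Ph n p) hst hR
    (hψ2.mul (h.U1 n)) (hψ2.mul (h.P1 n)) (by simp [h1]) (by simp [h2]) fun p hp => ?_
  refine ⟨_, _, (hasDerivAt_t (h.U1 n) p).const_mul (ψ p.2),
    (hψ.differentiable one_ne_zero p.2).hasDerivAt.mul (hasDerivAt_x (h.P1 n) p), ?_⟩
  have := h.eq n p (hsub hp)
  have e : ptF (U n) p = - pxF (Ph n) p := by linarith
  rw [e]
  simp only [Prod.mk.eta]
  ring

end

/-! ### Space increments and their potential -/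

/-- The spatial increment `g(t, x + h) - g(t, x)`. -/
def dl (h : ℝ) (g : ℝ × ℝ → ℝ) (p : ℝ × ℝ) : ℝ := g (p.1, p.2 + h) - g p

lemma dl_abs (h : ℝ) (g : ℝ × ℝ → ℝ) (p : ℝ × ℝ) :
    |dl h g p| ≤ |g (p.1, p.2 + h)| + |g p| := abs_sub _ _

lemma shift_mp (h : ℝ) : MeasurePreserving (fun p : ℝ × ℝ => (p.1, p.2 + h)) volume volume := by
  have := measurePreserving_add_right (volume : Measure (ℝ × ℝ)) ((0, h) : ℝ × ℝ)
  convert this using 2 with p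
  ext <;> simp

lemma shift_emb (h : ℝ) : MeasurableEmbedding (fun p : ℝ × ℝ => (p.1, p.2 + h)) := by
  have := measurableEmbedding_addRight ((0, h) : ℝ × ℝ)
  convert this using 2 with p
  ext <;> simp

lemma rect_shift {a b R h : ℝ} (h0 : 0 ≤ h) (h1 : h ≤ 1) :
    Rect a b R ⊆ (fun p : ℝ × ℝ => (p.1, p.2 + h)) ⁻¹' Rect a b (R + 1) := by
  intro p hp
  exact ⟨hp.1, by simp only; linarith [hp.2.1], by simp only; linarith [hp.2.2]⟩

lemma shift_integrable {a b R h : ℝ} (h0 : 0 ≤ h) (h1 : h ≤ 1) {g : ℝ × ℝ → ℝ}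
    (hg : IntegrableOn g (Rect a b (R + 1))) :
    IntegrableOn (fun p => g (p.1, p.2 + h)) (Rect a b R) :=
  (((shift_mp h).integrableOn_comp_preimage (shift_emb h)).2 hg).mono_set (rect_shift h0 h1)

lemma shift_le {a b R h : ℝ} (h0 : 0 ≤ h) (h1 : h ≤ 1) {g : ℝ × ℝ → ℝ}
    (hg : IntegrableOn g (Rect a b (R + 1))) (hn : ∀ p, 0 ≤ g p) :
    ∫ p in Rect a b R, g (p.1, p.2 + h) ≤ ∫ p in Rect a b (R + 1), g p := by
  rw [← (shift_mp h).setIntegral_preimage_emb (shift_emb h) g]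
  exact setIntegral_mono_set (((shift_mp h).integrableOn_comp_preimage (shift_emb h)).2 hg)
    (ae_of_all _ fun p => hn _) (rect_shift h0 h1).eventuallyLE

lemma shift_ae {a b R h : ℝ} (h0 : 0 ≤ h) (h1 : h ≤ 1) {P : ℝ × ℝ → Prop}
    (hP : ∀ᵐ p ∂(volume.restrict (Rect a b (R + 1))), P p) :
    ∀ᵐ p ∂(volume.restrict (Rect a b R)), P (p.1, p.2 + h) :=
  ae_restrict_of_ae_restrict_of_subset (rect_shift h0 h1)
    (((shift_mp h).restrict_preimage_emb (shift_emb h) _).quasiMeasurePreserving.ae hP)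

lemma rect_succ (a b R : ℝ) : Rect a b R ⊆ Rect a b (R + 1) :=
  Set.prod_mono le_rfl (Icc_subset_Icc (by linarith) (by linarith))

/-- The integral `∫₀ʰ U(t, x + y) dy`, which is a potential in `x` of the increment of `U`. -/
def Vh (h : ℝ) (U : ℝ × ℝ → ℝ) (p : ℝ × ℝ) : ℝ := ∫ y in (0:ℝ)..h, U (p.1, p.2 + y)

lemma Vh_hasFDerivAt (h : ℝ) {U : ℝ × ℝ → ℝ} (hU : ContDiff ℝ 1 U) (p : ℝ × ℝ) :
    HasFDerivAt (Vh h U) (∫ y in (0:ℝ)..h, fderiv ℝ U (p.1, p.2 + y)) p := by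
  have hc := hU.continuous
  have hd := hU.continuous_fderiv one_ne_zero
  obtain ⟨B, hB⟩ := ((isCompact_closedBall p 1).prod (isCompact_uIcc (a := 0) (b := h))
    ).exists_bound_of_continuousOn
    (f := fun q : (ℝ × ℝ) × ℝ => fderiv ℝ U (q.1.1, q.1.2 + q.2)) (by fun_prop)
  refine intervalIntegral.hasFDerivAt_integral_of_dominated_of_fderiv_le (bound := fun _ => B)
    (F := fun q y => U (q.1, q.2 + y)) (F' := fun q y => fderiv ℝ U (q.1, q.2 + y))
    (Metric.closedBall_mem_nhds p one_pos) (Eventually.of_forall fun q => ?_) ?_ ?_ ?_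
    intervalIntegrable_const ?_
  · apply Continuous.aestronglyMeasurable; fun_prop
  · apply Continuous.intervalIntegrable; fun_prop
  · apply Continuous.aestronglyMeasurable; fun_prop
  · exact ae_of_all _ fun y hy q hq => hB (q, y) ⟨hq, uIoc_subset_uIcc hy⟩
  · refine ae_of_all _ fun y hy q hq => ?_
    have h1 : HasFDerivAt U (fderiv ℝ U (q.1, q.2 + y)) (q.1, q.2 + y) :=
      (hU.differentiable one_ne_zero _).hasFDerivAt
    have h2 : HasFDerivAt (fun q : ℝ × ℝ => (q.1, q.2 + y)) (ContinuousLinearMap.id ℝ (ℝ × ℝ)) q := by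
      have e : (fun q : ℝ × ℝ => (q.1, q.2 + y)) = fun q => q + (0, y) := by ext q <;> simp
      rw [e]
      exact (hasFDerivAt_id q).add_const _
    have := HasFDerivAt.comp (g := U) q h1 h2
    rw [ContinuousLinearMap.comp_id] at this
    exact this

lemma Vh_contDiff (h : ℝ) {U : ℝ × ℝ → ℝ} (hU : ContDiff ℝ 1 U) : ContDiff ℝ 1 (Vh h U) := by
  have hd := hU.continuous_fderiv one_ne_zero
  rw [contDiff_one_iff_fderiv]
  refine ⟨fun p => (Vh_hasFDerivAt h hU p).differentiableAt, ?_⟩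
  have : fderiv ℝ (Vh h U) = fun p => ∫ y in (0:ℝ)..h, fderiv ℝ U (p.1, p.2 + y) := by
    ext1 p; exact (Vh_hasFDerivAt h hU p).fderiv
  rw [this]
  apply intervalIntegral.continuous_parametric_intervalIntegral_of_continuous'
  fun_prop

lemma Vh_apply (h : ℝ) {U : ℝ × ℝ → ℝ} (hU : ContDiff ℝ 1 U) (p v : ℝ × ℝ) :
    fderiv ℝ (Vh h U) p v = ∫ y in (0:ℝ)..h, fderiv ℝ U (p.1, p.2 + y) v := by
  have hd := hU.continuous_fderiv one_ne_zero
  rw [(Vh_hasFDerivAt h hU p).fderiv, ContinuousLinearMap.intervalIntegral_apply]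
  apply Continuous.intervalIntegrable; fun_prop

lemma int_pxF (h : ℝ) {U : ℝ × ℝ → ℝ} (hU : ContDiff ℝ 1 U) (p : ℝ × ℝ) :
    ∫ y in (0:ℝ)..h, pxF U (p.1, p.2 + y) = dl h U p := by
  have hd := cont_pxF hU
  rw [intervalIntegral.integral_eq_sub_of_hasDerivAt (f := fun y => U (p.1, p.2 + y))]
  · simp [dl]
  · intro y _
    have := hasDerivAt_x hU (p.1, p.2 + y)
    exact HasDerivAt.comp_const_add (p.2) y this
  · apply Continuous.intervalIntegrable; fun_prop

lemma Vh_px (h : ℝ) {U : ℝ × ℝ → ℝ} (hU : ContDiff ℝ 1 U) (p : ℝ × ℝ) :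
    pxF (Vh h U) p = dl h U p := by
  rw [← int_pxF h hU p]; exact Vh_apply h hU p (0, 1)

/-- In the rectangle `∂ₜ Vh` is computed from the equation `∂ₜU = -∂ₓP`. -/
lemma Vh_pt {a b R h : ℝ} (h0 : 0 ≤ h) (h1 : h ≤ 1) {U P : ℝ × ℝ → ℝ} (hU : ContDiff ℝ 1 U)
    (hP : ContDiff ℝ 1 P) (heq : ∀ p ∈ Rect a b (R + 1), ptF U p + pxF P p = 0)
    {p : ℝ × ℝ} (hp : p ∈ Rect a b R) : ptF (Vh h U) p = - dl h P p := by
  rw [← int_pxF h hP p, ← intervalIntegral.integral_neg]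
  refine (Vh_apply h hU p (1, 0)).trans (intervalIntegral.integral_congr fun y hy => ?_)
  rw [uIcc_of_le h0] at hy
  have := heq _ (rect_shift hy.1 (hy.2.trans h1) hp)
  simp only [ptF] at this ⊢
  linarith

lemma Vh_abs {h : ℝ} (h0 : 0 ≤ h) {U : ℝ × ℝ → ℝ} (hU : ∀ p, U p ∈ Icc (0:ℝ) 1) (p : ℝ × ℝ) :
    |Vh h U p| ≤ h := by
  have := intervalIntegral.norm_integral_le_of_norm_le_const (a := 0) (b := h)
    (f := fun y => U (p.1, p.2 + y)) (C := 1)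
    (fun s hs => by
      rw [Real.norm_eq_abs, abs_of_nonneg (hU _).1]; exact (hU _).2)
  simpa [Vh, abs_of_nonneg h0] using this

/-! ### Interaction inequality for smooth solutions -/

/-- An entropy `η` with its first two derivatives, bounded by `E` on `[0,1]`. -/
structure Ent (η η' η'' : ℝ → ℝ) (E : ℝ) : Prop where
  d1 : ∀ v, HasDerivAt η (η' v) v
  d2 : ∀ v, HasDerivAt η' (η'' v) v
  c2 : Continuous η''
  b0 : ∀ v ∈ Icc (0:ℝ) 1, |η v| ≤ E
  b1 : ∀ v ∈ Icc (0:ℝ) 1, |η' v| ≤ E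
  b2 : ∀ v ∈ Icc (0:ℝ) 1, |η'' v| ≤ E

section
variable {η η' η'' f : ℝ → ℝ} {E Cf : ℝ}

lemma Ent.c1 (h : Ent η η' η'' E) : ContDiff ℝ 1 η' := by
  rw [contDiff_one_iff_deriv]
  refine ⟨fun v => (h.d2 v).differentiableAt, ?_⟩
  have : deriv η' = η'' := by ext v; exact (h.d2 v).deriv
  rw [this]; exact h.c2

lemma Ent.c0 (h : Ent η η' η'' E) : ContDiff ℝ 1 η := by
  rw [contDiff_one_iff_deriv]
  refine ⟨fun v => (h.d1 v).differentiableAt, ?_⟩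
  have : deriv η = η' := by ext v; exact (h.d1 v).deriv
  rw [this]; exact h.c1.continuous

lemma Ent.nn (h : Ent η η' η'' E) : 0 ≤ E := (abs_nonneg _).trans (h.b0 0 (by simp))

/-- The flux `P η'(U) - F(U)` paired with `η(U)`, where `F' = f η''`. -/
def efl (f η' η'' : ℝ → ℝ) (U P : ℝ × ℝ → ℝ) (p : ℝ × ℝ) : ℝ :=
  P p * η' (U p) - prim (fun v => f v * η'' v) (U p)

/-- The entropy production density `(P - f(U)) η''(U) X`, with `X` in the role of `∂ₓU`. -/
def epr (f η'' : ℝ → ℝ) (U P X : ℝ × ℝ → ℝ) (p : ℝ × ℝ) : ℝ :=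
  (P p - f (U p)) * η'' (U p) * X p

/-- The interaction inequality for smooth solutions: the divergence theorem for the field
`κ Vₕ (Δη(U), Δ efl)`, where `Δ` is the increment in space by `h` and `Vₕ = Vh h U`. As
`∂ₓVₕ = ΔU` and `∂ₜVₕ = -ΔP`, its divergence contains the determinant of increments on the left,
and all other terms carry the factor `|Vₕ| ≤ h`. -/
lemma inter_smooth {a b R h K : ℝ} (hab : a ≤ b) (hR : 0 ≤ R) (h0 : 0 ≤ h) (h1 : h ≤ 1)
    {U P : ℝ × ℝ → ℝ} (hU : ContDiff ℝ 1 U) (hP : ContDiff ℝ 1 P)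
    (heq : ∀ p ∈ Rect a b (R + 1), ptF U p + pxF P p = 0) (U01 : ∀ p, U p ∈ Icc (0:ℝ) 1)
    {κ : ℝ → ℝ} (hκ : Cut κ R K) (hf : Continuous f) (hη : Ent η η' η'' E) :
    |∫ p in Rect a b R, κ p.2 * (- dl h P p * dl h (fun q => η (U q)) p +
        dl h U p * dl h (efl f η' η'' U P) p)| ≤
      h * (8 * R * E) + ∫ p in Rect a b R,
        h * (K * |dl h (efl f η' η'' U P) p| + |dl h (epr f η'' U P (pxF U)) p|) := by
  have hηc := hη.c0.continuous
  have hη1 := hη.c1.continuous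
  have hη2 := hη.c2
  have hg : Continuous fun v => f v * η'' v := hf.mul hη2
  have hpr := prim_contDiff hg
  have hprc := hpr.continuous
  have hκc := hκ.sm.continuous
  have hκd := hκ.cd
  have hUc := hU.continuous
  have hPc := hP.continuous
  have hUx := cont_pxF hU
  have hV := Vh_contDiff h hU
  have hVc := hV.continuous
  have hE := hη.nn
  have hK : 0 ≤ K := (abs_nonneg _).trans (hκ.dbd 0)
  have hsh : ContDiff ℝ 1 fun p : ℝ × ℝ => (p.1, p.2 + h) :=
    contDiff_fst.prodMk (contDiff_snd.add contDiff_const)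
  have hefl : ContDiff ℝ 1 (efl f η' η'' U P) := (hP.mul (hη.c1.comp hU)).sub (hpr.comp hU)
  have dlC : ∀ {g : ℝ × ℝ → ℝ}, ContDiff ℝ 1 g → ContDiff ℝ 1 (dl h g) :=
    fun hg => (hg.comp hsh).sub hg
  have hepr : Continuous (epr f η'' U P (pxF U)) := by unfold epr; fun_prop
  have dlc : ∀ {g : ℝ × ℝ → ℝ}, Continuous g → Continuous (dl h g) := by
    intro g hg; unfold dl; fun_prop
  have hκ2 : ContDiff ℝ 1 fun p : ℝ × ℝ => κ p.2 := hκ.c1.comp contDiff_snd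
  have hηU : ContDiff ℝ 1 fun q => η (U q) := hη.c0.comp hU
  set I1 : ℝ × ℝ → ℝ := fun p => κ p.2 * (- dl h P p * dl h (fun q => η (U q)) p +
        dl h U p * dl h (efl f η' η'' U P) p) with hI1
  set I2 : ℝ × ℝ → ℝ := fun p => deriv κ p.2 * Vh h U p * dl h (efl f η' η'' U P) p +
    κ p.2 * Vh h U p * dl h (epr f η'' U P (pxF U)) p with hI2
  have c1 := dlc hPc
  have c2 := dlc hηU.continuous
  have c3 := dlc hUc
  have c4 := dlc hefl.continuous
  have c5 := dlc hepr
  have i1 : IntegrableOn I1 (Rect a b R) :=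
    (Continuous.continuousOn (by fun_prop)).integrableOn_compact (rect_compact _ _ _)
  have i2 : IntegrableOn I2 (Rect a b R) :=
    (Continuous.continuousOn (by fun_prop)).integrableOn_compact (rect_compact _ _ _)
  have i3 : IntegrableOn (fun p => h * (K * |dl h (efl f η' η'' U P) p| +
      |dl h (epr f η'' U P (pxF U)) p|)) (Rect a b R) :=
    (Continuous.continuousOn (by fun_prop)).integrableOn_compact (rect_compact _ _ _)
  -- The lateral boundary terms vanish since `κ` does.
  have main : ∫ p in Rect a b R, (I1 p + I2 p) =
      (∫ x in Icc (-R) R, κ x * Vh h U (b, x) * dl h (fun q => η (U q)) (b, x)) -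
      ∫ x in Icc (-R) R, κ x * Vh h U (a, x) * dl h (fun q => η (U q)) (a, x) := by
    refine div_rect (A := fun p => κ p.2 * Vh h U p * dl h (fun q => η (U q)) p)
      (B := fun p => κ p.2 * Vh h U p * dl h (efl f η' η'' U P) p) hab hR
      ((hκ2.mul hV).mul (dlC hηU)) ((hκ2.mul hV).mul (dlC hefl)) (by simp [hκ.right])
      (by simp [hκ.left]) fun p hp => ?_
    have dt : ∀ q : ℝ × ℝ, HasDerivAt (fun t => η (U (t, q.2))) (η' (U q) * ptF U q) q.1 :=
      fun q => HasDerivAt.comp (h₂ := η) q.1 (hη.d1 (U q)) (hasDerivAt_t hU q)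
    have dx : ∀ q : ℝ × ℝ, HasDerivAt (fun x => efl f η' η'' U P (q.1, x))
        (pxF P q * η' (U q) + P q * (η'' (U q) * pxF U q) -
          f (U q) * η'' (U q) * pxF U q) q.2 := by
      intro q
      exact ((hasDerivAt_x hP q).mul (HasDerivAt.comp (h₂ := η') q.2 (hη.d2 (U q))
        (hasDerivAt_x hU q))).sub (HasDerivAt.comp (h₂ := prim fun v => f v * η'' v) q.2
        (prim_hasDerivAt hg (U q)) (hasDerivAt_x hU q))
    have dVt := hasDerivAt_t hV p
    have dVx := hasDerivAt_x hV p
    rw [Vh_pt h0 h1 hU hP heq hp] at dVt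
    rw [Vh_px h hU] at dVx
    have dt' : HasDerivAt (fun t => dl h (fun q => η (U q)) (t, p.2))
        (η' (U (p.1, p.2 + h)) * ptF U (p.1, p.2 + h) - η' (U p) * ptF U p) p.1 :=
      (dt (p.1, p.2 + h)).sub (dt p)
    have dx' : HasDerivAt (fun x => dl h (efl f η' η'' U P) (p.1, x)) _ p.2 :=
      (HasDerivAt.comp_add_const p.2 h (dx (p.1, p.2 + h))).sub (dx p)
    refine ⟨_, _, (dVt.const_mul (κ p.2)).mul dt', ((hκ.hd p.2).mul dVx).mul dx', ?_⟩
    have e1 : ptF U p = - pxF P p := by linarith [heq p (rect_succ a b R hp)]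
    have e2 : ptF U (p.1, p.2 + h) = - pxF P (p.1, p.2 + h) := by
      linarith [heq _ (rect_shift h0 h1 hp)]
    rw [e1, e2]
    simp only [hI1, hI2, Prod.mk.eta, dl, epr, Pi.mul_apply]
    ring
  have bd : ∀ t, |∫ x in Icc (-R) R, κ x * Vh h U (t, x) * dl h (fun q => η (U q)) (t, x)| ≤
      h * (4 * R * E) := by
    intro t
    have := norm_setIntegral_le_of_norm_le_const (μ := volume) (s := Icc (-R) R)
      (f := fun x => κ x * Vh h U (t, x) * dl h (fun q => η (U q)) (t, x)) (C := h * (2 * E))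
      isCompact_Icc.measure_lt_top (fun x _ => by
        rw [norm_mul, norm_mul, Real.norm_eq_abs, Real.norm_eq_abs, Real.norm_eq_abs,
          abs_of_nonneg (hκ.mem x).1]
        have e1 := Vh_abs h0 U01 (t, x)
        have e2 : |dl h (fun q => η (U q)) (t, x)| ≤ 2 * E :=
          (dl_abs _ _ _).trans (by linarith [hη.b0 _ (U01 (t, x + h)), hη.b0 _ (U01 (t, x))])
        calc _ ≤ 1 * h * (2 * E) := by gcongr; exact (hκ.mem x).2
          _ = _ := by ring)
    rw [Real.volume_real_Icc_of_le (by linarith)] at this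
    refine this.trans (le_of_eq ?_)
    ring
  have b2 : |∫ p in Rect a b R, I2 p| ≤ ∫ p in Rect a b R,
        h * (K * |dl h (efl f η' η'' U P) p| + |dl h (epr f η'' U P (pxF U)) p|) := by
    rw [← Real.norm_eq_abs]
    refine norm_integral_le_of_norm_le (f := I2) i3 (ae_of_all _ fun p => ?_)
    have e1 := Vh_abs h0 U01 p
    rw [Real.norm_eq_abs]
    refine (abs_add_le _ _).trans ?_
    rw [abs_mul, abs_mul, abs_mul, abs_mul, abs_of_nonneg (hκ.mem p.2).1]
    calc _ ≤ K * h * |dl h (efl f η' η'' U P) p| + 1 * h * |dl h (epr f η'' U P (pxF U)) p| := by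
          gcongr
          · exact hκ.dbd _
          · exact (hκ.mem p.2).2
      _ = _ := by ring
  rw [integral_add i1 i2] at main
  have := bd a
  have := bd b
  rw [abs_le] at *
  constructor <;> linarith

end

/-! ### Interaction inequality for weak solutions -/

section
variable {η η' η'' f κ : ℝ → ℝ} {E Cf a b R h K : ℝ} {u w Φ : ℝ × ℝ → ℝ}
  {U Ph : ℕ → ℝ × ℝ → ℝ} {G : ℝ × ℝ → ℝ}

lemma efl_abs (hη : Ent η η' η'' E) (hCf : ∀ v ∈ Icc (0:ℝ) 1, |f v| ≤ Cf) {V P : ℝ × ℝ → ℝ}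
    {p : ℝ × ℝ} (hV : V p ∈ Icc (0:ℝ) 1) :
    |efl f η' η'' V P p| ≤ E * (|P p| + Cf) := by
  have hC0 : 0 ≤ Cf := (abs_nonneg _).trans (hCf 0 (by simp))
  have h1 : |prim (fun v => f v * η'' v) (V p)| ≤ Cf * E := by
    refine prim_bound (fun v hv => ?_) hV
    rw [abs_mul]
    exact mul_le_mul (hCf v hv) (hη.b2 v hv) (abs_nonneg _) hC0
  have h2 : |P p * η' (V p)| ≤ |P p| * E := by
    rw [abs_mul]; exact mul_le_mul_of_nonneg_left (hη.b1 _ hV) (abs_nonneg _)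
  refine (abs_sub _ _).trans ?_
  linarith

/-- The interaction inequality for finite-energy solutions. -/
lemma inter_lim (hA : Approx a b (R + 1) u w Φ U Ph G) (hab : a ≤ b) (hR : 0 ≤ R) (h0 : 0 ≤ h)
    (h1 : h ≤ 1) (hκ : Cut κ R K) (hf : Continuous f) (hCf : ∀ v ∈ Icc (0:ℝ) 1, |f v| ≤ Cf)
    (hη : Ent η η' η'' E) :
    |∫ p in Rect a b R, κ p.2 * (- dl h Φ p * dl h (fun q => η (u q)) p +
        dl h u p * dl h (efl f η' η'' u Φ) p)| ≤
      h * (8 * R * E) + ∫ p in Rect a b R,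
        h * (K * |dl h (efl f η' η'' u Φ) p| + |dl h (epr f η'' u Φ w) p|) := by
  have hC0 : 0 ≤ Cf := (abs_nonneg _).trans (hCf 0 (by simp))
  have hηc := hη.c0.continuous
  have hη1 := hη.c1.continuous
  have hη2 := hη.c2
  have hg : Continuous fun v => f v * η'' v := hf.mul hη2
  have hprc := (prim_contDiff hg).continuous
  have hκc := hκ.sm.continuous
  have hE := hη.nn
  have hK : 0 ≤ K := (abs_nonneg _).trans (hκ.dbd 0)
  have dlc : ∀ {g : ℝ × ℝ → ℝ}, Continuous g → Continuous (dl h g) := by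
    intro g hg; unfold dl; fun_prop
  have cefl : ∀ n, Continuous (efl f η' η'' (U n) (Ph n)) := by
    intro n
    have c1 := (hA.Us n).continuous
    have c2 := (hA.Ps n).continuous
    unfold efl; fun_prop
  have cepr : ∀ n, Continuous (epr f η'' (U n) (Ph n) (pxF (U n))) := by
    intro n
    have c1 := (hA.Us n).continuous
    have c2 := (hA.Ps n).continuous
    have c3 := cont_pxF (hA.U1 n)
    unfold epr; fun_prop
  have hGi : IntegrableOn G (Rect a b R) := hA.Gi.mono_set (rect_succ a b R)
  have hGs : IntegrableOn (fun p => G (p.1, p.2 + h)) (Rect a b R) := shift_integrable h0 h1 hA.Gi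
  have ae1 := ae_restrict_of_ae_restrict_of_subset (rect_succ a b R) hA.conv
  have ae2 := shift_ae (R := R) h0 h1 hA.conv
  have Pb : ∀ {P g : ℝ}, P ^ 2 ≤ g → |P| ≤ 1 + g := fun {P g} hP => by
    nlinarith [sq_nonneg (|P| - 1), sq_abs P, abs_nonneg P]
  have eb : ∀ {n : ℕ} {p : ℝ × ℝ}, Ph n p ^ 2 ≤ G p →
      |efl f η' η'' (U n) (Ph n) p| ≤ E * (1 + Cf + G p) := by
    intro n p hp
    refine (efl_abs hη hCf (hA.U01 n p)).trans ?_
    have := Pb hp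
    exact mul_le_mul_of_nonneg_left (by linarith) hE
  have rb : ∀ {n : ℕ} {p : ℝ × ℝ}, pxF (U n) p ^ 2 ≤ G p ∧ Ph n p ^ 2 ≤ G p →
      |epr f η'' (U n) (Ph n) (pxF (U n)) p| ≤ E * (2 * G p + Cf ^ 2) := by
    intro n p hp
    unfold epr
    rw [abs_mul, abs_mul]
    have e1 : |Ph n p - f (U n p)| ≤ |Ph n p| + Cf :=
      (abs_sub _ _).trans (by linarith [hCf _ (hA.U01 n p)])
    calc _ ≤ (|Ph n p| + Cf) * E * |pxF (U n) p| := by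
          gcongr; exact hη.b2 _ (hA.U01 n p)
      _ = E * ((|Ph n p| + Cf) * |pxF (U n) p|) := by ring
      _ ≤ _ := by
        gcongr
        nlinarith [sq_nonneg (|Ph n p| - |pxF (U n) p|), sq_nonneg (Cf - |pxF (U n) p|),
          sq_abs (Ph n p), sq_abs (pxF (U n) p), hp.1, hp.2, sq_nonneg Cf]
  have cefl' : ∀ {p : ℝ × ℝ}, Tendsto (fun n => U n p) atTop (𝓝 (u p)) →
      Tendsto (fun n => Ph n p) atTop (𝓝 (Φ p)) →
      Tendsto (fun n => efl f η' η'' (U n) (Ph n) p) atTop (𝓝 (efl f η' η'' u Φ p)) := by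
    intro p t1 t3
    exact (t3.mul ((hη1.tendsto _).comp t1)).sub ((hprc.tendsto _).comp t1)
  have cepr' : ∀ {p : ℝ × ℝ}, Tendsto (fun n => U n p) atTop (𝓝 (u p)) →
      Tendsto (fun n => pxF (U n) p) atTop (𝓝 (w p)) →
      Tendsto (fun n => Ph n p) atTop (𝓝 (Φ p)) →
      Tendsto (fun n => epr f η'' (U n) (Ph n) (pxF (U n)) p) atTop (𝓝 (epr f η'' u Φ w p)) := by
    intro p t1 t2 t3
    exact ((t3.sub ((hf.tendsto _).comp t1)).mul ((hη2.tendsto _).comp t1)).mul t2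
  have L1 : Tendsto (fun n => ∫ p in Rect a b R, κ p.2 * (- dl h (Ph n) p *
      dl h (fun q => η (U n q)) p + dl h (U n) p * dl h (efl f η' η'' (U n) (Ph n)) p)) atTop
      (𝓝 (∫ p in Rect a b R, κ p.2 * (- dl h Φ p * dl h (fun q => η (u q)) p +
        dl h u p * dl h (efl f η' η'' u Φ) p))) := by
    refine tendsto_integral_of_dominated_convergence
      (fun p => (2 * E) * ((1 + G p) + (1 + G (p.1, p.2 + h))) +
        E * ((1 + Cf + G p) + (1 + Cf + G (p.1, p.2 + h)))) (fun n => ?_) ?_ (fun n => ?_) ?_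
    · have c1 := dlc (hA.Us n).continuous
      have c2 := dlc (hA.Ps n).continuous
      have c3 := dlc (cefl n)
      have c4 := dlc (hηc.comp (hA.Us n).continuous)
      apply Continuous.aestronglyMeasurable
      exact (hκc.comp continuous_snd).mul ((c2.neg.mul c4).add (c1.mul c3))
    · exact ((((rect_const a b R 1).add hGi).add ((rect_const a b R 1).add hGs)).const_mul _).add
        ((((rect_const a b R (1 + Cf)).add hGi).add
          ((rect_const a b R (1 + Cf)).add hGs)).const_mul _)
    · filter_upwards [ae1, ae2] with p hp hq
      have g1 := hp.2.2.2 n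
      have g2 := hq.2.2.2 n
      have b1 : |dl h (Ph n) p| ≤ (1 + G p) + (1 + G (p.1, p.2 + h)) :=
        (dl_abs _ _ _).trans (by linarith [Pb g1.2, Pb g2.2])
      have b2 : |dl h (fun q => η (U n q)) p| ≤ 2 * E :=
        (dl_abs _ _ _).trans (by
          linarith [hη.b0 _ (hA.U01 n (p.1, p.2 + h)), hη.b0 _ (hA.U01 n p)])
      have b3 : |dl h (U n) p| ≤ 1 := by
        have e1 := hA.U01 n (p.1, p.2 + h)
        have e2 := hA.U01 n p
        unfold dl; rw [abs_le]; constructor <;> linarith [e1.1, e1.2, e2.1, e2.2]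
      have b4 : |dl h (efl f η' η'' (U n) (Ph n)) p| ≤
          E * ((1 + Cf + G p) + (1 + Cf + G (p.1, p.2 + h))) :=
        (dl_abs _ _ _).trans (by linarith [eb g1.2, eb g2.2])
      rw [Real.norm_eq_abs, abs_mul, abs_of_nonneg (hκ.mem p.2).1]
      refine (mul_le_of_le_one_left (abs_nonneg _) (hκ.mem p.2).2).trans
        ((abs_add_le _ _).trans (add_le_add ?_ ?_))
      · rw [abs_mul, abs_neg, mul_comm]
        exact mul_le_mul b2 b1 (abs_nonneg _) (by positivity)
      · rw [abs_mul]
        exact (mul_le_of_le_one_left (abs_nonneg _) b3).trans b4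
    · filter_upwards [ae1, ae2] with p hp hq
      obtain ⟨t1, t2, t3, -⟩ := hp
      obtain ⟨s1, s2, s3, -⟩ := hq
      exact (((s3.sub t3).neg.mul (((hηc.tendsto _).comp s1).sub ((hηc.tendsto _).comp t1))).add
        ((s1.sub t1).mul ((cefl' s1 s3).sub (cefl' t1 t3)))).const_mul _
  have L2 : Tendsto (fun n => ∫ p in Rect a b R, h * (K * |dl h (efl f η' η'' (U n) (Ph n)) p| +
      |dl h (epr f η'' (U n) (Ph n) (pxF (U n))) p|)) atTop
      (𝓝 (∫ p in Rect a b R, h * (K * |dl h (efl f η' η'' u Φ) p| +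
        |dl h (epr f η'' u Φ w) p|))) := by
    refine tendsto_integral_of_dominated_convergence
      (fun p => h * (K * (E * ((1 + Cf + G p) + (1 + Cf + G (p.1, p.2 + h)))) +
        E * ((2 * G p + Cf ^ 2) + (2 * G (p.1, p.2 + h) + Cf ^ 2)))) (fun n => ?_) ?_ (fun n => ?_) ?_
    · have c3 := dlc (cefl n)
      have c4 := dlc (cepr n)
      apply Continuous.aestronglyMeasurable
      fun_prop
    · exact (((((((rect_const a b R (1 + Cf)).add hGi).add
          ((rect_const a b R (1 + Cf)).add hGs)).const_mul E).const_mul K).add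
        (((((hGi.const_mul 2).add (rect_const a b R (Cf ^ 2))).add
          ((hGs.const_mul 2).add (rect_const a b R (Cf ^ 2)))).const_mul E)))).const_mul h
    · filter_upwards [ae1, ae2] with p hp hq
      have g1 := hp.2.2.2 n
      have g2 := hq.2.2.2 n
      have b4 : |dl h (efl f η' η'' (U n) (Ph n)) p| ≤
          E * ((1 + Cf + G p) + (1 + Cf + G (p.1, p.2 + h))) :=
        (dl_abs _ _ _).trans (by linarith [eb g1.2, eb g2.2])
      have b5 : |dl h (epr f η'' (U n) (Ph n) (pxF (U n))) p| ≤
          E * ((2 * G p + Cf ^ 2) + (2 * G (p.1, p.2 + h) + Cf ^ 2)) :=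
        (dl_abs _ _ _).trans (by linarith [rb g1, rb g2])
      rw [Real.norm_eq_abs, abs_of_nonneg (by positivity)]
      gcongr
    · filter_upwards [ae1, ae2] with p hp hq
      obtain ⟨t1, t2, t3, -⟩ := hp
      obtain ⟨s1, s2, s3, -⟩ := hq
      exact ((((cefl' s1 s3).sub (cefl' t1 t3)).abs.const_mul K).add
        ((cepr' s1 s2 s3).sub (cepr' t1 t2 t3)).abs).const_mul h
  exact le_of_tendsto_of_tendsto' L1.abs (L2.const_add _) fun n =>
    inter_smooth hab hR h0 h1 (hA.U1 n) (hA.P1 n) (hA.eq n) (hA.U01 n) hκ hf hη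

/-- Increments are averages of the derivative, by Jensen's inequality in `L²`. -/
lemma dl_sq_smooth (h0 : 0 ≤ h) (h1 : h ≤ 1) {V : ℝ × ℝ → ℝ} (hV : ContDiff ℝ 1 V) :
    ∫ p in Rect a b R, dl h V p ^ 2 ≤ h ^ 2 * ∫ p in Rect a b (R + 1), pxF V p ^ 2 := by
  have hc := cont_pxF hV
  have hVc := hV.continuous
  have step : ∀ p, dl h V p ^ 2 ≤ h * ∫ y in Icc 0 h, pxF V (p.1, p.2 + y) ^ 2 := by
    intro p
    rcases h0.eq_or_lt with rfl | hpos
    · simp [dl]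
    rw [← int_pxF h hV p, intervalIntegral.integral_of_le h0, ← integral_Icc_eq_integral_Ioc]
    have i0 : IntegrableOn (fun _ : ℝ => h⁻¹) (Icc 0 h) :=
      integrableOn_const isCompact_Icc.measure_lt_top.ne
    have := (sq_integral_le (μ := volume.restrict (Icc 0 h)) (ρ := fun _ => h⁻¹)
      (h := fun y => pxF V (p.1, p.2 + y)) (fun _ => by positivity) i0
      (by
        rw [setIntegral_const, Real.volume_real_Icc_of_le h0]
        simp [hpos.ne']) (Continuous.aestronglyMeasurable (by fun_prop))
      ((Continuous.continuousOn (by fun_prop)).integrableOn_compact isCompact_Icc)).2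
    rw [integral_const_mul, integral_const_mul] at this
    have e : (∫ y in Icc 0 h, pxF V (p.1, p.2 + y)) ^ 2 =
      h ^ 2 * (h⁻¹ * ∫ y in Icc 0 h, pxF V (p.1, p.2 + y)) ^ 2 := by field_simp
    rw [e]
    calc _ ≤ h ^ 2 * (h⁻¹ * ∫ y in Icc 0 h, pxF V (p.1, p.2 + y) ^ 2) := by gcongr
      _ = _ := by field_simp
  have hInt : Integrable (Function.uncurry fun (p : ℝ × ℝ) (y : ℝ) => pxF V (p.1, p.2 + y) ^ 2)
      ((volume.restrict (Rect a b R)).prod (volume.restrict (Icc 0 h))) := by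
    rw [Measure.prod_restrict]
    refine (Continuous.continuousOn ?_).integrableOn_compact
      ((rect_compact a b R).prod isCompact_Icc)
    unfold Function.uncurry; fun_prop
  calc ∫ p in Rect a b R, dl h V p ^ 2
      ≤ ∫ p in Rect a b R, h * ∫ y in Icc 0 h, pxF V (p.1, p.2 + y) ^ 2 := by
        refine integral_mono ?_ (hInt.integral_prod_left.const_mul h) step
        refine (Continuous.continuousOn ?_).integrableOn_compact (rect_compact a b R)
        unfold dl; fun_prop
    _ = h * ∫ y in Icc 0 h, ∫ p in Rect a b R, pxF V (p.1, p.2 + y) ^ 2 := by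
        rw [integral_const_mul, integral_integral_swap hInt]
    _ ≤ h * ∫ y in Icc 0 h, ∫ p in Rect a b (R + 1), pxF V p ^ 2 := by
        gcongr 1
        refine setIntegral_mono_on hInt.integral_prod_right
          (integrableOn_const isCompact_Icc.measure_lt_top.ne) measurableSet_Icc fun y hy => ?_
        exact shift_le (g := fun p => pxF V p ^ 2) hy.1 (hy.2.trans h1)
          ((Continuous.continuousOn (by fun_prop)).integrableOn_compact (rect_compact _ _ _))
          fun p => sq_nonneg _
    _ = _ := by
        rw [setIntegral_const, Real.volume_real_Icc_of_le h0]; simp; ring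

/-- Increments of `u` are controlled by its weak derivative. -/
lemma dl_sq (hA : Approx a b (R + 1) u w Φ U Ph G) (h0 : 0 ≤ h) (h1 : h ≤ 1) :
    ∫ p in Rect a b R, dl h u p ^ 2 ≤ h ^ 2 * ∫ p in Rect a b (R + 1), w p ^ 2 := by
  have ae1 := ae_restrict_of_ae_restrict_of_subset (rect_succ a b R) hA.conv
  have ae2 := shift_ae (R := R) h0 h1 hA.conv
  have L1 : Tendsto (fun n => ∫ p in Rect a b R, dl h (U n) p ^ 2) atTop
      (𝓝 (∫ p in Rect a b R, dl h u p ^ 2)) := by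
    refine tendsto_integral_of_dominated_convergence (fun p => 1) (fun n => ?_)
      (rect_const _ _ _ _) (fun n => ae_of_all _ fun p => ?_) ?_
    · have := (hA.Us n).continuous
      apply Continuous.aestronglyMeasurable
      unfold dl; fun_prop
    · have e1 := hA.U01 n (p.1, p.2 + h)
      have e2 := hA.U01 n p
      rw [Real.norm_eq_abs, abs_of_nonneg (sq_nonneg _)]
      unfold dl
      rw [sq_le_one_iff_abs_le_one, abs_le]
      constructor <;> linarith [e1.1, e1.2, e2.1, e2.2]
    · filter_upwards [ae1, ae2] with p hp hq
      exact (hq.1.sub hp.1).pow 2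
  have L2 : Tendsto (fun n => ∫ p in Rect a b (R + 1), pxF (U n) p ^ 2) atTop
      (𝓝 (∫ p in Rect a b (R + 1), w p ^ 2)) := by
    refine tendsto_integral_of_dominated_convergence G (fun n => ?_)
      hA.Gi (fun n => ?_) ?_
    · have := cont_pxF (hA.U1 n)
      apply Continuous.aestronglyMeasurable
      fun_prop
    · filter_upwards [hA.conv] with p hp
      rw [Real.norm_eq_abs, abs_of_nonneg (sq_nonneg _)]
      exact (hp.2.2.2 n).1
    · filter_upwards [hA.conv] with p hp
      exact hp.2.1.pow 2
  exact le_of_tendsto_of_tendsto' L1 (L2.const_mul _) fun n => dl_sq_smooth h0 h1 (hA.U1 n)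

end

/-! ### Interaction estimate in terms of the dissipation -/

section
variable {η η' η'' f κ : ℝ → ℝ} {E Cf a b R h K T ε C : ℝ} {u w Φ : ℝ × ℝ → ℝ}

/-- The dissipation density `ε w² + J² / ε`, where `J = f(u) - Φ`. -/
def dis (f : ℝ → ℝ) (ε : ℝ) (u w Φ : ℝ × ℝ → ℝ) (p : ℝ × ℝ) : ℝ :=
  ε * w p ^ 2 + (f (u p) - Φ p) ^ 2 / ε

lemma dis_nonneg (hε : 0 < ε) (p : ℝ × ℝ) : 0 ≤ dis f ε u w Φ p := by unfold dis; positivity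

lemma Sol.sub_rect (ha : 0 ≤ a) (hb : b ≤ T) (R : ℝ) : Rect a b R ⊆ Icc 0 T ×ˢ Icc (-R) R :=
  Set.prod_mono (Icc_subset_Icc ha hb) le_rfl

lemma Sol.w2i (hs : Sol T u w Φ) (ha : 0 ≤ a) (hb : b ≤ T) (hR : 0 < R) :
    IntegrableOn (fun p => w p ^ 2) (Rect a b R) :=
  (hs.w2.2 R hR).mono_set (Sol.sub_rect ha hb R)

lemma Sol.J2i (hs : Sol T u w Φ) (ha : 0 ≤ a) (hb : b ≤ T) (hR : 0 < R) (hf : Continuous f)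
    (hCf : ∀ v ∈ Icc (0:ℝ) 1, |f v| ≤ Cf) :
    IntegrableOn (fun p => (f (u p) - Φ p) ^ 2) (Rect a b R) := by
  have h1 : IntegrableOn (fun p => Φ p ^ 2) (Rect a b R) :=
    (hs.Φ2.2 R hR).mono_set (Sol.sub_rect ha hb R)
  refine Integrable.mono' ((rect_const a b R (2 * Cf ^ 2)).add (h1.const_mul 2)) ?_
    (ae_of_all _ fun p => ?_)
  · exact (((hf.measurable.comp hs.um).sub hs.Φ2.1).pow_const 2).aestronglyMeasurable
  · rw [Real.norm_eq_abs, abs_of_nonneg (sq_nonneg _)]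
    have := sq_le_sq' (neg_le_of_abs_le (hCf _ (hs.u01 p))) (le_of_abs_le (hCf _ (hs.u01 p)))
    simp only [Pi.add_apply]
    nlinarith [sq_nonneg (f (u p) + Φ p)]

lemma Sol.disi (hs : Sol T u w Φ) (ha : 0 ≤ a) (hb : b ≤ T) (hR : 0 < R) (hf : Continuous f)
    (hCf : ∀ v ∈ Icc (0:ℝ) 1, |f v| ≤ Cf) :
    IntegrableOn (dis f ε u w Φ) (Rect a b R) :=
  ((hs.w2i ha hb hR).const_mul ε).add ((hs.J2i ha hb hR hf hCf).div_const ε)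

/-- The entropy flux `q` associated with `η`, i.e. `q' = f' η'`, written without derivatives
of `f`. -/
def qfl (f η' η'' : ℝ → ℝ) (v : ℝ) : ℝ := f v * η' v - prim (fun s => f s * η'' s) v

lemma Ent.lip (hη : Ent η η' η'' E) {x y : ℝ} (hx : x ∈ Icc (0:ℝ) 1) (hy : y ∈ Icc (0:ℝ) 1) :
    |η x - η y| ≤ E * |x - y| :=
  (convex_Icc (0:ℝ) 1).norm_image_sub_le_of_norm_hasDerivWithin_le
    (fun v _ => (hη.d1 v).hasDerivWithinAt) hη.b1 hy hx

/-- The interaction estimate: the determinant of the increments of `(u, f(u))` and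
`(η(u), q(u))` has integral of order `h`, uniformly in terms of the total dissipation. -/
lemma inter_est (hs : Sol T u w Φ) (ha : 0 < a) (hab : a ≤ b) (hb : b < T) (hR : 0 < R)
    (h0 : 0 < h) (h1 : h ≤ 1) (hε : 0 < ε) (hε1 : ε ≤ 1) (hκ : Cut κ R K) (hf : Continuous f)
    (hCf : ∀ v ∈ Icc (0:ℝ) 1, |f v| ≤ Cf) (hη : Ent η η' η'' E)
    (hS : ∫ p in Rect a b (R + 1), dis f ε u w Φ p ≤ C) :
    |∫ p in Rect a b R, κ p.2 * (dl h u p * dl h (fun q => qfl f η' η'' (u q)) p -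
      dl h (fun q => f (u q)) p * dl h (fun q => η (u q)) p)| ≤
    h * (8 * R * E + (K * E * (4 * Cf + 2) * (T * (2 * R)) + (K * E + E) * (2 * C)) +
      4 * E * C) := by
  have hC0 : 0 ≤ Cf := (abs_nonneg _).trans (hCf 0 (by simp))
  have hE := hη.nn
  have hK : 0 ≤ K := (abs_nonneg _).trans (hκ.dbd 0)
  obtain ⟨U, Ph, G, hA⟩ := exists_approx hs ha hb (by linarith : 0 < R + 1)
  have hI := inter_lim hA hab hR.le h0.le h1 hκ hf hCf hη
  have hD := dl_sq (h := h) hA h0.le h1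
  set S := dis f ε u w Φ with hSdef
  have hSn : ∀ p, 0 ≤ S p := dis_nonneg hε
  have hSi : IntegrableOn S (Rect a b (R + 1)) := hs.disi ha.le hb.le (by linarith) hf hCf
  have hSs := shift_integrable h0.le h1 hSi
  have hSs2 := shift_le h0.le h1 hSi hSn
  have hSR : IntegrableOn S (Rect a b R) := hSi.mono_set (rect_succ a b R)
  have hSR2 : ∫ p in Rect a b R, S p ≤ ∫ p in Rect a b (R + 1), S p :=
    setIntegral_mono_set hSi (ae_of_all _ fun p => hSn _) (rect_succ a b R).eventuallyLE
  set W : ℝ × ℝ → ℝ := fun p => S p + S (p.1, p.2 + h) with hW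
  have hWi : IntegrableOn W (Rect a b R) := hSR.add hSs
  have hW2 : ∫ p in Rect a b R, W p ≤ 2 * C := by
    rw [hW, integral_add hSR hSs]; linarith
  have hV : volume.real (Rect a b R) ≤ T * (2 * R) := by
    rw [rect_vol hab hR.le]
    gcongr; linarith
  have mdl : ∀ {g : ℝ × ℝ → ℝ}, Measurable g → Measurable (dl h g) := by
    intro g hg
    exact (hg.comp (shift_emb h).measurable).sub hg
  have hηc := hη.c0.continuous
  have hη1 := hη.c1.continuous
  have hη2 := hη.c2
  have hg : Continuous fun v => f v * η'' v := hf.mul hη2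
  have hprc := (prim_contDiff hg).continuous
  have hqc : Continuous (qfl f η' η'') := by unfold qfl; fun_prop
  have mu := hs.um
  have mΦ := hs.Φ2.1
  have mκ : Measurable fun p : ℝ × ℝ => κ p.2 := hκ.sm.continuous.measurable.comp measurable_snd
  set J : ℝ × ℝ → ℝ := fun p => f (u p) - Φ p with hJ
  have mJ : Measurable J := (hf.measurable.comp mu).sub mΦ
  have mJη : Measurable fun p => J p * η' (u p) := mJ.mul (hη1.measurable.comp mu)
  have JS : ∀ p, |J p| ≤ 1 + S p := by
    intro p
    have e1 : J p ^ 2 ≤ J p ^ 2 / ε := by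
      rw [le_div_iff₀ hε]; nlinarith [sq_nonneg (J p)]
    have e2 : 0 ≤ ε * w p ^ 2 := by positivity
    have : J p ^ 2 ≤ S p := by
      simp only [hSdef, dis]; simp only [hJ] at e1 ⊢; linarith
    nlinarith [sq_abs (J p), sq_nonneg (|J p| - 1), abs_nonneg (J p)]
  -- Replacing `Φ` by `f(u)` turns the left-hand side of `inter_lim` into the target `tgt`, up to
  -- the remainder `rem`, which is quadratic in the increments of `u` and `J`.
  set tgt : ℝ × ℝ → ℝ := fun p => κ p.2 * (dl h u p * dl h (fun q => qfl f η' η'' (u q)) p -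
      dl h (fun q => f (u q)) p * dl h (fun q => η (u q)) p) with htgt
  set rem : ℝ × ℝ → ℝ := fun p => κ p.2 * (dl h J p * dl h (fun q => η (u q)) p -
      dl h u p * dl h (fun q => J q * η' (u q)) p) with hrem
  have split : ∀ p, κ p.2 * (- dl h Φ p * dl h (fun q => η (u q)) p +
        dl h u p * dl h (efl f η' η'' u Φ) p) = tgt p + rem p := by
    intro p
    simp only [htgt, hrem, hJ, dl, efl, qfl]
    ring
  have u1 : ∀ p, |dl h u p| ≤ 1 := by
    intro p
    have e1 := hs.u01 (p.1, p.2 + h)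
    have e2 := hs.u01 p
    unfold dl; rw [abs_le]; constructor <;> linarith [e1.1, e1.2, e2.1, e2.2]
  have η2 : ∀ p, |dl h (fun q => η (u q)) p| ≤ E * |dl h u p| := fun p =>
    hη.lip (hs.u01 _) (hs.u01 _)
  have itgt : IntegrableOn tgt (Rect a b R) := by
    obtain ⟨B, hB⟩ := isCompact_Icc.exists_bound_of_continuousOn (s := Icc (0:ℝ) 1) hqc.continuousOn
    refine Integrable.mono' (rect_const a b R (1 * (2 * B) + (2 * Cf) * (E * 1))) ?_
      (ae_of_all _ fun p => ?_)
    · exact (mκ.mul (((mdl mu).mul (mdl (hqc.measurable.comp mu))).sub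
        ((mdl (hf.measurable.comp mu)).mul (mdl (hηc.measurable.comp mu))))).aestronglyMeasurable
    · have q1 : |dl h (fun q => qfl f η' η'' (u q)) p| ≤ 2 * B :=
        (dl_abs _ _ _).trans (by
          have e1 := hB _ (hs.u01 p)
          have e2 := hB _ (hs.u01 (p.1, p.2 + h))
          rw [Real.norm_eq_abs] at e1 e2
          linarith)
      have f1 : |dl h (fun q => f (u q)) p| ≤ 2 * Cf :=
        (dl_abs _ _ _).trans (by linarith [hCf _ (hs.u01 p), hCf _ (hs.u01 (p.1, p.2 + h))])
      have n1 := (η2 p).trans (mul_le_mul_of_nonneg_left (u1 p) hE)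
      rw [Real.norm_eq_abs, abs_mul, abs_of_nonneg (hκ.mem p.2).1]
      refine (mul_le_of_le_one_left (abs_nonneg _) (hκ.mem p.2).2).trans
        ((abs_sub _ _).trans (add_le_add ?_ ?_))
      · rw [abs_mul]; exact mul_le_mul (u1 p) q1 (abs_nonneg _) zero_le_one
      · rw [abs_mul]; exact mul_le_mul f1 n1 (abs_nonneg _) (by positivity)
  have remb : ∀ p, |rem p| ≤ h * E * (2 * ε / h ^ 2 * dl h u p ^ 2 + W p) := by
    intro p
    have e1 : |dl h J p| ≤ |J (p.1, p.2 + h)| + |J p| := dl_abs _ _ _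
    have e2 : |dl h (fun q => J q * η' (u q)) p| ≤ E * (|J (p.1, p.2 + h)| + |J p|) := by
      refine (dl_abs _ _ _).trans ?_
      rw [abs_mul, abs_mul]
      have k1 := mul_le_mul_of_nonneg_left (hη.b1 _ (hs.u01 (p.1, p.2 + h)))
        (abs_nonneg (J (p.1, p.2 + h)))
      have k2 := mul_le_mul_of_nonneg_left (hη.b1 _ (hs.u01 p)) (abs_nonneg (J p))
      linarith
    have am : ∀ q, 2 * |dl h u p| * |J q| ≤ h * (ε / h ^ 2 * dl h u p ^ 2 + S q) := by
      intro q
      have e0 : 0 ≤ ε * w q ^ 2 := by positivity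
      have : J q ^ 2 / ε ≤ S q := by simp only [hSdef, dis, hJ]; linarith
      have key : 2 * |dl h u p| * |J q| ≤ h * (ε / h ^ 2 * dl h u p ^ 2 + J q ^ 2 / ε) := by
        have : h * (ε / h ^ 2 * dl h u p ^ 2 + J q ^ 2 / ε) - 2 * |dl h u p| * |J q| =
          (ε * |dl h u p| - h * |J q|) ^ 2 / (h * ε) := by
          rw [← sq_abs (dl h u p), ← sq_abs (J q)]
          field_simp
          ring
        have : 0 ≤ (ε * |dl h u p| - h * |J q|) ^ 2 / (h * ε) := by positivity
        linarith
      refine key.trans ?_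
      gcongr
    rw [hrem]
    simp only
    rw [abs_mul, abs_of_nonneg (hκ.mem p.2).1]
    refine (mul_le_of_le_one_left (abs_nonneg _) (hκ.mem p.2).2).trans
      ((abs_sub _ _).trans ?_)
    rw [abs_mul, abs_mul]
    calc _ ≤ (|J (p.1, p.2 + h)| + |J p|) * (E * |dl h u p|) +
          |dl h u p| * (E * (|J (p.1, p.2 + h)| + |J p|)) := by
          gcongr; exact η2 p
      _ = E * (2 * |dl h u p| * |J (p.1, p.2 + h)| + 2 * |dl h u p| * |J p|) := by ring
      _ ≤ E * (h * (ε / h ^ 2 * dl h u p ^ 2 + S (p.1, p.2 + h)) +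
          h * (ε / h ^ 2 * dl h u p ^ 2 + S p)) := by
          exact mul_le_mul_of_nonneg_left (add_le_add (am _) (am _)) hE
      _ = _ := by simp only [hW]; ring
  have iu : IntegrableOn (fun p => dl h u p ^ 2) (Rect a b R) := by
    refine Integrable.mono' (rect_const a b R 1) ((mdl mu).pow_const 2).aestronglyMeasurable
      (ae_of_all _ fun p => ?_)
    rw [Real.norm_eq_abs, abs_of_nonneg (sq_nonneg _), sq_le_one_iff_abs_le_one]
    exact u1 p
  have ibd : IntegrableOn (fun p => h * E * (2 * ε / h ^ 2 * dl h u p ^ 2 + W p)) (Rect a b R) :=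
    ((iu.const_mul _).add hWi).const_mul _
  have mrem : Measurable rem := mκ.mul (((mdl mJ).mul (mdl (hηc.measurable.comp mu))).sub
        ((mdl mu).mul (mdl mJη)))
  have irem : IntegrableOn rem (Rect a b R) :=
    Integrable.mono' ibd mrem.aestronglyMeasurable (ae_of_all _ remb)
  have hw : ε * ∫ p in Rect a b (R + 1), w p ^ 2 ≤ C := by
    rw [← integral_const_mul]
    refine le_trans (integral_mono ((hs.w2i ha.le hb.le (by linarith)).const_mul ε) hSi fun p => ?_)
      hS
    simp only [hSdef, dis]
    have : 0 ≤ (f (u p) - Φ p) ^ 2 / ε := by positivity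
    linarith
  have brem : |∫ p in Rect a b R, rem p| ≤ h * (4 * E * C) := by
    rw [← Real.norm_eq_abs]
    refine (norm_integral_le_of_norm_le ibd (ae_of_all _ remb)).trans ?_
    rw [integral_const_mul, integral_add (iu.const_mul _) hWi, integral_const_mul]
    have e : 2 * ε / h ^ 2 * ∫ p in Rect a b R, dl h u p ^ 2 ≤ 2 * C := by
      calc _ ≤ 2 * ε / h ^ 2 * (h ^ 2 * ∫ p in Rect a b (R + 1), w p ^ 2) := by gcongr
        _ = 2 * (ε * ∫ p in Rect a b (R + 1), w p ^ 2) := by field_simp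
        _ ≤ _ := by linarith
    calc _ ≤ h * E * (2 * C + 2 * C) :=
          mul_le_mul_of_nonneg_left (add_le_add e hW2) (by positivity)
      _ = _ := by ring
  have bI : ∫ p in Rect a b R, h * (K * |dl h (efl f η' η'' u Φ) p| +
      |dl h (epr f η'' u Φ w) p|) ≤
      h * (K * E * (4 * Cf + 2) * (T * (2 * R)) + (K * E + E) * (2 * C)) := by
    have : ∀ p, h * (K * |dl h (efl f η' η'' u Φ) p| + |dl h (epr f η'' u Φ w) p|) ≤
        h * (K * E * (4 * Cf + 2) + (K * E + E) * W p) := by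
      intro p
      have e1 : ∀ q, |efl f η' η'' u Φ q| ≤ E * (2 * Cf + 1 + S q) := by
        intro q
        refine (efl_abs hη hCf (hs.u01 q)).trans (mul_le_mul_of_nonneg_left ?_ hE)
        have e : Φ q = f (u q) - J q := by simp [hJ]
        have := abs_sub (f (u q)) (J q)
        rw [e]
        linarith [JS q, hCf _ (hs.u01 q)]
      have e2 : ∀ q, |epr f η'' u Φ w q| ≤ E * S q := by
        intro q
        unfold epr
        have e : Φ q - f (u q) = - J q := by simp [hJ]
        have hS' : S q = ε * w q ^ 2 + J q ^ 2 / ε := rfl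
        rw [abs_mul, abs_mul, e, abs_neg]
        have key : 2 * (|J q| * |w q|) ≤ S q := by
          have : S q - 2 * (|J q| * |w q|) = (ε * |w q| - |J q|) ^ 2 / ε := by
            rw [hS', ← sq_abs (w q), ← sq_abs (J q)]
            field_simp
            ring
          have : 0 ≤ (ε * |w q| - |J q|) ^ 2 / ε := by positivity
          linarith
        calc _ ≤ |J q| * E * |w q| := by gcongr; exact hη.b2 _ (hs.u01 q)
          _ = E * (|J q| * |w q|) := by ring
          _ ≤ _ := by
            gcongr
            have : 0 ≤ |J q| * |w q| := by positivity
            linarith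
      have d1 := (dl_abs h (efl f η' η'' u Φ) p).trans (add_le_add (e1 _) (e1 _))
      have d2 := (dl_abs h (epr f η'' u Φ w) p).trans (add_le_add (e2 _) (e2 _))
      calc _ ≤ h * (K * (E * (2 * Cf + 1 + S (p.1, p.2 + h)) + E * (2 * Cf + 1 + S p)) +
            (E * S (p.1, p.2 + h) + E * S p)) := by gcongr
        _ = _ := by simp only [hW]; ring
    refine (integral_mono_of_nonneg
      (g := fun p => h * (K * E * (4 * Cf + 2) + (K * E + E) * W p))
      (ae_of_all _ fun p => by positivity)
      (((rect_const a b R _).add (hWi.const_mul _)).const_mul h) (ae_of_all _ this)).trans ?_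
    rw [integral_const_mul, integral_add (rect_const a b R _) (hWi.const_mul _),
      setIntegral_const, smul_eq_mul, integral_const_mul]
    have e : volume.real (Rect a b R) * (K * E * (4 * Cf + 2)) ≤
        K * E * (4 * Cf + 2) * (T * (2 * R)) := by
      rw [mul_comm]; gcongr
    exact mul_le_mul_of_nonneg_left (add_le_add e
      (mul_le_mul_of_nonneg_left hW2 (by positivity))) h0.le
  have tot : ∫ p in Rect a b R, κ p.2 * (- dl h Φ p * dl h (fun q => η (u q)) p +
        dl h u p * dl h (efl f η' η'' u Φ) p) =
      (∫ p in Rect a b R, tgt p) + ∫ p in Rect a b R, rem p := by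
    rw [← integral_add itgt irem]
    exact integral_congr_ae (ae_of_all _ split)
  rw [tot] at hI
  have := abs_sub ((∫ p in Rect a b R, tgt p) + ∫ p in Rect a b R, rem p)
    (∫ p in Rect a b R, rem p)
  rw [add_sub_cancel_right] at this
  calc _ ≤ _ := this
    _ ≤ _ := add_le_add (hI.trans (add_le_add le_rfl bI)) brem
    _ = _ := by ring

end

/-! ### Representation of the cost by a control -/

/-- A Riesz representation for a bounded functional given on a linear family of vectors. -/
lemma riesz_family {H ι : Type*} [NormedAddCommGroup H] [InnerProductSpace ℝ H] [CompleteSpace H]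
    [Nonempty ι] (v : ι → H) (ℓ : ι → ℝ) {A : ℝ} (hA : 0 ≤ A)
    (hlin : ∀ i j : ι, ∀ r s : ℝ, ∃ k, v k = r • v i + s • v j ∧ ℓ k = r * ℓ i + s * ℓ j)
    (hb : ∀ i, |ℓ i| ≤ A * ‖v i‖) :
    ∃ P : H, ‖P‖ ≤ A ∧ ∀ i, ℓ i = inner ℝ P (v i) := by
  let Γ : Submodule ℝ (H × ℝ) :=
    { carrier := range fun i => (v i, ℓ i)
      add_mem' := by
        rintro _ _ ⟨i, rfl⟩ ⟨j, rfl⟩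
        obtain ⟨k, h1, h2⟩ := hlin i j 1 1
        exact ⟨k, by simp [h1, h2]⟩
      zero_mem' := by
        obtain ⟨i⟩ := ‹Nonempty ι›
        obtain ⟨k, h1, h2⟩ := hlin i i 0 0
        exact ⟨k, by simp [h1, h2]⟩
      smul_mem' := by
        rintro r _ ⟨i, rfl⟩
        obtain ⟨k, h1, h2⟩ := hlin i i r 0
        exact ⟨k, by simp [h1, h2]⟩ }
  have hΓ : ∀ x ∈ Γ, |x.2| ≤ A * ‖x.1‖ := by
    rintro _ ⟨i, rfl⟩; exact hb i
  have hg : ∀ (x : H × ℝ) (_ : x ∈ Γ) (_ : x.fst = 0), x.snd = 0 := by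
    intro x hx h0
    have := hΓ x hx
    rw [h0, norm_zero, mul_zero] at this
    exact abs_nonpos_iff.1 this
  let F : Γ.toLinearPMap.domain →L[ℝ] ℝ := LinearMap.mkContinuous Γ.toLinearPMap.toFun A
    fun x => hΓ _ (Γ.mem_graph_toLinearPMap hg x)
  obtain ⟨g, hg1, hg2⟩ := exists_extension_norm_eq Γ.toLinearPMap.domain F
  refine ⟨(InnerProductSpace.toDual ℝ H).symm g, ?_, fun i => ?_⟩
  · rw [LinearIsometryEquiv.norm_map, hg2]
    exact LinearMap.mkContinuous_norm_le _ hA _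
  · rw [InnerProductSpace.toDual_symm_apply]
    have hi : (v i, ℓ i) ∈ Γ := ⟨i, rfl⟩
    have hd : v i ∈ Γ.toLinearPMap.domain := ⟨(v i, ℓ i), hi, rfl⟩
    have e1 := hg1 ⟨v i, hd⟩
    have e2 := Γ.mem_graph_toLinearPMap hg ⟨v i, hd⟩
    have e3 := hg _ (Γ.sub_mem hi e2) (by simp)
    rw [e1]
    simp only [Prod.snd_sub, sub_eq_zero] at e3
    exact e3

/-- Standing assumptions on the coefficients, extended to continuous functions on `ℝ`. -/
structure Coef (f D σ : ℝ → ℝ) (Cf c CD Cσ : ℝ) : Prop where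
  fc : Continuous f
  Dc : Continuous D
  σc : Continuous σ
  fb : ∀ v ∈ Icc (0:ℝ) 1, |f v| ≤ Cf
  c0 : 0 < c
  Db : ∀ v ∈ Icc (0:ℝ) 1, D v ∈ Icc c CD
  σb : ∀ v ∈ Icc (0:ℝ) 1, σ v ∈ Icc 0 Cσ

/-- The linear combination of two test functions. -/
def TTest.comb {T : ℝ} (φ ψ : TTest T) (r s : ℝ) : TTest T where
  toFun := fun p => r * φ.toFun p + s * ψ.toFun p
  smooth := (contDiff_const.mul φ.smooth).add (contDiff_const.mul ψ.smooth)
  cpt := (φ.cpt.mul_left (f := fun _ => r)).add (ψ.cpt.mul_left (f := fun _ => s))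
  supp := by
    intro p hp
    by_contra h
    have h1 : φ.toFun p = 0 := by by_contra h'; exact h (φ.supp h')
    have h2 : ψ.toFun p = 0 := by by_contra h'; exact h (ψ.supp h')
    exact hp (by simp [h1, h2])

section
variable {T : ℝ}

lemma TTest.diff (φ : TTest T) (p : ℝ × ℝ) : DifferentiableAt ℝ φ.toFun p :=
  (φ.smooth.differentiable (by simp)) p

lemma TTest.c1 (φ : TTest T) : ContDiff ℝ 1 φ.toFun :=
  φ.smooth.of_le (by exact_mod_cast le_top)

lemma TTest.comb_fderiv (φ ψ : TTest T) (r s : ℝ) (p v : ℝ × ℝ) :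
    fderiv ℝ (φ.comb ψ r s).toFun p v = r * fderiv ℝ φ.toFun p v + s * fderiv ℝ ψ.toFun p v := by
  have h := ((φ.diff p).hasFDerivAt.const_mul r).add ((ψ.diff p).hasFDerivAt.const_mul s)
  have := h.fderiv
  simp only [TTest.comb]
  erw [this]
  simp

lemma TTest.px_cpt (φ : TTest T) : HasCompactSupport (pxF φ.toFun) :=
  (φ.cpt.fderiv_apply ℝ (0, 1))

lemma TTest.pt_cpt (φ : TTest T) : HasCompactSupport (ptF φ.toFun) :=
  (φ.cpt.fderiv_apply ℝ (1, 0))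

lemma L2loc.pair_int {g k : ℝ × ℝ → ℝ} (hg : L2loc T g) (hk : Continuous k)
    (hc : HasCompactSupport k) :
    IntegrableOn (fun p => g p * k p) (Icc (0:ℝ) T ×ˢ (univ : Set ℝ)) := by
  obtain ⟨R, hR⟩ := hc.isCompact.isBounded.subset_closedBall (0 : ℝ × ℝ)
  obtain ⟨B, hB⟩ := hc.exists_bound_of_continuous hk
  have h1 : IntegrableOn (fun p => g p * k p) (Icc (0:ℝ) T ×ˢ Icc (-(|R| + 1)) (|R| + 1)) := by
    refine Integrable.mono' ((rect_const 0 T (|R| + 1) B).add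
      ((hg.2 (|R| + 1) (by positivity)).const_mul B)) (hg.1.mul hk.measurable).aestronglyMeasurable
      (ae_of_all _ fun p => ?_)
    have hB0 : 0 ≤ B := (norm_nonneg _).trans (hB p)
    rw [norm_mul, Real.norm_eq_abs]
    simp only [Pi.add_apply]
    have e : |g p| ≤ 1 + g p ^ 2 := by
      nlinarith [sq_nonneg (|g p| - 1), sq_abs (g p), abs_nonneg (g p)]
    calc _ ≤ (1 + g p ^ 2) * B := mul_le_mul e (hB p) (norm_nonneg _) (by positivity)
      _ = _ := by ring
  refine h1.of_forall_sdiff_eq_zero (measurableSet_Icc.prod MeasurableSet.univ) fun p hp => ?_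
  have : p ∉ tsupport k := by
    intro hp'
    have := hR hp'
    rw [Metric.mem_closedBall, dist_zero_right] at this
    have h2 : |p.2| ≤ R := (norm_snd_le p).trans this
    have h3 := abs_le.1 (h2.trans (le_abs_self R))
    exact hp.2 ⟨hp.1.1, by linarith [h3.1], by linarith [h3.2]⟩
  rw [image_eq_zero_of_notMem_tsupport this, mul_zero]

lemma L2loc.of_bdd {g : ℝ × ℝ → ℝ} (hg : Measurable g) {B : ℝ} (hB : ∀ p, |g p| ≤ B) :
    L2loc T g := by
  refine ⟨hg, fun R _ => ?_⟩
  refine Integrable.mono' (rect_const 0 T R (B ^ 2)) (hg.pow_const 2).aestronglyMeasurable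
    (ae_of_all _ fun p => ?_)
  rw [Real.norm_eq_abs, abs_of_nonneg (sq_nonneg _)]
  exact sq_le_sq' (neg_le_of_abs_le (hB p)) (le_of_abs_le (hB p))

lemma L2loc.bdd_mul {g m : ℝ × ℝ → ℝ} (hg : L2loc T g) (hm : Measurable m) {B : ℝ}
    (hB : ∀ p, |m p| ≤ B) : L2loc T fun p => m p * g p := by
  refine ⟨hm.mul hg.1, fun R hR => ?_⟩
  refine Integrable.mono' ((hg.2 R hR).const_mul (B ^ 2))
    ((hm.mul hg.1).pow_const 2).aestronglyMeasurable (ae_of_all _ fun p => ?_)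
  rw [Real.norm_eq_abs, abs_of_nonneg (sq_nonneg _), mul_pow]
  exact mul_le_mul_of_nonneg_right
    (sq_le_sq' (neg_le_of_abs_le (hB p)) (le_of_abs_le (hB p))) (sq_nonneg _)

lemma L2loc.add {g m : ℝ × ℝ → ℝ} (hg : L2loc T g) (hm : L2loc T m) :
    L2loc T fun p => g p + m p := by
  refine ⟨hg.1.add hm.1, fun R hR => ?_⟩
  refine Integrable.mono' (((hg.2 R hR).add (hm.2 R hR)).const_mul 2)
    ((hg.1.add hm.1).pow_const 2).aestronglyMeasurable (ae_of_all _ fun p => ?_)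
  rw [Real.norm_eq_abs, abs_of_nonneg (sq_nonneg _)]
  simp only [Pi.add_apply]
  nlinarith [sq_nonneg (g p - m p)]

lemma pair_lin {g k1 k2 : ℝ × ℝ → ℝ} (hg : L2loc T g) (h1 : Continuous k1)
    (c1 : HasCompactSupport k1) (h2 : Continuous k2) (c2 : HasCompactSupport k2) (r s : ℝ) :
    pair T g (fun p => r * k1 p + s * k2 p) = r * pair T g k1 + s * pair T g k2 := by
  unfold pair
  rw [← integral_const_mul, ← integral_const_mul, ← integral_add
    ((hg.pair_int h1 c1).const_mul r) ((hg.pair_int h2 c2).const_mul s)]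
  congr 1; ext p; ring

lemma pair_add {g m k : ℝ × ℝ → ℝ} (hg : L2loc T g) (hm : L2loc T m) (h1 : Continuous k)
    (c1 : HasCompactSupport k) :
    pair T (fun p => g p + m p) k = pair T g k + pair T m k := by
  unfold pair
  rw [← integral_add (hg.pair_int h1 c1) (hm.pair_int h1 c1)]
  congr 1; ext p; ring

lemma pair_smul (g k : ℝ × ℝ → ℝ) (r : ℝ) : pair T (fun p => r * g p) k = r * pair T g k := by
  unfold pair
  rw [← integral_const_mul]
  congr 1; ext p; ring

/-- A path of cost at most `M` solves `∂ₜu + ∂ₓΦ = 0` where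
`Φ = f(u) - ((ε/2) D(u) ∂ₓu - √σ(u) P)` for a control `P` with `‖P‖² ≤ 2εM`. -/
lemma cost_repr {f D σ : ℝ → ℝ} {Cf c CD Cσ ε M : ℝ} (hc : Coef f D σ Cf c CD Cσ) (hε : 0 < ε)
    (hM : 0 < M) (u : cU T) (hH : Heps f D σ T ε u ≤ ENNReal.ofReal M) :
    ∃ w P : ℝ × ℝ → ℝ, Measurable P ∧
      IntegrableOn (fun p => P p ^ 2) (Icc (0:ℝ) T ×ˢ (univ : Set ℝ)) ∧
      ∫ p in Icc (0:ℝ) T ×ˢ (univ : Set ℝ), P p ^ 2 ≤ 2 * ε * M ∧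
      Sol T u.toFun w (fun p => f (u.toFun p) - (ε / 2 * (D (u.toFun p) * w p) -
        √(σ (u.toFun p)) * P p)) := by
  have hI : Ieps f D σ T ε u ≤ ENNReal.ofReal (ε * M) := by
    have : ENNReal.ofReal ε * Heps f D σ T ε u = Ieps f D σ T ε u := by
      rw [Heps, ← mul_assoc, ← ENNReal.ofReal_mul hε.le, mul_inv_cancel₀ hε.ne',
        ENNReal.ofReal_one, one_mul]
    rw [← this, ENNReal.ofReal_mul hε.le]
    gcongr
  have hdx : hasDx T u.toFun := by
    by_contra h
    rw [Ieps, if_neg h] at hI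
    exact absurd hI (by simp)
  rw [Ieps, if_pos hdx] at hI
  set w := wDx T u.toFun with hw
  have hwd : L2loc T w ∧ HasWeakDx T u.toFun w := by
    rw [hw, wDx, dif_pos hdx]; exact hdx.choose_spec
  have hexp : ∀ φ : TTest T, IexprW f D σ T ε u.toFun w φ ≤ ε * M := fun φ =>
    (ENNReal.ofReal_le_ofReal_iff (by positivity)).1 ((le_iSup _ φ).trans hI)
  set v := u.toFun with hv
  have v01 : ∀ p, v p ∈ Icc (0:ℝ) 1 := u.mem01
  have mv : Measurable v := u.meas
  have Lu : L2loc T v := L2loc.of_bdd mv (B := 1) fun p => by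
    rw [abs_of_nonneg (v01 p).1]; exact (v01 p).2
  have Lf : L2loc T fun p => f (v p) :=
    L2loc.of_bdd (hc.fc.measurable.comp mv) fun p => hc.fb _ (v01 p)
  have Dab : ∀ p, |D (v p)| ≤ CD := fun p => by
    have := hc.Db _ (v01 p)
    rw [abs_of_nonneg (hc.c0.le.trans this.1)]; exact this.2
  have LD : L2loc T fun p => D (v p) * w p := hwd.1.bdd_mul (hc.Dc.measurable.comp mv) Dab
  have sab : ∀ p, |√(σ (v p))| ≤ √Cσ := fun p => by
    rw [abs_of_nonneg (Real.sqrt_nonneg _)]; exact Real.sqrt_le_sqrt (hc.σb _ (v01 p)).2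
  have ms : Measurable fun p => √(σ (v p)) := (hc.σc.measurable.comp mv).sqrt
  set μ : Measure (ℝ × ℝ) := volume.restrict (Icc (0:ℝ) T ×ˢ (univ : Set ℝ)) with hμ
  have kc : ∀ φ : TTest T, Continuous (pxF φ.toFun) := fun φ => cont_pxF φ.c1
  have tc : ∀ φ : TTest T, Continuous (ptF φ.toFun) := fun φ => cont_ptF φ.c1
  have mem : ∀ φ : TTest T, MemLp (fun p => √(σ (v p)) * pxF φ.toFun p) 2 μ := fun φ => by
    have h0 : MemLp (pxF φ.toFun) 2 μ := (kc φ).memLp_of_hasCompactSupport φ.px_cpt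
    refine h0.of_le_mul (c := √Cσ) (ms.mul (kc φ).measurable).aestronglyMeasurable
      (ae_of_all _ fun p => ?_)
    rw [norm_mul]
    exact mul_le_mul_of_nonneg_right (sab p) (norm_nonneg _)
  -- The cost is the supremum of `ℓ φ - ‖V φ‖² / 2`. Replacing `φ` by its multiples shows that
  -- `|ℓ φ| ≤ √(2εM) ‖V φ‖`, and Riesz's theorem then provides the control `P`.
  set ℓ : TTest T → ℝ := fun φ => - pair T v (ptF φ.toFun) - pair T (fun p => f (v p)) (pxF φ.toFun)
    + ε / 2 * pair T (fun p => D (v p) * w p) (pxF φ.toFun) with hℓ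
  set V : TTest T → Lp ℝ 2 μ := fun φ => (mem φ).toLp _ with hV
  have pxl : ∀ (φ ψ : TTest T) (r s : ℝ), pxF (φ.comb ψ r s).toFun =
      fun p => r * pxF φ.toFun p + s * pxF ψ.toFun p := fun φ ψ r s => by
    ext p; exact TTest.comb_fderiv φ ψ r s p (0, 1)
  have ptl : ∀ (φ ψ : TTest T) (r s : ℝ), ptF (φ.comb ψ r s).toFun =
      fun p => r * ptF φ.toFun p + s * ptF ψ.toFun p := fun φ ψ r s => by
    ext p; exact TTest.comb_fderiv φ ψ r s p (1, 0)
  have ℓlin : ∀ (φ ψ : TTest T) (r s : ℝ), ℓ (φ.comb ψ r s) = r * ℓ φ + s * ℓ ψ := by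
    intro φ ψ r s
    simp only [hℓ]
    rw [pxl, ptl, pair_lin Lu (tc φ) φ.pt_cpt (tc ψ) ψ.pt_cpt,
      pair_lin Lf (kc φ) φ.px_cpt (kc ψ) ψ.px_cpt, pair_lin LD (kc φ) φ.px_cpt (kc ψ) ψ.px_cpt]
    ring
  have Vlin : ∀ (φ ψ : TTest T) (r s : ℝ), V (φ.comb ψ r s) = r • V φ + s • V ψ := by
    intro φ ψ r s
    simp only [hV]
    rw [← MemLp.toLp_const_smul, ← MemLp.toLp_const_smul, ← MemLp.toLp_add]
    congr 1
    ext p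
    rw [pxl]
    simp only [Pi.add_apply, Pi.smul_apply, smul_eq_mul]
    ring
  have Vnorm : ∀ φ, ‖V φ‖ ^ 2 = pair T (fun p => σ (v p) * pxF φ.toFun p) (pxF φ.toFun) := by
    intro φ
    rw [← real_inner_self_eq_norm_sq, L2.inner_def, pair]
    refine integral_congr_ae ?_
    filter_upwards [(mem φ).coeFn_toLp] with p hp
    simp only [hV]
    rw [hp]
    simp only [RCLike.inner_apply, conj_trivial]
    have := Real.mul_self_sqrt (hc.σb _ (v01 p)).1
    linear_combination (pxF φ.toFun p) ^ 2 * this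
  have hIe : ∀ φ, IexprW f D σ T ε v w φ = ℓ φ - 1 / 2 * ‖V φ‖ ^ 2 := by
    intro φ; rw [Vnorm, IexprW]
  have bd : ∀ φ, |ℓ φ| ≤ √(2 * ε * M) * ‖V φ‖ := by
    intro φ
    have hq : ∀ r : ℝ, 0 ≤ (‖V φ‖ ^ 2 / 2) * (r * r) + (- ℓ φ) * r + ε * M := by
      intro r
      have := hexp (φ.comb φ r 0)
      rw [hIe, ℓlin, Vlin, zero_smul, add_zero, norm_smul, mul_pow, Real.norm_eq_abs, sq_abs] at this
      linarith
    have := discrim_le_zero hq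
    rw [discrim] at this
    refine abs_le_of_sq_le_sq ?_ (by positivity)
    rw [mul_pow, Real.sq_sqrt (by positivity)]
    nlinarith
  have : Nonempty (TTest T) := ⟨⟨0, contDiff_const, HasCompactSupport.zero, by simp⟩⟩
  obtain ⟨P, hP1, hP2⟩ := riesz_family V ℓ (Real.sqrt_nonneg (2 * ε * M))
    (fun φ ψ r s => ⟨φ.comb ψ r s, Vlin φ ψ r s, ℓlin φ ψ r s⟩) bd
  have mP : Measurable P := (Lp.stronglyMeasurable P).measurable
  have iP : Integrable (fun p => P p ^ 2) μ := (Lp.memLp P).integrable_sq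
  have nP : ∫ p, P p ^ 2 ∂μ = ‖P‖ ^ 2 := by
    rw [← real_inner_self_eq_norm_sq, L2.inner_def]
    refine integral_congr_ae (ae_of_all _ fun p => ?_)
    simp only [RCLike.inner_apply, conj_trivial]; ring
  have LP : L2loc T P := ⟨mP, fun R _ =>
    IntegrableOn.mono_set (t := Icc (0:ℝ) T ×ˢ (univ : Set ℝ)) iP
      (Set.prod_mono le_rfl (subset_univ _))⟩
  have LsP : L2loc T fun p => √(σ (v p)) * P p := LP.bdd_mul ms sab
  have eΦ : (fun p => f (v p) - (ε / 2 * (D (v p) * w p) - √(σ (v p)) * P p)) =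
      fun p => (f (v p) + (-(ε / 2)) * (D (v p) * w p)) + √(σ (v p)) * P p := by
    ext p; ring
  have LD' : L2loc T fun p => (-(ε / 2)) * (D (v p) * w p) :=
    LD.bdd_mul (m := fun _ => -(ε / 2)) measurable_const fun _ => le_rfl
  refine ⟨w, P, mP, iP, ?_, ⟨mv, v01, hwd.1, ?_, hwd.2, fun φ => ?_⟩⟩
  · rw [nP, ← Real.sq_sqrt (show 0 ≤ 2 * ε * M by positivity)]
    gcongr
  · rw [eΦ]
    exact (Lf.add LD').add LsP
  · rw [eΦ, pair_add (Lf.add LD') LsP (kc φ) φ.px_cpt, pair_add Lf LD' (kc φ) φ.px_cpt, pair_smul]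
    have h1 := hP2 φ
    have h2 : inner ℝ P (V φ) = pair T (fun p => √(σ (v p)) * P p) (pxF φ.toFun) := by
      rw [L2.inner_def, pair]
      refine integral_congr_ae ?_
      filter_upwards [(mem φ).coeFn_toLp] with p hp
      simp only [hV]
      rw [hp]
      simp only [RCLike.inner_apply, conj_trivial]
      ring
    rw [h2] at h1
    simp only [hℓ] at h1
    linarith

end

/-! ### Uniform dissipation bound -/

/-- Cutoffs equal to `1` on `[-N, N]`. -/
lemma exists_cut {N : ℝ} (hN : 0 < N) :
    ∃ (κ : ℝ → ℝ) (K : ℝ), Cut κ (N + 1) K ∧ ∀ x ∈ Icc (-N) N, κ x = 1 := by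
  let b : ContDiffBump (0 : ℝ) := ⟨N, N + 1, hN, by linarith⟩
  have hs : ContDiff ℝ (⊤ : ℕ∞) b := b.contDiff
  have hcd : Continuous (deriv b) := hs.continuous_deriv (by exact_mod_cast le_top)
  obtain ⟨K, hK⟩ := b.hasCompactSupport.deriv.exists_bound_of_continuous hcd
  refine ⟨b, K, ⟨hs, fun x => ⟨b.nonneg, b.le_one⟩, ?_, ?_, hK⟩, fun x hx => ?_⟩
  · apply b.zero_of_le_dist
    rw [dist_zero_right, Real.norm_eq_abs]; exact le_abs_self _
  · apply b.zero_of_le_dist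
    rw [dist_zero_right, Real.norm_eq_abs, abs_neg]; exact le_abs_self _
  · apply b.one_of_mem_closedBall
    rw [Metric.mem_closedBall, dist_zero_right, Real.norm_eq_abs]
    exact abs_le.2 hx

/-- The pointwise inequality behind the energy estimate, with `s = √σ(u)` and `d = D(u)`. -/
lemma energy_pt {c CD Cσ ε k k' K v d s w P : ℝ} (hc : 0 < c) (hε : 0 < ε) (hε1 : ε ≤ 1)
    (hk : k ∈ Icc (0:ℝ) 1) (hk' : |k'| ≤ K) (hv : v ∈ Icc (0:ℝ) 1) (hd : d ∈ Icc c CD)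
    (hs : s ^ 2 ≤ Cσ) :
    ε * c / 4 * (k ^ 2 * w ^ 2) ≤
      k ^ 2 * (ε / 2 * (d * w) - s * P) * w + 2 * k * k' * ((ε / 2 * (d * w) - s * P) * v) +
      (Cσ * (2 / (ε * c) + 1)) * P ^ 2 + K ^ 2 * (2 * CD ^ 2 / c + 1) := by
  have k'2 : k' ^ 2 ≤ K ^ 2 := sq_le_sq' (neg_le_of_abs_le hk') (le_of_abs_le hk')
  have hv2 : v ^ 2 ≤ 1 := by nlinarith [hv.1, hv.2]
  have hk2 : k ^ 2 ≤ 1 := by nlinarith [hk.1, hk.2]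
  have hd2 : d ^ 2 ≤ CD ^ 2 := pow_le_pow_left₀ (hc.le.trans hd.1) hd.2 2
  -- Young's inequality for the three indefinite terms
  have i1 : k ^ 2 * (s * P * w) ≤ ε * c / 8 * (k ^ 2 * w ^ 2) + 2 / (ε * c) * (s ^ 2 * P ^ 2) := by
    have e : ε * c / 8 * (k ^ 2 * w ^ 2) + 2 / (ε * c) * (k ^ 2 * (s ^ 2 * P ^ 2)) -
        k ^ 2 * (s * P * w) = (2 / (ε * c)) * k ^ 2 * (ε * c / 4 * w - s * P) ^ 2 := by
      field_simp; ring
    have e2 : 0 ≤ (2 / (ε * c)) * k ^ 2 * (ε * c / 4 * w - s * P) ^ 2 := by positivity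
    have e3 : 2 / (ε * c) * (k ^ 2 * (s ^ 2 * P ^ 2)) ≤ 2 / (ε * c) * (1 * (s ^ 2 * P ^ 2)) := by
      gcongr
    linarith
  have i2 : -(ε * (k * k' * d * w * v)) ≤ ε * c / 8 * (k ^ 2 * w ^ 2) + K ^ 2 * (2 * CD ^ 2 / c) := by
    have e : ε * c / 8 * (k ^ 2 * w ^ 2) + ε * (2 / c * (k' ^ 2 * d ^ 2 * v ^ 2)) +
        ε * (k * k' * d * w * v) = ε * (2 / c) * (c / 4 * (k * w) + k' * d * v) ^ 2 := by
      field_simp; ring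
    have e2 : 0 ≤ ε * (2 / c) * (c / 4 * (k * w) + k' * d * v) ^ 2 := by positivity
    have e3 : ε * (2 / c * (k' ^ 2 * d ^ 2 * v ^ 2)) ≤ 1 * (2 / c * (K ^ 2 * CD ^ 2 * 1)) := by
      gcongr
    have e4 : 1 * (2 / c * (K ^ 2 * CD ^ 2 * 1)) = K ^ 2 * (2 * CD ^ 2 / c) := by ring
    linarith
  have i3 : 2 * k * k' * (s * P * v) ≤ K ^ 2 + s ^ 2 * P ^ 2 := by
    have e : 2 * k * k' * (s * P * v) ≤ k' ^ 2 + (k ^ 2 * v ^ 2) * (s ^ 2 * P ^ 2) := by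
      nlinarith [sq_nonneg (k' - k * v * (s * P))]
    have e3 : (k ^ 2 * v ^ 2) * (s ^ 2 * P ^ 2) ≤ (1 * 1) * (s ^ 2 * P ^ 2) := by gcongr
    linarith
  have i4 : ε * c / 2 * (k ^ 2 * w ^ 2) ≤ ε / 2 * d * (k ^ 2 * w ^ 2) := by
    have : ε * c / 2 = ε / 2 * c := by ring
    rw [this]
    gcongr
    exact hd.1
  have i5 : (2 / (ε * c) + 1) * (s ^ 2 * P ^ 2) ≤ (2 / (ε * c) + 1) * (Cσ * P ^ 2) := by gcongr
  nlinarith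

lemma en_int {f κ : ℝ → ℝ} {a b R K Cf T : ℝ} {u w Φ : ℝ × ℝ → ℝ} (hs : Sol T u w Φ) (ha : 0 ≤ a)
    (hb : b ≤ T) (hR0 : 0 < R) (hκ : Cut κ R K) (hf : Continuous f)
    (hCf : ∀ v ∈ Icc (0:ℝ) 1, |f v| ≤ Cf) :
    IntegrableOn (fun p => κ p.2 ^ 2 * (Φ p - f (u p)) * w p +
      2 * κ p.2 * deriv κ p.2 * (Φ p * u p - prim f (u p))) (Rect a b R) := by
  have hK : 0 ≤ K := (abs_nonneg _).trans (hκ.dbd 0)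
  have hCf0 : 0 ≤ Cf := (abs_nonneg _).trans (hCf 0 (by simp))
  have iw : IntegrableOn (fun p => w p ^ 2) (Rect a b R) := hs.w2i ha hb hR0
  have iΦ : IntegrableOn (fun p => Φ p ^ 2) (Rect a b R) :=
    (hs.Φ2.2 R hR0).mono_set (Sol.sub_rect ha hb R)
  have κm : Measurable fun p : ℝ × ℝ => κ p.2 := hκ.sm.continuous.measurable.comp measurable_snd
  have κm' : Measurable fun p : ℝ × ℝ => deriv κ p.2 := hκ.cd.measurable.comp measurable_snd
  have fm : Measurable fun p => f (u p) := hf.measurable.comp hs.um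
  have pm : Measurable fun p => prim f (u p) :=
    (prim_contDiff hf).continuous.measurable.comp hs.um
  have κ2 : ∀ p : ℝ × ℝ, κ p.2 ^ 2 ≤ 1 := fun p => by nlinarith [(hκ.mem p.2).1, (hκ.mem p.2).2]
  refine Integrable.mono' (((iΦ.add (iw.add (rect_const a b R (Cf ^ 2)))).const_mul 2).add
    ((((rect_const a b R (1 + Cf)).add iΦ)).const_mul (2 * K)))
    ((((κm.pow_const 2).mul (hs.Φ2.1.sub fm)).mul hs.w2.1).add (((κm.const_mul 2).mul κm').mul
      ((hs.Φ2.1.mul hs.um).sub pm))).aestronglyMeasurable (ae_of_all _ fun p => ?_)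
  have hkk := hκ.mem p.2
  have huu := hs.u01 p
  have hff := hCf _ huu
  have hpp := prim_bound hCf huu
  have hf2 : f (u p) ^ 2 ≤ Cf ^ 2 := sq_le_sq' (neg_le_of_abs_le hff) (le_of_abs_le hff)
  simp only [Pi.add_apply, Real.norm_eq_abs]
  have e1 : |κ p.2 ^ 2 * (Φ p - f (u p)) * w p| ≤ 2 * (Φ p ^ 2 + (w p ^ 2 + Cf ^ 2)) := by
    rw [mul_assoc, abs_mul, abs_of_nonneg (sq_nonneg (κ p.2))]
    calc _ ≤ 1 * |(Φ p - f (u p)) * w p| := by gcongr; exact κ2 p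
      _ ≤ _ := by
        rw [one_mul, abs_le]
        have q1 := two_mul_le_add_sq (Φ p - f (u p)) (w p)
        have q2 := two_mul_le_add_sq (Φ p - f (u p)) (-w p)
        have q3 := sq_nonneg (Φ p + f (u p))
        have q4 := sq_nonneg (Φ p)
        have q5 := sq_nonneg (w p)
        constructor <;> nlinarith
  have e2 : |2 * κ p.2 * deriv κ p.2 * (Φ p * u p - prim f (u p))| ≤
      2 * K * (1 + Cf + Φ p ^ 2) := by
    rw [abs_mul, abs_mul, abs_mul, abs_two, abs_of_nonneg hkk.1]
    have e3 : |Φ p * u p - prim f (u p)| ≤ 1 + Cf + Φ p ^ 2 := by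
      have a1 : |Φ p * u p| ≤ 1 + Φ p ^ 2 := by
        rw [abs_mul, abs_of_nonneg huu.1]
        have q1 := mul_le_mul_of_nonneg_left huu.2 (abs_nonneg (Φ p))
        have q2 : |Φ p| ≤ 1 + |Φ p| ^ 2 := by nlinarith [sq_nonneg (|Φ p| - 1), abs_nonneg (Φ p)]
        rw [sq_abs] at q2
        linarith
      have := abs_sub (Φ p * u p) (prim f (u p))
      linarith
    calc _ ≤ 2 * 1 * K * (1 + Cf + Φ p ^ 2) := by
          gcongr
          · exact hkk.2
          · exact hκ.dbd _
      _ = _ := by ring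
  exact (abs_add_le _ _).trans (add_le_add e1 e2)

/-- With the flux of `cost_repr`, the current `J` is `(ε/2) D(u) w - √σ(u) P`. -/
lemma dis_pt {f D σ : ℝ → ℝ} {c CD Cσ ε : ℝ} {u w P : ℝ × ℝ → ℝ} {p : ℝ × ℝ} (c0 : 0 < c)
    (hε : 0 < ε) (hD : D (u p) ∈ Icc c CD) (hσ : σ (u p) ∈ Icc 0 Cσ) :
    dis f ε u w (fun p => f (u p) - (ε / 2 * (D (u p) * w p) - √(σ (u p)) * P p)) p ≤
      (1 + CD ^ 2 / 2) * (ε * w p ^ 2) + (2 * Cσ / ε) * P p ^ 2 := by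
  have hs2 := Real.sq_sqrt hσ.1
  have hd2 : D (u p) ^ 2 ≤ CD ^ 2 := pow_le_pow_left₀ (c0.le.trans hD.1) hD.2 2
  have e1 : (ε / 2 * (D (u p) * w p) - √(σ (u p)) * P p) ^ 2 ≤
      ε ^ 2 / 2 * (CD ^ 2 * w p ^ 2) + 2 * (Cσ * P p ^ 2) := by
    have b1 : ε ^ 2 / 2 * (D (u p) ^ 2 * w p ^ 2) ≤ ε ^ 2 / 2 * (CD ^ 2 * w p ^ 2) := by gcongr
    have b2 : 2 * (√(σ (u p)) ^ 2 * P p ^ 2) ≤ 2 * (Cσ * P p ^ 2) := by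
      rw [hs2]; gcongr; exact hσ.2
    nlinarith [sq_nonneg (ε / 2 * (D (u p) * w p) + √(σ (u p)) * P p)]
  have e2 : (ε / 2 * (D (u p) * w p) - √(σ (u p)) * P p) ^ 2 / ε ≤
      ε / 2 * (CD ^ 2 * w p ^ 2) + 2 * Cσ / ε * P p ^ 2 := by
    rw [div_le_iff₀ hε]
    calc _ ≤ _ := e1
      _ = _ := by field_simp
  simp only [dis, sub_sub_cancel]
  linarith

set_option maxHeartbeats 800000 in
/-- The dissipation on `[a,b] × [-N,N]` is bounded by a constant that depends only on `N`, `T`, the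
bound `M` on the cost, and the bounds on the coefficients. -/
lemma dis_bound {f D σ : ℝ → ℝ} {Cf c CD Cσ T M N : ℝ} (hc : Coef f D σ Cf c CD Cσ) (hM : 0 < M)
    (hT : 0 < T) (hN : 0 < N) : ∃ C : ℝ, 0 ≤ C ∧ ∀ (ε a b : ℝ) (u w P : ℝ × ℝ → ℝ),
      0 < ε → ε ≤ 1 → 0 < a → a ≤ b → b < T → Measurable P →
      IntegrableOn (fun p => P p ^ 2) (Icc (0:ℝ) T ×ˢ (univ : Set ℝ)) →
      ∫ p in Icc (0:ℝ) T ×ˢ (univ : Set ℝ), P p ^ 2 ≤ 2 * ε * M →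
      Sol T u w (fun p => f (u p) - (ε / 2 * (D (u p) * w p) - √(σ (u p)) * P p)) →
      ∫ p in Rect a b N, dis f ε u w
        (fun p => f (u p) - (ε / 2 * (D (u p) * w p) - √(σ (u p)) * P p)) p ≤ C := by
  obtain ⟨κ, K, hκ, hκ1⟩ := exists_cut hN
  set R := N + 1 with hR
  have hR0 : 0 < R := by linarith
  have hK : 0 ≤ K := (abs_nonneg _).trans (hκ.dbd 0)
  have hCf0 : 0 ≤ Cf := (abs_nonneg _).trans (hc.fb 0 (by simp))
  have hCσ0 : 0 ≤ Cσ := (hc.σb 0 (by simp)).1.trans (hc.σb 0 (by simp)).2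
  have c0 := hc.c0
  set B1 : ℝ := K ^ 2 * (2 * CD ^ 2 / c + 1) with hB1
  have hB10 : 0 ≤ B1 := by positivity
  set A : ℝ := R + 4 * K * Cf * (T * (2 * R)) + (Cσ * M * (4 / c + 2) + B1 * (T * (2 * R))) with hA
  have hA0 : 0 ≤ A := by positivity
  refine ⟨(1 + CD ^ 2 / 2) * (4 * A / c) + 4 * Cσ * M, by positivity, ?_⟩
  intro ε a b u w P hε hε1 ha hab hb mP iP nP hs
  set Φ : ℝ × ℝ → ℝ := fun p => f (u p) - (ε / 2 * (D (u p) * w p) - √(σ (u p)) * P p) with hΦ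
  obtain ⟨U, Ph, G, hAp⟩ := exists_approx hs ha hb hR0
  have hE := energy_lim hAp hab hR0.le hκ hc.fc hc.fb
  have hsub : Rect a b R ⊆ Icc (0:ℝ) T ×ˢ (univ : Set ℝ) :=
    Set.prod_mono (Icc_subset_Icc ha.le hb.le) (subset_univ _)
  have hNR : Rect a b N ⊆ Rect a b R := rect_succ a b N
  have iPR : IntegrableOn (fun p => P p ^ 2) (Rect a b R) := iP.mono_set hsub
  have nPR : ∫ p in Rect a b R, P p ^ 2 ≤ 2 * ε * M :=
    (setIntegral_mono_set iP (ae_of_all _ fun p => sq_nonneg _) hsub.eventuallyLE).trans nP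
  have nPN : ∫ p in Rect a b N, P p ^ 2 ≤ 2 * ε * M :=
    (setIntegral_mono_set iPR (ae_of_all _ fun p => sq_nonneg _) hNR.eventuallyLE).trans nPR
  have iw : IntegrableOn (fun p => w p ^ 2) (Rect a b R) := hs.w2i ha.le hb.le hR0
  have iΦ : IntegrableOn (fun p => Φ p ^ 2) (Rect a b R) :=
    (hs.Φ2.2 R hR0).mono_set (Sol.sub_rect ha.le hb.le R)
  have hpb : ∀ v ∈ Icc (0:ℝ) 1, |prim f v| ≤ Cf := fun v hv => prim_bound hc.fb hv
  have κm : Measurable fun p : ℝ × ℝ => κ p.2 := hκ.sm.continuous.measurable.comp measurable_snd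
  have κm' : Measurable fun p : ℝ × ℝ => deriv κ p.2 := hκ.cd.measurable.comp measurable_snd
  have fm : Measurable fun p => f (u p) := hc.fc.measurable.comp hs.um
  have pm : Measurable fun p => prim f (u p) :=
    (prim_contDiff hc.fc).continuous.measurable.comp hs.um
  have hu := hs.um
  have hΦm := hs.Φ2.1
  have hwm := hs.w2.1
  have κ2 : ∀ p : ℝ × ℝ, κ p.2 ^ 2 ≤ 1 := fun p => by nlinarith [(hκ.mem p.2).1, (hκ.mem p.2).2]
  have iEn := en_int hs ha.le hb.le hR0 hκ hc.fc hc.fb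
  have hvol : ∀ C0 : ℝ, 0 ≤ C0 → ∫ _p in Rect a b R, C0 ≤ C0 * (T * (2 * R)) := by
    intro C0 hC0
    rw [setIntegral_const, smul_eq_mul, mul_comm]
    gcongr
    rw [rect_vol hab hR0.le]
    gcongr
    linarith
  have iκw : IntegrableOn (fun p => κ p.2 ^ 2 * w p ^ 2) (Rect a b R) := by
    refine Integrable.mono' iw ((κm.pow_const 2).mul (hwm.pow_const 2)).aestronglyMeasurable
      (ae_of_all _ fun p => ?_)
    rw [Real.norm_eq_abs, abs_of_nonneg (mul_nonneg (sq_nonneg _) (sq_nonneg _))]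
    exact mul_le_of_le_one_left (sq_nonneg _) (κ2 p)
  have key : ∫ p in Rect a b R, ε * c / 4 * (κ p.2 ^ 2 * w p ^ 2) ≤ A := by
    have iL := iκw.const_mul (ε * c / 4)
    have hmono : ∫ p in Rect a b R, ε * c / 4 * (κ p.2 ^ 2 * w p ^ 2) ≤
        ∫ p in Rect a b R, (((-1) * (κ p.2 ^ 2 * (Φ p - f (u p)) * w p +
          2 * κ p.2 * deriv κ p.2 * (Φ p * u p - prim f (u p))) + 4 * K * Cf) +
          ((Cσ * (2 / (ε * c) + 1)) * P p ^ 2 + B1)) := by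
      refine integral_mono iL (((iEn.const_mul (-1)).add (rect_const a b R _)).add
        ((iPR.const_mul _).add (rect_const a b R _))) fun p => ?_
      have huu := hs.u01 p
      have hff := hc.fb _ huu
      have hpp := hpb _ huu
      have hkk := hκ.mem p.2
      have h1 := energy_pt (Cσ := Cσ) (w := w p) (P := P p) c0 hε hε1 hkk (hκ.dbd p.2) huu (hc.Db _ huu)
        (s := √(σ (u p))) (by rw [Real.sq_sqrt (hc.σb _ huu).1]; exact (hc.σb _ huu).2)
      have h2 : |2 * κ p.2 * deriv κ p.2 * (f (u p) * u p - prim f (u p))| ≤ 4 * K * Cf := by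
        rw [abs_mul, abs_mul, abs_mul, abs_two, abs_of_nonneg hkk.1]
        have a1 : |f (u p) * u p| ≤ Cf * 1 := by
          rw [abs_mul, abs_of_nonneg huu.1]
          exact mul_le_mul hff huu.2 huu.1 hCf0
        have a2 : |f (u p) * u p - prim f (u p)| ≤ 2 * Cf := by
          have := abs_sub (f (u p) * u p) (prim f (u p)); linarith
        calc _ ≤ 2 * 1 * K * (2 * Cf) := by
              gcongr
              · exact hkk.2
              · exact hκ.dbd _
          _ = _ := by ring
      have h3 := neg_le_of_abs_le h2
      have h4 := le_of_abs_le h2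
      simp only [hΦ] at *
      nlinarith
    have i1 := iEn.const_mul (-1)
    have i2 := rect_const a b R (4 * K * Cf)
    have i3 := iPR.const_mul (Cσ * (2 / (ε * c) + 1))
    have i4 := rect_const a b R B1
    have esum := integral_add (i1.add i2) (i3.add i4)
    have es1 := integral_add i1 i2
    have es2 := integral_add i3 i4
    simp only [Pi.add_apply] at esum
    rw [esum, es1, es2, integral_const_mul (-1), integral_const_mul (Cσ * _)] at hmono
    have h1 := hvol (4 * K * Cf) (by positivity)
    have h2 := hvol B1 hB10
    have h3 : Cσ * (2 / (ε * c) + 1) * ∫ p in Rect a b R, P p ^ 2 ≤ Cσ * M * (4 / c + 2) := by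
      calc _ ≤ Cσ * (2 / (ε * c) + 1) * (2 * ε * M) := by gcongr
        _ = Cσ * M * (4 / c + 2 * ε) := by field_simp; ring
        _ ≤ Cσ * M * (4 / c + 2 * 1) := by gcongr
        _ = _ := by ring
    rw [hA]
    linarith
  have hwN : ε * ∫ p in Rect a b N, w p ^ 2 ≤ 4 * A / c := by
    have h1 : ∫ p in Rect a b N, ε * c / 4 * w p ^ 2 ≤ A := by
      calc _ = ∫ p in Rect a b N, ε * c / 4 * (κ p.2 ^ 2 * w p ^ 2) := by
            refine setIntegral_congr_fun (rect_meas a b N) fun p hp => ?_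
            simp only [hκ1 _ hp.2]; ring
        _ ≤ _ := setIntegral_mono_set (iκw.const_mul _)
            (ae_of_all _ fun p => by
              simp only [Pi.zero_apply]; positivity) hNR.eventuallyLE
        _ ≤ A := key
    rw [integral_const_mul] at h1
    rw [le_div_iff₀ c0]
    linarith
  have hfin : ∫ p in Rect a b N, dis f ε u w Φ p ≤ ∫ p in Rect a b N,
      ((1 + CD ^ 2 / 2) * (ε * w p ^ 2) + (2 * Cσ / ε) * P p ^ 2) := by
    have iwN := iw.mono_set hNR
    refine integral_mono (hs.disi ha.le hb.le hN hc.fc hc.fb)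
      (((iwN.const_mul ε).const_mul _).add ((iPR.mono_set hNR).const_mul _)) fun p => ?_
    have huu := hs.u01 p
    exact dis_pt c0 hε (hc.Db _ huu) (hc.σb _ huu)
  rw [integral_add (((iw.mono_set hNR).const_mul ε).const_mul _) ((iPR.mono_set hNR).const_mul _),
    integral_const_mul, integral_const_mul, integral_const_mul] at hfin
  have h5 : 2 * Cσ / ε * ∫ p in Rect a b N, P p ^ 2 ≤ 4 * Cσ * M := by
    calc _ ≤ 2 * Cσ / ε * (2 * ε * M) := by gcongr
      _ = _ := by field_simp; ring
  have h6 : (1 + CD ^ 2 / 2) * (ε * ∫ p in Rect a b N, w p ^ 2) ≤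
      (1 + CD ^ 2 / 2) * (4 * A / c) := by gcongr
  linarith

/-! ### Entropies adapted to the flux -/

section
variable {f : ℝ → ℝ} {L : NNReal}

lemma lip_ac (hf : LipschitzWith L f) (a b : ℝ) : AbsolutelyContinuousOnInterval f a b :=
  hf.lipschitzOnWith.absolutelyContinuousOnInterval

lemma lip_deriv (hf : LipschitzWith L f) (v : ℝ) : |deriv f v| ≤ L :=
  norm_deriv_le_of_lipschitz hf

lemma bdd_ii {g : ℝ → ℝ} (hg : Measurable g) {C : ℝ} (hC : ∀ x, |g x| ≤ C) (a b : ℝ) :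
    IntervalIntegrable g volume a b := by
  rw [intervalIntegrable_iff]
  exact Integrable.mono' (integrableOn_const (by simp) (C := C)) hg.aestronglyMeasurable
    (ae_of_all _ hC)

/-- The defect in the Cauchy-Schwarz inequality for `f'` on `[b, a]`. -/
def Gf (f : ℝ → ℝ) (a b : ℝ) : ℝ :=
  (a - b) * (∫ v in b..a, deriv f v ^ 2) - (f a - f b) ^ 2

lemma Gf_symm (a b : ℝ) : Gf f a b = Gf f b a := by
  unfold Gf
  rw [intervalIntegral.integral_symm a b]; ring

lemma deriv_sq_ii (hf : LipschitzWith L f) (a b : ℝ) :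
    IntervalIntegrable (fun v => deriv f v ^ 2) volume a b :=
  bdd_ii ((measurable_deriv f).pow_const 2) (C := (L : ℝ) ^ 2) (fun v => by
    rw [abs_of_nonneg (sq_nonneg _)]
    have := lip_deriv hf v
    exact sq_le_sq' (neg_le_of_abs_le this) (le_of_abs_le this)) a b

/-- `Gf` is the variance of `f'` up to a factor. -/
lemma Gf_eq (hf : LipschitzWith L f) {a b : ℝ} (hab : b < a) :
    Gf f a b = (a - b) * ∫ v in b..a, (deriv f v - (f a - f b) / (a - b)) ^ 2 := by
  have h0 : a - b ≠ 0 := by linarith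
  set m := (f a - f b) / (a - b) with hm
  have i1 := deriv_sq_ii hf b a
  have i2 : IntervalIntegrable (deriv f) volume b a :=
    bdd_ii (measurable_deriv f) (lip_deriv hf) b a
  have e : ∫ v in b..a, (deriv f v - m) ^ 2 =
      (∫ v in b..a, deriv f v ^ 2) - 2 * m * (f a - f b) + m ^ 2 * (a - b) := by
    have : (fun v => (deriv f v - m) ^ 2) = fun v => (deriv f v ^ 2 - 2 * m * deriv f v) + m ^ 2 := by
      ext v; ring
    rw [this, intervalIntegral.integral_add (i1.sub (i2.const_mul _)) intervalIntegrable_const,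
      intervalIntegral.integral_sub i1 (i2.const_mul _), intervalIntegral.integral_const_mul,
      (lip_ac hf b a).integral_deriv_eq_sub, intervalIntegral.integral_const, smul_eq_mul]
    ring
  have hm2 : m * (a - b) = f a - f b := by rw [hm]; field_simp
  rw [e, Gf, ← hm2]
  ring

/-- If `Gf` vanishes then `f'` is almost everywhere constant on `[b, a]`, so `f` is affine there. -/
lemma Gf_pos (hf : LipschitzWith L f) (hNA : NoAffinePiece f) {a b : ℝ} (hb : 0 ≤ b) (hab : b < a)
    (ha : a ≤ 1) : 0 < Gf f a b := by
  rw [Gf_eq hf hab]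
  set m := (f a - f b) / (a - b) with hm
  refine mul_pos (by linarith) (lt_of_le_of_ne ?_ fun h => ?_)
  · exact intervalIntegral.integral_nonneg hab.le fun v _ => sq_nonneg _
  have hi : IntervalIntegrable (fun v => (deriv f v - m) ^ 2) volume b a :=
    bdd_ii (((measurable_deriv f).sub_const m).pow_const 2) (C := ((L : ℝ) + |m|) ^ 2) (fun v => by
      rw [abs_of_nonneg (sq_nonneg _)]
      have := lip_deriv hf v
      have h2 := abs_sub (deriv f v) m
      have h3 : |deriv f v - m| ≤ L + |m| := by linarith
      exact sq_le_sq' (neg_le_of_abs_le h3) (le_of_abs_le h3)) b a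
  rw [intervalIntegral.integral_of_le hab.le, eq_comm,
    setIntegral_eq_zero_iff_of_nonneg_ae (ae_of_all _ fun v => sq_nonneg _)
      ((intervalIntegrable_iff_integrableOn_Ioc_of_le hab.le).1 hi)] at h
  refine hNA b a hb hab ha ⟨m, f b - m * b, fun v hv => ?_⟩
  have e1 := (lip_ac hf b v).integral_deriv_eq_sub
  have e2 : ∫ x in b..v, deriv f x = ∫ _ in b..v, m := by
    rw [intervalIntegral.integral_of_le hv.1, intervalIntegral.integral_of_le hv.1]
    refine integral_congr_ae ?_
    have := ae_restrict_of_ae_restrict_of_subset (Ioc_subset_Ioc_right hv.2) h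
    filter_upwards [this] with x hx
    have : deriv f x - m = 0 := by simpa using hx
    linarith
  rw [e2, intervalIntegral.integral_const, smul_eq_mul] at e1
  linarith

lemma Gf_cont (hf : LipschitzWith L f) : Continuous fun p : ℝ × ℝ => Gf f p.1 p.2 := by
  have hF := intervalIntegral.continuous_primitive (deriv_sq_ii hf) 0
  have e : (fun p : ℝ × ℝ => Gf f p.1 p.2) = fun p => (p.1 - p.2) *
      ((∫ v in (0:ℝ)..p.1, deriv f v ^ 2) - ∫ v in (0:ℝ)..p.2, deriv f v ^ 2) -
      (f p.1 - f p.2) ^ 2 := by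
    ext p
    rw [Gf, intervalIntegral.integral_interval_sub_left (deriv_sq_ii hf _ _) (deriv_sq_ii hf _ _)]
  rw [e]
  have h1 := hF.comp continuous_fst (X := ℝ × ℝ)
  have h2 := hF.comp continuous_snd (X := ℝ × ℝ)
  have h3 := hf.continuous
  exact ((continuous_fst.sub continuous_snd).mul (h1.sub h2)).sub
    (((h3.comp continuous_fst).sub (h3.comp continuous_snd)).pow 2)

/-- By compactness, `Gf` is bounded below where `|a - b| ≥ r`. -/
lemma Gf_lower (hf : LipschitzWith L f) (hNA : NoAffinePiece f) {r : ℝ} (hr : 0 < r) :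
    ∃ c > 0, ∀ a ∈ Icc (0:ℝ) 1, ∀ b ∈ Icc (0:ℝ) 1, |a - b| ≤ r + Gf f a b / c := by
  have hpos : ∀ a ∈ Icc (0:ℝ) 1, ∀ b ∈ Icc (0:ℝ) 1, a ≠ b → 0 < Gf f a b := by
    intro a ha b hb hab
    rcases lt_or_gt_of_ne hab with h | h
    · rw [Gf_symm]; exact Gf_pos hf hNA ha.1 h hb.2
    · exact Gf_pos hf hNA hb.1 h ha.2
  have hnn : ∀ a ∈ Icc (0:ℝ) 1, ∀ b ∈ Icc (0:ℝ) 1, 0 ≤ Gf f a b := by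
    intro a ha b hb
    by_cases hab : a = b
    · subst hab; simp [Gf]
    · exact (hpos a ha b hb hab).le
  let S : Set (ℝ × ℝ) := (Icc 0 1 ×ˢ Icc 0 1) ∩ {p | r ≤ |p.1 - p.2|}
  have hS : IsCompact S := (isCompact_Icc.prod isCompact_Icc).inter_right
    (isClosed_le continuous_const (by fun_prop))
  have main : ∃ c > 0, ∀ p ∈ S, c ≤ Gf f p.1 p.2 := by
    rcases S.eq_empty_or_nonempty with h | h
    · exact ⟨1, one_pos, fun p hp => by rw [h] at hp; exact hp.elim⟩
    · obtain ⟨p, hp, hmin⟩ := hS.exists_isMinOn h (Gf_cont hf).continuousOn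
      refine ⟨Gf f p.1 p.2, hpos _ hp.1.1 _ hp.1.2 fun he => ?_, fun q hq => hmin hq⟩
      have := hp.2
      simp only [mem_ofPred_eq, he, sub_self, abs_zero] at this
      linarith
  obtain ⟨c, hc, hcS⟩ := main
  refine ⟨c, hc, fun a ha b hb => ?_⟩
  rcases le_or_gt r |a - b| with h | h
  · have h1 : 1 ≤ Gf f a b / c := (one_le_div hc).2 (hcS (a, b) ⟨⟨ha, hb⟩, h⟩)
    have h2 : |a - b| ≤ 1 := abs_le.2 ⟨by linarith [ha.1, hb.2], by linarith [ha.2, hb.1]⟩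
    linarith
  · have := div_nonneg (hnn a ha b hb) hc.le
    linarith

/-- The determinant of increments of `(v, f)` and `(η, q)`. -/
def Geta (f η η' η'' : ℝ → ℝ) (a b : ℝ) : ℝ :=
  (a - b) * (qfl f η' η'' a - qfl f η' η'' b) - (f a - f b) * (η a - η b)

/-- `qfl` has almost everywhere derivative `f' η'`: integrate `f η''` by parts. -/
lemma qfl_sub (hf : LipschitzWith L f) {η η' η'' : ℝ → ℝ} {E : ℝ} (hη : Ent η η' η'' E) (a b : ℝ) :
    qfl f η' η'' a - qfl f η' η'' b = ∫ v in b..a, deriv f v * η' v := by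
  have hd : deriv η' = η'' := by ext v; exact (hη.d2 v).deriv
  have h := (lip_ac hf b a).integral_mul_deriv_eq_deriv_mul
    (hη.c1.contDiffOn.absolutelyContinuousOnInterval (a := b) (b := a))
  rw [hd] at h
  have hc : Continuous fun s => f s * η'' s := hf.continuous.mul hη.c2
  have e : prim (fun s => f s * η'' s) a - prim (fun s => f s * η'' s) b =
      ∫ s in b..a, f s * η'' s := by
    unfold prim
    rw [intervalIntegral.integral_interval_sub_left (hc.intervalIntegrable _ _)
      (hc.intervalIntegrable _ _)]
  unfold qfl
  linarith

/-- The derivative of the entropy can be chosen `L¹`-close to `f'`, so that the determinant of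
increments controls `|a - b|` up to an arbitrarily small error. -/
lemma exists_ent (hf : LipschitzWith L f) (hNA : NoAffinePiece f) {r : ℝ} (hr : 0 < r) :
    ∃ (η η' η'' : ℝ → ℝ) (E c : ℝ), Ent η η' η'' E ∧ 0 < c ∧
      ∀ a ∈ Icc (0:ℝ) 1, ∀ b ∈ Icc (0:ℝ) 1, |a - b| ≤ r + Geta f η η' η'' a b / c := by
  obtain ⟨c, hc, hG⟩ := Gf_lower hf hNA (half_pos hr)
  set s : ℝ := c * r / (4 * (L + 1)) with hs
  have hL : (0:ℝ) ≤ L := L.2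
  have hs0 : 0 < s := by positivity
  have hdi : Integrable (deriv f) (volume.restrict (Icc (0:ℝ) 1)) :=
    Integrable.mono' (integrable_const (L : ℝ)) (measurable_deriv f).aestronglyMeasurable
      (ae_of_all _ (lip_deriv hf))
  -- `η'` is a polynomial within `s` of `f'` in `L¹(0,1)`. Replacing `f'` by `η'` in the determinant
  -- costs at most `2 L s ≤ c r / 2`.
  obtain ⟨g, -, hg1, hg2, hg3⟩ := hdi.exists_hasCompactSupport_integral_sub_le (half_pos hs0)
  obtain ⟨p, hp⟩ := exists_polynomial_near_of_continuousOn 0 1 g hg2.continuousOn (s / 2)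
    (half_pos hs0)
  have hpc : Continuous fun v => p.eval v := p.continuous
  have hpi : Integrable (fun v => p.eval v) (volume.restrict (Icc (0:ℝ) 1)) :=
    hpc.continuousOn.integrableOn_compact isCompact_Icc
  have hclose : ∫ v in Icc (0:ℝ) 1, |deriv f v - p.eval v| ≤ s := by
    have h1 : ∫ v in Icc (0:ℝ) 1, |deriv f v - p.eval v| ≤
        ∫ v in Icc (0:ℝ) 1, (‖deriv f v - g v‖ + s / 2) := by
      refine setIntegral_mono_on (hdi.sub hpi).abs ((hdi.sub hg3).norm.add (integrable_const _))
        measurableSet_Icc fun v hv => ?_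
      have h2 := hp v hv
      have h3 := abs_sub_le (deriv f v) (g v) (p.eval v)
      rw [abs_sub_comm (g v)] at h3
      rw [Real.norm_eq_abs]
      linarith
    have hgn : Integrable (fun v => ‖deriv f v - g v‖) (volume.restrict (Icc (0:ℝ) 1)) :=
      (hdi.sub hg3).norm
    rw [integral_add hgn (integrable_const _)] at h1
    simp only [integral_const, measureReal_restrict_apply_univ, Real.volume_real_Icc, sub_zero,
      smul_eq_mul] at h1
    norm_num at h1
    norm_num at hg1
    linarith
  set η : ℝ → ℝ := prim fun v => p.eval v with hη
  set η' : ℝ → ℝ := fun v => p.eval v with hη'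
  set η'' : ℝ → ℝ := fun v => p.derivative.eval v with hη''
  have d1 : ∀ v, HasDerivAt η (η' v) v := prim_hasDerivAt hpc
  have d2 : ∀ v, HasDerivAt η' (η'' v) v := p.hasDerivAt
  have c2 : Continuous η'' := p.derivative.continuous
  have c0 : Continuous η := (prim_contDiff hpc).continuous
  obtain ⟨E0, hE0⟩ := isCompact_Icc.exists_bound_of_continuousOn (s := Icc (0:ℝ) 1) c0.continuousOn
  obtain ⟨E1, hE1⟩ := isCompact_Icc.exists_bound_of_continuousOn (s := Icc (0:ℝ) 1) hpc.continuousOn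
  obtain ⟨E2, hE2⟩ := isCompact_Icc.exists_bound_of_continuousOn (s := Icc (0:ℝ) 1) c2.continuousOn
  have hEnt : Ent η η' η'' (max E0 (max E1 E2)) :=
    ⟨d1, d2, c2, fun v hv => (hE0 v hv).trans (le_max_left _ _),
      fun v hv => (hE1 v hv).trans ((le_max_left _ _).trans (le_max_right _ _)),
      fun v hv => (hE2 v hv).trans ((le_max_right _ _).trans (le_max_right _ _))⟩
  refine ⟨η, η', η'', _, c, hEnt, hc, fun a ha b hb => ?_⟩
  have hcl : ∀ k : ℝ → ℝ, Measurable k → (∀ v ∈ Icc (0:ℝ) 1, |k v| ≤ L) →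
      |∫ v in b..a, k v * (deriv f v - p.eval v)| ≤ L * s := by
    intro k hkm hk
    have hsub : Set.uIoc b a ⊆ Icc 0 1 := fun v hv => by
      have := Set.uIoc_subset_uIcc hv
      exact (convex_Icc (0:ℝ) 1).ordConnected.uIcc_subset hb ha this
    have hI : IntegrableOn (fun v => (L:ℝ) * |deriv f v - p.eval v|) (Icc 0 1) :=
      (hdi.sub hpi).abs.const_mul _
    calc _ ≤ ∫ v in Set.uIoc b a, ‖k v * (deriv f v - p.eval v)‖ :=
          intervalIntegral.norm_integral_le_integral_norm_uIoc
      _ ≤ ∫ v in Set.uIoc b a, (L:ℝ) * |deriv f v - p.eval v| := by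
          refine setIntegral_mono_on (Integrable.mono' (hI.mono_set hsub)
            ((hkm.mul ((measurable_deriv f).sub hpc.measurable)).norm).aestronglyMeasurable ?_)
            (hI.mono_set hsub) measurableSet_uIoc fun v hv => ?_
          · filter_upwards [ae_restrict_mem measurableSet_uIoc] with v hv
            rw [norm_norm, norm_mul]
            exact mul_le_mul_of_nonneg_right (hk v (hsub hv)) (abs_nonneg _)
          · rw [norm_mul]
            exact mul_le_mul_of_nonneg_right (hk v (hsub hv)) (abs_nonneg _)
      _ ≤ ∫ v in Icc (0:ℝ) 1, (L:ℝ) * |deriv f v - p.eval v| :=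
          setIntegral_mono_set hI (ae_of_all _ fun v => by
            simp only [Pi.zero_apply]; positivity) hsub.eventuallyLE
      _ = L * ∫ v in Icc (0:ℝ) 1, |deriv f v - p.eval v| := integral_const_mul _ _
      _ ≤ L * s := by gcongr
  have i1 := deriv_sq_ii hf b a
  have i0 : IntervalIntegrable (deriv f) volume b a :=
    bdd_ii (measurable_deriv f) (lip_deriv hf) b a
  have ip : IntervalIntegrable (fun v => p.eval v) volume b a := hpc.intervalIntegrable _ _
  have i2 : IntervalIntegrable (fun v => deriv f v * p.eval v) volume b a :=
    i0.mul_continuousOn hpc.continuousOn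
  have b1 := hcl (deriv f) (measurable_deriv f) fun v _ => lip_deriv hf v
  have b2 : |∫ v in b..a, (f a - f b) * (deriv f v - p.eval v)| ≤ L * s := by
    refine hcl (fun _ => f a - f b) measurable_const fun v _ => ?_
    have h1 := hf.dist_le_mul a b
    rw [Real.dist_eq, Real.dist_eq] at h1
    have h2 : |a - b| ≤ 1 := abs_le.2 ⟨by linarith [ha.1, hb.2], by linarith [ha.2, hb.1]⟩
    exact h1.trans (mul_le_of_le_one_right hL h2)
  have e1 : ∫ v in b..a, deriv f v * (deriv f v - p.eval v) =
      (∫ v in b..a, deriv f v ^ 2) - ∫ v in b..a, deriv f v * p.eval v := by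
    rw [← intervalIntegral.integral_sub i1 i2]
    congr 1; ext v; ring
  have e2 : ∫ v in b..a, (f a - f b) * (deriv f v - p.eval v) =
      (f a - f b) * ((f a - f b) - (η a - η b)) := by
    rw [intervalIntegral.integral_const_mul, intervalIntegral.integral_sub i0 ip,
      (lip_ac hf b a).integral_deriv_eq_sub, hη]
    unfold prim
    rw [intervalIntegral.integral_interval_sub_left (hpc.intervalIntegrable _ _)
      (hpc.intervalIntegrable _ _)]
  have hd : Gf f a b - Geta f η η' η'' a b ≤ 2 * L * s := by
    have e3 : Gf f a b - Geta f η η' η'' a b =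
        (a - b) * (∫ v in b..a, deriv f v * (deriv f v - p.eval v)) -
        ∫ v in b..a, (f a - f b) * (deriv f v - p.eval v) := by
      rw [Geta, qfl_sub hf hEnt, Gf, e1, e2]; ring
    have h2 : |a - b| ≤ 1 := abs_le.2 ⟨by linarith [ha.1, hb.2], by linarith [ha.2, hb.1]⟩
    have h3 : |(a - b) * (∫ v in b..a, deriv f v * (deriv f v - p.eval v))| ≤ 1 * (L * s) := by
      rw [abs_mul]; exact mul_le_mul h2 b1 (abs_nonneg _) zero_le_one
    rw [e3]
    linarith [le_of_abs_le h3, neg_le_of_abs_le b2]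
  have hfin := hG a ha b hb
  have h4 : Gf f a b / c ≤ Geta f η η' η'' a b / c + r / 2 := by
    have h5 : 2 * L * s ≤ c * (r / 2) := by
      have : s * (4 * (L + 1)) = c * r := by rw [hs]; field_simp
      nlinarith
    rw [div_le_iff₀ hc, add_mul, div_mul_cancel₀ _ hc.ne']
    linarith
  linarith

end

/-! ### Equicontinuity of space translations -/

/-- The two time strips of width `δ` next to `0` and `T` contribute at most `4 N δ`. -/
lemma strip_bound {T δ N : ℝ} {g : ℝ × ℝ → ℝ} (hδ : 0 < δ) (hδT : δ ≤ T / 4) (hN : 0 < N)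
    (hg : Measurable g) (g0 : ∀ p, 0 ≤ g p) (g1 : ∀ p, g p ≤ 1) :
    ∫ p in Rect 0 T N, g p ≤ (∫ p in Rect δ (T - δ) N, g p) + 4 * N * δ := by
  have hi : IntegrableOn g (Rect 0 T N) := Integrable.mono' (rect_const 0 T N 1)
    hg.aestronglyMeasurable (ae_of_all _ fun p => by
      rw [Real.norm_eq_abs, abs_of_nonneg (g0 p)]; exact g1 p)
  have hsub : Rect δ (T - δ) N ⊆ Rect 0 T N :=
    Set.prod_mono (Icc_subset_Icc hδ.le (by linarith)) le_rfl
  have h1 := setIntegral_sdiff (rect_meas δ (T - δ) N) hi hsub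
  have h2 : ∫ p in Rect 0 T N \ Rect δ (T - δ) N, g p ≤ 4 * N * δ := by
    have h3 : ∫ p in Rect 0 T N \ Rect δ (T - δ) N, g p ≤
        ∫ _p in Rect 0 T N \ Rect δ (T - δ) N, (1:ℝ) :=
      integral_mono (hi.mono_set sdiff_subset) ((rect_const 0 T N 1).mono_set sdiff_subset) g1
    rw [setIntegral_sdiff (rect_meas _ _ _) (rect_const 0 T N 1) hsub, setIntegral_const,
      setIntegral_const, smul_eq_mul, smul_eq_mul, mul_one, mul_one, rect_vol (by linarith) hN.le, rect_vol (by linarith) hN.le] at h3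
    linarith
  linarith

lemma dl_meas {h : ℝ} {g : ℝ × ℝ → ℝ} (hg : Measurable g) : Measurable (dl h g) :=
  (hg.comp (measurable_fst.prodMk (measurable_snd.add_const h))).sub hg

/-- Spatial translations are equicontinuous in `L¹` on the sublevels of the cost. -/
lemma transl {f D σ : ℝ → ℝ} {Cf c CD Cσ T M N r : ℝ} {L : NNReal}
    (hc : Coef f D σ Cf c CD Cσ) (hf : LipschitzWith L f) (hNA : NoAffinePiece f) (hT : 0 < T)
    (hM : 0 < M) (hN : 0 < N) (hr : 0 < r) : ∃ d > 0, ∀ ε ∈ Ioc (0:ℝ) 1, ∀ u : cU T,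
      Heps f D σ T ε u ≤ ENNReal.ofReal M → ∀ h, 0 < h → h < d →
      ∫ p in Rect 0 T N, |dl h u.toFun p| ≤ r := by
  set R := N + 1 with hR
  have hR0 : 0 < R := by linarith
  obtain ⟨κ, K, hκ, hκ1⟩ := exists_cut hN
  obtain ⟨C, hC0, hC⟩ := dis_bound (N := R + 1) hc hM hT (by linarith)
  set r' := r / (8 * T * R) with hr'
  have hr'0 : 0 < r' := by positivity
  obtain ⟨η, η', η'', E, c1, hη, hc1, hG⟩ := exists_ent hf hNA hr'0
  set A := 8 * R * E + (K * E * (4 * Cf + 2) * (T * (2 * R)) + (K * E + E) * (2 * C)) + 4 * E * C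
    with hA
  have hK : 0 ≤ K := (abs_nonneg _).trans (hκ.dbd 0)
  have hCf0 : 0 ≤ Cf := (abs_nonneg _).trans (hc.fb 0 (by simp))
  have hE := hη.nn
  have hA0 : 0 ≤ A := by positivity
  -- Smooth approximations are only available away from the times `0` and `T`; `δ` makes the two
  -- discarded strips contribute at most `r / 4`.
  set δ := min (T / 4) (r / (16 * N)) with hδ
  have hδ0 : 0 < δ := by positivity
  have hδ1 : δ ≤ T / 4 := min_le_left _ _
  have hδ2 : 4 * N * δ ≤ r / 4 := by
    calc 4 * N * δ ≤ 4 * N * (r / (16 * N)) := by gcongr; exact min_le_right _ _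
      _ = r / 4 := by field_simp; ring
  refine ⟨min 1 (c1 * r / (4 * (A + 1))), by positivity, ?_⟩
  intro ε hε u hH h h0 hh
  have hh1 : h ≤ 1 := (hh.trans_le (min_le_left _ _)).le
  have hh2 : h * A / c1 ≤ r / 4 := by
    have : h ≤ c1 * r / (4 * (A + 1)) := (hh.trans_le (min_le_right _ _)).le
    rw [le_div_iff₀ (by positivity)] at this
    rw [div_le_iff₀ hc1]
    nlinarith
  obtain ⟨w, P, mP, iP, nP, hs⟩ := cost_repr hc hε.1 hM u hH
  set v := u.toFun with hv
  have v01 : ∀ p, v p ∈ Icc (0:ℝ) 1 := u.mem01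
  have dl1 : ∀ p, |dl h v p| ≤ 1 := fun p => by
    have h1 := v01 p
    have h2 := v01 (p.1, p.2 + h)
    unfold dl
    exact abs_le.2 ⟨by linarith [h1.2, h2.1], by linarith [h1.1, h2.2]⟩
  have vm : Measurable v := u.meas
  have dlm : Measurable (dl h v) := dl_meas vm
  have hst := strip_bound hδ0 hδ1 hN (g := fun p => |dl h v p|) dlm.norm (fun p => abs_nonneg _) dl1
  have hab : δ ≤ T - δ := by linarith
  have hS := hC ε δ (T - δ) v w P hε.1 hε.2 hδ0 hab (by linarith) mP iP nP hs
  have hI := inter_est hs hδ0 hab (by linarith : T - δ < T) hR0 h0 hh1 hε.1 hε.2 hκ hc.fc hc.fb hη hS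
  have hgeta : ∀ p, dl h v p * dl h (fun q => qfl f η' η'' (v q)) p -
      dl h (fun q => f (v q)) p * dl h (fun q => η (v q)) p =
      Geta f η η' η'' (v (p.1, p.2 + h)) (v p) := fun p => rfl
  simp only [hgeta] at hI
  have κm : Measurable fun p : ℝ × ℝ => κ p.2 := hκ.sm.continuous.measurable.comp measurable_snd
  have i1 : IntegrableOn (fun p => κ p.2 * |dl h v p|) (Rect δ (T - δ) R) :=
    Integrable.mono' (rect_const _ _ _ 1) (κm.mul dlm.norm).aestronglyMeasurable
      (ae_of_all _ fun p => by
        rw [Real.norm_eq_abs, abs_mul, abs_abs, abs_of_nonneg (hκ.mem p.2).1]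
        exact mul_le_one₀ (hκ.mem p.2).2 (abs_nonneg _) (dl1 p))
  have hGc : Continuous fun z : ℝ × ℝ => Geta f η η' η'' z.1 z.2 := by
    have hfc := hf.continuous
    have hηc : Continuous η := hη.c0.continuous
    have hqc : Continuous (qfl f η' η'') :=
      (hfc.mul hη.c1.continuous).sub (prim_contDiff (hfc.mul hη.c2)).continuous
    exact ((continuous_fst.sub continuous_snd).mul ((hqc.comp continuous_fst).sub
      (hqc.comp continuous_snd))).sub (((hfc.comp continuous_fst).sub (hfc.comp continuous_snd)).mul
      ((hηc.comp continuous_fst).sub (hηc.comp continuous_snd)))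
  obtain ⟨BG, hBG⟩ := (isCompact_Icc.prod isCompact_Icc).exists_bound_of_continuousOn
    (s := Icc (0:ℝ) 1 ×ˢ Icc (0:ℝ) 1) hGc.continuousOn
  have gm : Measurable fun p : ℝ × ℝ => Geta f η η' η'' (v (p.1, p.2 + h)) (v p) :=
    hGc.measurable.comp ((vm.comp (measurable_fst.prodMk (measurable_snd.add_const h))).prodMk vm)
  have i2 : IntegrableOn (fun p => κ p.2 * Geta f η η' η'' (v (p.1, p.2 + h)) (v p))
      (Rect δ (T - δ) R) :=
    Integrable.mono' (rect_const _ _ _ BG) (κm.mul gm).aestronglyMeasurable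
      (ae_of_all _ fun p => by
        have := hBG (v (p.1, p.2 + h), v p) ⟨v01 _, v01 _⟩
        rw [norm_mul, Real.norm_eq_abs, abs_of_nonneg (hκ.mem p.2).1]
        calc _ ≤ 1 * BG := mul_le_mul (hκ.mem p.2).2 this (norm_nonneg _) zero_le_one
          _ = BG := one_mul _)
  have hmain : ∫ p in Rect δ (T - δ) N, |dl h v p| ≤ r / 4 + r / 4 := by
    calc ∫ p in Rect δ (T - δ) N, |dl h v p| = ∫ p in Rect δ (T - δ) N, κ p.2 * |dl h v p| := by
          refine setIntegral_congr_fun (rect_meas _ _ _) fun p hp => ?_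
          simp only [hκ1 _ hp.2, one_mul]
      _ ≤ ∫ p in Rect δ (T - δ) R, κ p.2 * |dl h v p| :=
          setIntegral_mono_set i1 (ae_of_all _ fun p => mul_nonneg (hκ.mem p.2).1 (abs_nonneg _))
            (rect_succ _ _ _).eventuallyLE
      _ ≤ ∫ p in Rect δ (T - δ) R,
          (r' + c1⁻¹ * (κ p.2 * Geta f η η' η'' (v (p.1, p.2 + h)) (v p))) := by
          refine integral_mono i1 ((rect_const _ _ _ _).add (i2.const_mul _)) fun p => ?_
          have h1 := hG _ (v01 (p.1, p.2 + h)) _ (v01 p)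
          have h2 := mul_le_mul_of_nonneg_left h1 (hκ.mem p.2).1
          have h3 : κ p.2 * r' ≤ r' := mul_le_of_le_one_left hr'0.le (hκ.mem p.2).2
          have h4 : κ p.2 * (Geta f η η' η'' (v (p.1, p.2 + h)) (v p) / c1) =
            c1⁻¹ * (κ p.2 * Geta f η η' η'' (v (p.1, p.2 + h)) (v p)) := by ring
          simp only [dl]
          rw [mul_add] at h2
          linarith
      _ = r' * volume.real (Rect δ (T - δ) R) + c1⁻¹ * ∫ p in Rect δ (T - δ) R,
          κ p.2 * Geta f η η' η'' (v (p.1, p.2 + h)) (v p) := by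
          rw [integral_add (rect_const _ _ _ _) (i2.const_mul _), integral_const_mul,
            setIntegral_const, smul_eq_mul, mul_comm]
      _ ≤ r / 4 + r / 4 := by
          have h5 := le_of_abs_le hI
          gcongr ?_ + ?_
          · rw [rect_vol hab hR0.le]
            calc r' * ((T - δ - δ) * (2 * R)) ≤ r' * (T * (2 * R)) := by gcongr; linarith
              _ = r / 4 := by rw [hr']; field_simp; ring
          · calc _ ≤ c1⁻¹ * (h * A) := by gcongr
              _ = h * A / c1 := by ring
              _ ≤ r / 4 := hh2
  linarith

/-! ### The negative norm and primitives in space -/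

lemma prim_sub {w : ℝ → ℝ} (hw : Measurable w) {C : ℝ} (h1 : ∀ x, |w x| ≤ C) (a b : ℝ) :
    prim w b - prim w a = ∫ x in a..b, w x := by
  unfold prim
  rw [intervalIntegral.integral_interval_sub_left (bdd_ii hw h1 _ _) (bdd_ii hw h1 _ _)]

lemma prim_lip {w : ℝ → ℝ} (hw : Measurable w) (h1 : ∀ x, |w x| ≤ 1) : LipschitzWith 1 (prim w) := by
  refine LipschitzWith.of_dist_le_mul fun x y => ?_
  rw [Real.dist_eq, Real.dist_eq, prim_sub hw h1]
  have := intervalIntegral.norm_integral_le_of_norm_le_const (f := w) (C := 1) (a := y) (b := x)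
    (fun z _ => h1 z)
  simpa using this

lemma prim_ae_deriv {w : ℝ → ℝ} (hw : Measurable w) {C : ℝ} (h1 : ∀ x, |w x| ≤ C) :
    ∀ᵐ x, deriv (prim w) x = w x := by
  have hl : LocallyIntegrable w volume := by
    exact ((locallyIntegrable_const C).mono hw.aestronglyMeasurable (ae_of_all _ fun x => by
      simpa using (h1 x).trans (le_abs_self C)))
  filter_upwards [_root_.LocallyIntegrable.ae_hasDerivAt_integral hl] with x hx
  exact (hx 0).deriv

lemma STest.c1 {N : ℝ} (φ : STest N) : ContDiff ℝ 1 φ.toFun :=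
  φ.smooth.of_le (by exact_mod_cast le_top)

lemma STest.dcont {N : ℝ} (φ : STest N) : Continuous (deriv φ.toFun) :=
  φ.c1.continuous_deriv le_rfl

/-- The pairing of `w` with a test function is controlled by the primitive of `w`. -/
lemma test_bound {N m : ℝ} (hN : 0 < N) {w : ℝ → ℝ} (hw : Measurable w) (h1 : ∀ x, |w x| ≤ 1)
    (hm : ∀ x ∈ Icc (-N) N, |prim w x| ≤ m) (φ : STest N) :
    |∫ x, w x * φ.toFun x| ≤ m * ∫ x in (-N)..N, |deriv φ.toFun x| := by
  have hz : ∀ x, x ∉ Ioo (-N) N → φ.toFun x = 0 := fun x hx => by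
    by_contra h
    exact hx (φ.supp h)
  have e1 : ∫ x, w x * φ.toFun x = ∫ x in (-N)..N, w x * φ.toFun x := by
    rw [intervalIntegral.integral_of_le (by linarith)]
    refine (setIntegral_eq_integral_of_forall_compl_eq_zero fun x hx => ?_).symm
    rw [hz x fun h => hx ⟨h.1, h.2.le⟩, mul_zero]
  have ibp := (lip_ac (prim_lip hw h1) (-N) N).integral_mul_deriv_eq_deriv_mul
    (φ.c1.contDiffOn.absolutelyContinuousOnInterval (a := -N) (b := N))
  have e2 : ∫ x in (-N)..N, deriv (prim w) x * φ.toFun x = ∫ x in (-N)..N, w x * φ.toFun x :=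
    intervalIntegral.integral_congr_ae (by
      filter_upwards [prim_ae_deriv hw h1] with x hx _
      rw [hx])
  rw [hz N (by simp), hz (-N) (by simp), e2] at ibp
  rw [e1, show ∫ x in (-N)..N, w x * φ.toFun x = -∫ x in (-N)..N, prim w x * deriv φ.toFun x by
    linarith, abs_neg, ← intervalIntegral.integral_const_mul]
  refine (intervalIntegral.abs_integral_le_integral_abs (by linarith)).trans
    (intervalIntegral.integral_mono_on (by linarith) ?_ ?_ fun x hx => ?_)
  · exact (((prim_lip hw h1).continuous.mul φ.dcont).abs).intervalIntegrable _ _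
  · exact (continuous_const.mul φ.dcont.abs).intervalIntegrable _ _
  · rw [abs_mul]
    exact mul_le_mul_of_nonneg_right (hm x hx) (abs_nonneg _)

lemma STest.abs_deriv_le {N : ℝ} (hN : 0 < N) (φ : STest N) (h1 : ∫ x, deriv φ.toFun x ^ 2 = 1) :
    ∫ x in (-N)..N, |deriv φ.toFun x| ≤ N + 1 := by
  have hi : Integrable fun x => deriv φ.toFun x ^ 2 := by
    refine Continuous.integrable_of_hasCompactSupport (φ.dcont.pow 2) ?_
    have := φ.cpt.deriv
    exact this.comp_left (g := fun y : ℝ => y ^ 2) (by simp)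
  have : ∫ x in (-N)..N, |deriv φ.toFun x| ≤ ∫ x in (-N)..N, (1 / 2 + deriv φ.toFun x ^ 2 / 2) := by
    refine intervalIntegral.integral_mono_on (by linarith) (φ.dcont.abs.intervalIntegrable _ _)
      (Continuous.intervalIntegrable (by have := φ.dcont; fun_prop) _ _) fun x _ => ?_
    nlinarith [sq_nonneg (|deriv φ.toFun x| - 1), sq_abs (deriv φ.toFun x)]
  refine this.trans ?_
  rw [intervalIntegral.integral_add (by simp)
    (Continuous.intervalIntegrable (by have := φ.dcont; fun_prop) _ _),
    intervalIntegral.integral_const, intervalIntegral.integral_div]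
  have h2 : ∫ x in (-N)..N, deriv φ.toFun x ^ 2 ≤ 1 := by
    rw [intervalIntegral.integral_of_le (by linarith), ← h1]
    exact setIntegral_le_integral hi (ae_of_all _ fun x => sq_nonneg _)
  rw [smul_eq_mul]
  linarith

lemma neg_bound {N m : ℝ} (hN : 0 < N) {w : ℝ → ℝ} (hw : Measurable w) (h1 : ∀ x, |w x| ≤ 1)
    (hm : ∀ x ∈ Icc (-N) N, |prim w x| ≤ m) {r : ℝ}
    (hr : ∃ φ : STest N, (∫ x, deriv φ.toFun x ^ 2) = 1 ∧ r = ∫ x, w x * φ.toFun x) :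
    |r| ≤ m * (N + 1) := by
  obtain ⟨φ, h, rfl⟩ := hr
  exact (test_bound hN hw h1 hm φ).trans (mul_le_mul_of_nonneg_left (φ.abs_deriv_le hN h)
    ((abs_nonneg _).trans (hm 0 ⟨by linarith, hN.le⟩)))

lemma negNorm_le {N m : ℝ} (hN : 0 < N) {w : ℝ → ℝ} (hw : Measurable w) (h1 : ∀ x, |w x| ≤ 1)
    (hm : ∀ x ∈ Icc (-N) N, |prim w x| ≤ m) : negNorm N w ≤ m * (N + 1) :=
  Real.sSup_le (fun _ hr => (le_abs_self _).trans (neg_bound hN hw h1 hm hr))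
    (mul_nonneg ((abs_nonneg _).trans (hm 0 ⟨by linarith, hN.le⟩)) (by linarith))

lemma prim_le {N : ℝ} {w : ℝ → ℝ} (hw : Measurable w) (h1 : ∀ x, |w x| ≤ 1) :
    ∀ x ∈ Icc (-N) N, |prim w x| ≤ N := fun x hx => by
  have := (prim_lip hw h1).dist_le_mul x 0
  simp only [Real.dist_eq, prim, intervalIntegral.integral_same, sub_zero, NNReal.coe_one,
    one_mul] at this
  exact this.trans (abs_le.2 hx)

lemma neg_bdd {N : ℝ} (hN : 0 < N) {w : ℝ → ℝ} (hw : Measurable w) (h1 : ∀ x, |w x| ≤ 1) :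
    BddAbove {r | ∃ φ : STest N, (∫ x, deriv φ.toFun x ^ 2) = 1 ∧ r = ∫ x, w x * φ.toFun x} :=
  ⟨N * (N + 1), fun _ hr => (le_abs_self _).trans (neg_bound hN hw h1 (prim_le hw h1) hr)⟩

/-- Rescaling of a spatial test function. -/
def STest.smul {N : ℝ} (φ : STest N) (a : ℝ) : STest N where
  toFun x := a * φ.toFun x
  smooth := contDiff_const.mul φ.smooth
  cpt := φ.cpt.mul_left
  supp _ hx := φ.supp (right_ne_zero_of_mul hx)

lemma negNorm_nonneg {N : ℝ} (hN : 0 < N) {w : ℝ → ℝ} (hw : Measurable w) (h1 : ∀ x, |w x| ≤ 1) :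
    0 ≤ negNorm N w := by
  -- with `φ` the set also contains the value at `-φ`
  unfold negNorm
  rcases Set.eq_empty_or_nonempty
    {r | ∃ φ : STest N, (∫ x, deriv φ.toFun x ^ 2) = 1 ∧ r = ∫ x, w x * φ.toFun x} with h | ⟨r, hr⟩
  · rw [h, Real.sSup_empty]
  · have hr' := hr
    obtain ⟨φ, h, rfl⟩ := hr
    have h2 := le_csSup (neg_bdd hN hw h1) hr'
    have h3 := le_csSup (neg_bdd hN hw h1) (a := -∫ x, w x * φ.toFun x) ⟨φ.smul (-1), by
      simpa [STest.smul] using h, by simp [STest.smul, integral_neg]⟩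
    linarith

/-- Normalising `φ` turns the supremum defining `negNorm` into a bound for every test function. -/
lemma pair_le_negNorm {N : ℝ} (hN : 0 < N) {w : ℝ → ℝ} (hw : Measurable w) (h1 : ∀ x, |w x| ≤ 1)
    (φ : STest N) : |∫ x, w x * φ.toFun x| ≤ √(∫ x, deriv φ.toFun x ^ 2) * negNorm N w := by
  set A := ∫ x, deriv φ.toFun x ^ 2 with hA
  have hA0 : 0 ≤ A := integral_nonneg fun x => sq_nonneg _
  rcases hA0.eq_or_lt with h | h
  · have hi : Integrable fun x => deriv φ.toFun x ^ 2 := by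
      refine Continuous.integrable_of_hasCompactSupport (φ.dcont.pow 2) ?_
      exact φ.cpt.deriv.comp_left (g := fun y : ℝ => y ^ 2) (by simp)
    have hz := (integral_eq_zero_iff_of_nonneg (fun x => sq_nonneg _) hi).1 h.symm
    have hz2 : ∫ x in (-N)..N, |deriv φ.toFun x| = ∫ x in (-N)..N, (0:ℝ) :=
      intervalIntegral.integral_congr_ae (by
        filter_upwards [hz] with x hx _
        simpa using hx)
    have := test_bound hN hw h1 (prim_le hw h1) φ
    rw [hz2] at this
    rw [← h]
    simpa using this
  · have hs : 0 < √A := Real.sqrt_pos.2 h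
    have key : ∀ s : ℝ, s ^ 2 = 1 → s * (∫ x, w x * φ.toFun x) ≤ √A * negNorm N w := fun s hs1 => by
      have := le_csSup (neg_bdd hN hw h1) (a := s * (√A)⁻¹ * ∫ x, w x * φ.toFun x)
        ⟨φ.smul (s * (√A)⁻¹), by
          simp only [STest.smul, deriv_const_mul_field', mul_pow, integral_const_mul, hs1, ← hA,
            inv_pow, Real.sq_sqrt h.le, one_mul]
          exact inv_mul_cancel₀ h.ne', by
          rw [← integral_const_mul]
          exact integral_congr_ae (ae_of_all _ fun x => by simp only [STest.smul]; ring)⟩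
      calc s * (∫ x, w x * φ.toFun x) = √A * (s * (√A)⁻¹ * ∫ x, w x * φ.toFun x) := by
            field_simp
        _ ≤ _ := mul_le_mul_of_nonneg_left this hs.le
    rw [abs_le]
    have k1 := key 1 (by norm_num)
    have k2 := key (-1) (by norm_num)
    constructor <;> linarith

/-! ### Time increments against test functions -/

lemma frac_mem {q : ℝ} (hq : 0 ≤ q) : q / (1 + q) ∈ Icc (0:ℝ) 1 :=
  ⟨by positivity, by rw [div_le_one (by linarith)]; linarith⟩

lemma frac_le {q r : ℝ} (hq : 0 ≤ q) (h : q ≤ r) : q / (1 + q) ≤ r := by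
  refine (div_le_self hq (by linarith)).trans h

lemma geo_summable : Summable fun n : ℕ => (2:ℝ)⁻¹ ^ (n + 1) :=
  (summable_nat_add_iff 1).2 (summable_geometric_of_lt_one (by norm_num) (by norm_num))

lemma sub_abs_le {a b : ℝ} (ha : a ∈ Icc (0:ℝ) 1) (hb : b ∈ Icc (0:ℝ) 1) : |a - b| ≤ 1 :=
  abs_le.2 ⟨by linarith [ha.1, hb.2], by linarith [ha.2, hb.1]⟩

lemma dU_summable {u v : ℝ → ℝ} (hu : Measurable u) (hv : Measurable v)
    (hu1 : ∀ x, u x ∈ Icc (0:ℝ) 1) (hv1 : ∀ x, v x ∈ Icc (0:ℝ) 1) :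
    Summable fun n : ℕ => (2:ℝ)⁻¹ ^ (n + 1) * (negNorm ((n:ℝ) + 1) (fun x => u x - v x) /
      (1 + negNorm ((n:ℝ) + 1) (fun x => u x - v x))) := by
  have h := fun n : ℕ => frac_mem (negNorm_nonneg (N := (n:ℝ) + 1) (by positivity) (hu.sub hv)
    fun x => sub_abs_le (hu1 x) (hv1 x))
  refine Summable.of_nonneg_of_le (fun n => mul_nonneg (by positivity) (h n).1) (fun n => ?_)
    geo_summable
  exact mul_le_of_le_one_right (by positivity) (h n).2

lemma term_le_dU {u v : ℝ → ℝ} (hu : Measurable u) (hv : Measurable v)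
    (hu1 : ∀ x, u x ∈ Icc (0:ℝ) 1) (hv1 : ∀ x, v x ∈ Icc (0:ℝ) 1) (n : ℕ) :
    (2:ℝ)⁻¹ ^ (n + 1) * (negNorm ((n:ℝ) + 1) (fun x => u x - v x) /
      (1 + negNorm ((n:ℝ) + 1) (fun x => u x - v x))) ≤ dU u v :=
  (dU_summable hu hv hu1 hv1).le_tsum n fun k _ => mul_nonneg (by positivity)
    (frac_mem (negNorm_nonneg (by positivity) (hu.sub hv) fun x => sub_abs_le (hu1 x) (hv1 x))).1

lemma cU.sl_meas {T : ℝ} (u : cU T) (t : ℝ) : Measurable fun x => u.toFun (t, x) :=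
  u.meas.comp (measurable_const.prodMk measurable_id)

/-- Continuity for `dU` implies weak continuity. -/
lemma pair_cont {T : ℝ} (u : cU T) (n : ℕ) (φ : STest ((n:ℝ) + 1)) :
    ContinuousOn (fun t => ∫ x, u.toFun (t, x) * φ.toFun x) (Icc 0 T) := by
  have hφi : Integrable φ.toFun := φ.smooth.continuous.integrable_of_hasCompactSupport φ.cpt
  have hi : ∀ t, Integrable fun x => u.toFun (t, x) * φ.toFun x := fun t =>
    hφi.bdd_mul (c := 1) (u.sl_meas t).aestronglyMeasurable (ae_of_all _ fun x => by
      rw [Real.norm_eq_abs, abs_of_nonneg (u.mem01 _).1]; exact (u.mem01 _).2)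
  intro t₀ ht₀
  rw [Metric.continuousWithinAt_iff]
  intro δ hδ
  set A := √(∫ x, deriv φ.toFun x ^ 2) with hA
  have hA0 : 0 ≤ A := Real.sqrt_nonneg _
  set η := δ / (A + 1) with hη
  have hη0 : 0 < η := by positivity
  obtain ⟨ζ, hζ, h⟩ := u.cont t₀ ht₀ ((2:ℝ)⁻¹ ^ (n + 1) * (η / (1 + η))) (by positivity)
  refine ⟨ζ, hζ, fun t ht hd => ?_⟩
  have h1 := h t ht hd
  have hb : ∀ x, |u.toFun (t, x) - u.toFun (t₀, x)| ≤ 1 := fun x =>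
    sub_abs_le (u.mem01 _) (u.mem01 _)
  have hm := (u.sl_meas t).sub (u.sl_meas t₀)
  have h2 := (term_le_dU (u.sl_meas t) (u.sl_meas t₀) (fun x => u.mem01 _) (fun x => u.mem01 _)
    n).trans_lt h1
  have h3 := lt_of_mul_lt_mul_left h2 (by positivity)
  have hq := negNorm_nonneg (N := (n:ℝ) + 1) (by positivity) hm hb
  have h4 : negNorm ((n:ℝ) + 1) (fun x => u.toFun (t, x) - u.toFun (t₀, x)) < η := by
    change 0 ≤ negNorm ((n:ℝ) + 1) (fun x => u.toFun (t, x) - u.toFun (t₀, x)) at hq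
    rw [div_lt_div_iff₀ (by linarith) (by linarith)] at h3
    linarith
  have h5 := pair_le_negNorm (N := (n:ℝ) + 1) (by positivity) hm hb φ
  rw [Real.dist_eq, ← integral_sub (hi t) (hi t₀)]
  have e : ∫ x, (u.toFun (t, x) * φ.toFun x - u.toFun (t₀, x) * φ.toFun x) =
      ∫ x, (u.toFun (t, x) - u.toFun (t₀, x)) * φ.toFun x :=
    integral_congr_ae (ae_of_all _ fun x => by ring)
  rw [e]
  calc _ ≤ A * negNorm ((n:ℝ) + 1) (fun x => u.toFun (t, x) - u.toFun (t₀, x)) := h5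
    _ ≤ A * η := mul_le_mul_of_nonneg_left h4.le hA0
    _ < (A + 1) * η := by nlinarith
    _ = δ := by rw [hη]; field_simp

/-- An almost everywhere increment bound in the interior extends to all times by continuity. -/
lemma ext_ae {T A B : ℝ} {g : ℝ → ℝ} (hg : ContinuousOn g (Icc 0 T)) (hA : 0 ≤ A)
    (h : ∀ a b, 0 < a → a < b → b < T → ∀ᵐ t ∂(volume.restrict (Icc a b)),
      ∀ᵐ s ∂(volume.restrict (Icc a b)), s ≤ t → |g t - g s| ≤ A * (t - s) + B)
    (hB : 0 ≤ B) {s t : ℝ} (hs : s ∈ Icc 0 T) (ht : t ∈ Icc 0 T) (hst : s ≤ t) :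
    |g t - g s| ≤ A * (t - s) + B := by
  rcases hst.eq_or_lt with rfl | hst
  · simpa using hB
  refine le_of_forall_pos_le_add fun δ hδ => ?_
  obtain ⟨e1, he1, h1⟩ := Metric.continuousWithinAt_iff.1 (hg s hs) (δ / 2) (by positivity)
  obtain ⟨e2, he2, h2⟩ := Metric.continuousWithinAt_iff.1 (hg t ht) (δ / 2) (by positivity)
  obtain ⟨e, he, h3, h4, h5⟩ : ∃ e > 0, e < e1 ∧ e < e2 ∧ e < (t - s) / 2 := by
    refine ⟨min (min e1 e2) ((t - s) / 2) / 2, by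
      have : 0 < t - s := by linarith
      positivity, ?_, ?_, ?_⟩
    all_goals
      have i1 := min_le_left (min e1 e2) ((t - s) / 2)
      have i2 := min_le_right (min e1 e2) ((t - s) / 2)
      have i3 := min_le_left e1 e2
      have i4 := min_le_right e1 e2
      linarith
  have hh := h (s + e / 2) (t - e / 2) (by linarith [hs.1]) (by linarith) (by linarith [ht.2])
  have exI : ∀ {P : ℝ → Prop} {a b c d : ℝ}, (∀ᵐ x ∂(volume.restrict (Icc a b)), P x) → a ≤ c →
      c < d → d ≤ b → ∃ x ∈ Icc c d, P x := by
    intro P a b c d hP hac hcd hdb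
    have hP' : ∀ᵐ x ∂(volume.restrict (Icc c d)), P x :=
      ae_restrict_of_ae_restrict_of_subset (Icc_subset_Icc hac hdb) hP
    have hne : (volume.restrict (Icc c d)) ≠ 0 := by
      rw [Ne, Measure.restrict_eq_zero, Real.volume_Icc, ENNReal.ofReal_eq_zero]
      linarith
    have : (ae (volume.restrict (Icc c d))).NeBot := ae_neBot.2 hne
    obtain ⟨x, hx⟩ := (hP'.and (ae_restrict_mem measurableSet_Icc)).exists
    exact ⟨x, hx.2, hx.1⟩
  obtain ⟨t', ht', hP⟩ := exI hh (c := t - e) (d := t - e / 2) (by linarith) (by linarith) le_rfl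
  obtain ⟨s', hs', hP⟩ := exI hP (c := s + e / 2) (d := s + e) le_rfl (by linarith) (by linarith)
  have hk := hP (by linarith [hs'.2, ht'.1])
  have d1 := h1 (x := s') ⟨by linarith [hs.1, hs'.1], by linarith [ht.2, hs'.2]⟩ (by
    rw [Real.dist_eq, abs_lt]; constructor <;> linarith [hs'.1, hs'.2])
  have d2 := h2 (x := t') ⟨by linarith [hs.1, ht'.1], by linarith [ht.2, ht'.2]⟩ (by
    rw [Real.dist_eq, abs_lt]; constructor <;> linarith [ht'.1, ht'.2])
  rw [Real.dist_eq] at d1 d2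
  have hA2 : A * (t' - s') ≤ A * (t - s) :=
    mul_le_mul_of_nonneg_left (by linarith [hs'.1, ht'.2]) hA
  have := abs_le.1 hk
  have := abs_lt.1 d1
  have := abs_lt.1 d2
  rw [abs_le]
  constructor <;> linarith

/-- Equicontinuity in time, tested against a fixed function: the flux is the sum of a bounded
term and of a term bounded in `L²`, which is interpolated with the free parameter `l`. -/
lemma time_est {f D σ : ℝ → ℝ} {Cf c CD Cσ T M : ℝ} (hc : Coef f D σ Cf c CD Cσ) (hM : 0 < M)
    (hT : 0 < T) (n : ℕ) : ∃ C : ℝ, 0 ≤ C ∧ ∀ ε ∈ Ioc (0:ℝ) 1, ∀ u : cU T,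
      Heps f D σ T ε u ≤ ENNReal.ofReal M → ∀ φ : STest ((n:ℝ) + 1), ∀ K l : ℝ, 0 < l →
      (∀ x, |deriv φ.toFun x| ≤ K) → ∀ s ∈ Icc 0 T, ∀ t ∈ Icc 0 T, s ≤ t →
      |(∫ x, u.toFun (t, x) * φ.toFun x) - ∫ x, u.toFun (s, x) * φ.toFun x| ≤
        K * ((Cf + l) * (2 * ((n:ℝ) + 1))) * (t - s) + K * (C / l) := by
  set R : ℝ := (n:ℝ) + 1 with hR
  have hR0 : 0 < R := by positivity
  obtain ⟨C, hC, hdis⟩ := dis_bound hc hM hT hR0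
  refine ⟨C, hC, fun ε hε u hH φ K l hl hK => ?_⟩
  obtain ⟨w, P, hPm, hPi, hPb, hs⟩ := cost_repr hc hε.1 hM u hH
  set Φ : ℝ × ℝ → ℝ := fun p => f (u.toFun p) - (ε / 2 * (D (u.toFun p) * w p) -
    √(σ (u.toFun p)) * P p) with hΦ
  have hK0 : 0 ≤ K := (abs_nonneg _).trans (hK 0)
  have hCf : 0 ≤ Cf := (abs_nonneg _).trans (hc.fb 0 (by simp))
  intro s hs0 t ht0 hst
  -- The identity `time_lim` holds for almost all pairs of interior times only.
  refine ext_ae (pair_cont u n φ) (by positivity) (fun a b ha hab hb => ?_) (by positivity)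
    hs0 ht0 hst
  have hz : ∀ x, x ∉ Ioo (-R) R → φ.toFun x = 0 := fun x hx => by
    by_contra h
    exact hx (φ.supp h)
  obtain ⟨U, Ph, G, hA⟩ := exists_approx hs ha hb hR0
  have hcv : ∀ t, ∫ x, u.toFun (t, x) * φ.toFun x =
      ∫ x in Icc (-R) R, φ.toFun x * u.toFun (t, x) := fun t => by
    rw [← setIntegral_eq_integral_of_forall_compl_eq_zero (s := Icc (-R) R)]
    · simp_rw [mul_comm]
    · intro x hx
      rw [hz x fun h => hx ⟨h.1.le, h.2.le⟩, mul_zero]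
  filter_upwards [time_lim hA hR0.le φ.c1 (hz R (by simp)) (hz (-R) (by simp)),
    ae_restrict_mem measurableSet_Icc] with t h1 htm
  filter_upwards [h1, ae_restrict_mem measurableSet_Icc] with s h2 hsm hst
  rw [hcv, hcv, h2 hst]
  have hs1 : 0 < s := ha.trans_le hsm.1
  have ht1 : t < T := htm.2.trans_lt hb
  have hd := hdis ε s t u.toFun w P hε.1 hε.2 hs1 hst ht1 hPm hPi hPb hs
  have hJ := hs.J2i hs1.le ht1.le hR0 hc.fc hc.fb
  have hdi := hs.disi (ε := ε) hs1.le ht1.le hR0 hc.fc hc.fb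
  have hJb : ∫ p in Rect s t R, (f (u.toFun p) - Φ p) ^ 2 ≤ C := by
    refine (integral_mono hJ hdi fun p => ?_).trans hd
    have e0 := hε.1
    have : (f (u.toFun p) - Φ p) ^ 2 ≤ (f (u.toFun p) - Φ p) ^ 2 / ε :=
      le_div_self (sq_nonneg _) hε.1 hε.2
    have : 0 ≤ ε * w p ^ 2 := by positivity
    change (f (u.toFun p) - Φ p) ^ 2 ≤ ε * w p ^ 2 + (f (u.toFun p) - Φ p) ^ 2 / ε
    linarith
  have hmaj : IntegrableOn (fun p => K * ((Cf + l) + (f (u.toFun p) - Φ p) ^ 2 / l))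
      (Rect s t R) := ((rect_const s t R (Cf + l)).add (hJ.div_const l)).const_mul K
  rw [← Real.norm_eq_abs]
  refine (norm_integral_le_of_norm_le hmaj (ae_of_all _ fun p => ?_)).trans ?_
  · rw [Real.norm_eq_abs, abs_mul]
    refine mul_le_mul (hK _) ?_ (abs_nonneg _) hK0
    have i1 := hc.fb _ (hs.u01 p)
    have i2 : |f (u.toFun p) - Φ p| ≤ l + (f (u.toFun p) - Φ p) ^ 2 / l := by
      rw [← sq_abs]
      set y := |f (u.toFun p) - Φ p|
      have : l + y ^ 2 / l - y = ((l - y) ^ 2 + l * y) / l := by field_simp; ring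
      have : 0 ≤ ((l - y) ^ 2 + l * y) / l := by positivity
      linarith
    have i3 : |Φ p| ≤ |f (u.toFun p)| + |f (u.toFun p) - Φ p| := by
      have := abs_sub (f (u.toFun p)) (f (u.toFun p) - Φ p)
      simpa using this
    linarith
  · rw [integral_const_mul, integral_add (rect_const s t R (Cf + l)) (hJ.div_const l),
      integral_div, setIntegral_const, rect_vol hst hR0.le, smul_eq_mul]
    have : (∫ p in Rect s t R, (f (u.toFun p) - Φ p) ^ 2) / l ≤ C / l :=
      div_le_div_of_nonneg_right hJb hl.le
    have := mul_le_mul_of_nonneg_left this hK0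
    linarith

/-! ### Equicontinuity in time -/

lemma trans_deriv_bound : ∃ K : ℝ, 0 ≤ K ∧ ∀ x, |deriv Real.smoothTransition x| ≤ K := by
  have hc : Continuous (deriv Real.smoothTransition) :=
    (Real.smoothTransition.contDiff (n := 1)).continuous_deriv le_rfl
  obtain ⟨K, hK⟩ := (isCompact_Icc (a := (0:ℝ)) (b := 1)).exists_bound_of_continuousOn
    hc.continuousOn
  have hK0 : 0 ≤ K := (norm_nonneg _).trans (hK 0 (by simp))
  refine ⟨K, hK0, fun x => ?_⟩
  by_cases hx : x ∈ Icc (0:ℝ) 1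
  · exact hK x hx
  · have : deriv Real.smoothTransition x = 0 := by
      rw [mem_Icc, not_and_or, not_le, not_le] at hx
      rcases hx with h | h
      · have : Real.smoothTransition =ᶠ[𝓝 x] fun _ => 0 := by
          filter_upwards [Iio_mem_nhds h] with y hy
          exact Real.smoothTransition.zero_of_nonpos (le_of_lt hy)
        rw [this.deriv_eq, deriv_const]
      · have : Real.smoothTransition =ᶠ[𝓝 x] fun _ => 1 := by
          filter_upwards [Ioi_mem_nhds h] with y hy
          exact Real.smoothTransition.one_of_one_le (le_of_lt hy)
        rw [this.deriv_eq, deriv_const]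
    rw [this, abs_zero]
    exact hK0

/-- A smooth approximation of the signed indicator function of the interval from `0` to `x`,
with transition layers of width `ρ`. -/
def stp (ρ x z : ℝ) : ℝ := Real.smoothTransition (z / ρ) - Real.smoothTransition ((z - x) / ρ)

lemma stp_zero {ρ x z : ℝ} (hρ : 0 < ρ) (hz : z ∉ Icc (-|x|) (|x| + ρ)) :
    stp ρ x z = 0 := by
  unfold stp
  have h1 := neg_abs_le x
  have h2 := le_abs_self x
  have h3 := abs_nonneg x
  rw [mem_Icc, not_and_or, not_le, not_le] at hz
  rcases hz with h | h
  · rw [Real.smoothTransition.zero_of_nonpos, Real.smoothTransition.zero_of_nonpos, sub_zero]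
    · exact div_nonpos_of_nonpos_of_nonneg (by linarith) hρ.le
    · exact div_nonpos_of_nonpos_of_nonneg (by linarith) hρ.le
  · rw [Real.smoothTransition.one_of_one_le, Real.smoothTransition.one_of_one_le, sub_self]
    · rw [le_div_iff₀ hρ]; linarith
    · rw [le_div_iff₀ hρ]; linarith

/-- `stp` as a test function. -/
def stpTest {ρ x R : ℝ} (hρ : 0 < ρ) (hx : |x| + ρ < R) : STest R where
  toFun := stp ρ x
  smooth := by
    unfold stp
    exact (Real.smoothTransition.contDiff.comp (contDiff_id.div_const ρ)).sub
      (Real.smoothTransition.contDiff.comp ((contDiff_id.sub contDiff_const).div_const ρ))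
  cpt := HasCompactSupport.intro isCompact_Icc fun _ hz => stp_zero hρ hz
  supp z hz := by
    have h : z ∈ Icc (-|x|) (|x| + ρ) := by
      by_contra h
      exact hz (stp_zero hρ h)
    exact ⟨by linarith [h.1], by linarith [h.2]⟩

lemma stp_deriv {K ρ : ℝ} (hK : ∀ x, |deriv Real.smoothTransition x| ≤ K) (hρ : 0 < ρ) (x z : ℝ) :
    |deriv (stp ρ x) z| ≤ 2 * K / ρ := by
  have hd : ∀ y, HasDerivAt Real.smoothTransition (deriv Real.smoothTransition y) y := fun y =>
    ((Real.smoothTransition.contDiff (n := 1)).differentiable one_ne_zero y).hasDerivAt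
  have h1 := (hd (z / ρ)).comp z ((hasDerivAt_id z).div_const ρ)
  have h2 := (hd ((z - x) / ρ)).comp z (((hasDerivAt_id z).sub_const x).div_const ρ)
  have h3 : HasDerivAt (stp ρ x) _ z := h1.sub h2
  rw [h3.deriv]
  have e : ∀ y, |deriv Real.smoothTransition y * (1 / ρ)| ≤ K / ρ := fun y => by
    rw [abs_mul, abs_of_pos (by positivity : 0 < 1 / ρ), mul_one_div]
    exact div_le_div_of_nonneg_right (hK y) hρ.le
  refine (abs_sub _ _).trans ?_
  have := e (z / ρ)
  have := e ((z - x) / ρ)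
  rw [two_mul, add_div]
  linarith

/-- A smooth step differs from a sharp one only in a layer of width `ρ`. -/
lemma layer {w : ℝ → ℝ} (hw : Measurable w) (h1 : ∀ x, |w x| ≤ 1) {ρ R c : ℝ} (hρ : 0 < ρ)
    (hc1 : -R ≤ c) (hc2 : c + ρ ≤ R) :
    |(∫ z in (-R)..R, w z * Real.smoothTransition ((z - c) / ρ)) - ∫ z in c..R, w z| ≤ ρ := by
  set S : ℝ → ℝ := fun z => w z * Real.smoothTransition ((z - c) / ρ) with hS
  have hSm : Measurable S := hw.mul (Real.smoothTransition.continuous.measurable.comp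
    ((measurable_id.sub_const c).div_const ρ))
  have hSb : ∀ z, |S z| ≤ 1 := fun z => by
    rw [hS, abs_mul, abs_of_nonneg (Real.smoothTransition.nonneg _)]
    exact mul_le_one₀ (h1 z) (Real.smoothTransition.nonneg _) (Real.smoothTransition.le_one _)
  have hSi := bdd_ii hSm hSb
  have hwi := bdd_ii hw h1
  have e1 : ∫ z in (-R)..R, S z = (∫ z in (-R)..c, S z) + ((∫ z in c..(c + ρ), S z) +
      ∫ z in (c + ρ)..R, S z) := by
    rw [intervalIntegral.integral_add_adjacent_intervals (hSi _ _) (hSi _ _),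
      intervalIntegral.integral_add_adjacent_intervals (hSi _ _) (hSi _ _)]
  have e2 : ∫ z in c..R, w z = (∫ z in c..(c + ρ), w z) + ∫ z in (c + ρ)..R, w z :=
    (intervalIntegral.integral_add_adjacent_intervals (hwi _ _) (hwi _ _)).symm
  have e3 : ∫ z in (-R)..c, S z = ∫ z in (-R)..c, (0:ℝ) :=
    intervalIntegral.integral_congr fun z hz => by
      rw [uIcc_of_le hc1] at hz
      simp only [hS]
      rw [Real.smoothTransition.zero_of_nonpos, mul_zero]
      exact div_nonpos_of_nonpos_of_nonneg (by linarith [hz.2]) hρ.le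
  have e4 : ∫ z in (c + ρ)..R, S z = ∫ z in (c + ρ)..R, w z :=
    intervalIntegral.integral_congr fun z hz => by
      rw [uIcc_of_le hc2] at hz
      simp only [hS]
      rw [Real.smoothTransition.one_of_one_le, mul_one]
      rw [le_div_iff₀ hρ]
      linarith [hz.1]
  rw [e1, e2, e3, e4, intervalIntegral.integral_zero, zero_add, add_sub_add_right_eq_sub,
    ← intervalIntegral.integral_sub (hSi _ _) (hwi _ _)]
  have := intervalIntegral.norm_integral_le_of_norm_le_const (f := fun z => S z - w z) (C := 1)
    (a := c) (b := c + ρ) (fun z _ => by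
      have e : S z - w z = w z * (Real.smoothTransition ((z - c) / ρ) - 1) := by
        simp only [hS]; ring
      rw [e, Real.norm_eq_abs, abs_mul]
      refine mul_le_one₀ (h1 z) (abs_nonneg _) (abs_le.2 ⟨?_, ?_⟩)
      · linarith [Real.smoothTransition.nonneg ((z - c) / ρ)]
      · linarith [Real.smoothTransition.le_one ((z - c) / ρ)])
  simpa [abs_of_pos hρ] using this

/-- Testing against `stp` approximates the primitive. -/
lemma stp_prim {w : ℝ → ℝ} (hw : Measurable w) (h1 : ∀ x, |w x| ≤ 1) {ρ R x : ℝ} (hρ : 0 < ρ)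
    (hx : |x| + ρ < R) : |(∫ z, w z * stp ρ x z) - prim w x| ≤ 2 * ρ := by
  have b1 := neg_abs_le x
  have b2 := le_abs_self x
  have b3 := abs_nonneg x
  have l1 := layer hw h1 (R := R) (c := 0) hρ (by linarith) (by linarith)
  have l2 := layer hw h1 (R := R) (c := x) hρ (by linarith) (by linarith)
  have hR : -R ≤ R := by linarith
  have e1 : ∫ z, w z * stp ρ x z = ∫ z in (-R)..R, w z * stp ρ x z := by
    rw [intervalIntegral.integral_of_le hR]
    refine (setIntegral_eq_integral_of_forall_compl_eq_zero fun z hz => ?_).symm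
    rw [stp_zero hρ fun h => hz ⟨by linarith [h.1], by linarith [h.2]⟩, mul_zero]
  have hi : ∀ c, IntervalIntegrable (fun z => w z * Real.smoothTransition ((z - c) / ρ)) volume
      (-R) R := fun c => by
    refine bdd_ii (C := 1) (hw.mul (Real.smoothTransition.continuous.measurable.comp
      ((measurable_id.sub_const c).div_const ρ))) (fun z => ?_) _ _
    change |w z * Real.smoothTransition ((z - c) / ρ)| ≤ 1
    rw [abs_mul, abs_of_nonneg (Real.smoothTransition.nonneg _)]
    exact mul_le_one₀ (h1 z) (Real.smoothTransition.nonneg _) (Real.smoothTransition.le_one _)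
  have e2 : ∫ z in (-R)..R, w z * stp ρ x z =
      (∫ z in (-R)..R, w z * Real.smoothTransition ((z - 0) / ρ)) -
      ∫ z in (-R)..R, w z * Real.smoothTransition ((z - x) / ρ) := by
    rw [← intervalIntegral.integral_sub (hi 0) (hi x)]
    refine intervalIntegral.integral_congr fun z _ => ?_
    simp only [stp, sub_zero]
    ring
  have e3 : prim w x = (∫ z in (0:ℝ)..R, w z) - ∫ z in x..R, w z := by
    rw [← prim_sub hw h1, ← prim_sub hw h1]
    simp [prim]
  rw [e1, e2, e3]
  have := abs_le.1 l1
  have := abs_le.1 l2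
  rw [abs_le]
  constructor <;> linarith

/-- Equicontinuity in time of the primitives in space, uniformly on sublevel sets of the cost. -/
lemma time_mod {f D σ : ℝ → ℝ} {Cf c CD Cσ T M r : ℝ} (hc : Coef f D σ Cf c CD Cσ) (hM : 0 < M)
    (hT : 0 < T) (n : ℕ) (hr : 0 < r) : ∃ d > 0, ∀ ε ∈ Ioc (0:ℝ) 1, ∀ u : cU T,
      Heps f D σ T ε u ≤ ENNReal.ofReal M → ∀ s ∈ Icc 0 T, ∀ t ∈ Icc 0 T, |t - s| < d →
      ∀ x ∈ Icc (-(n:ℝ)) n,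
        |prim (fun y => u.toFun (t, y)) x - prim (fun y => u.toFun (s, y)) x| ≤ r := by
  obtain ⟨C, hC, hest⟩ := time_est hc hM hT (n + 1)
  obtain ⟨K₀, hK₀, hKb⟩ := trans_deriv_bound
  have hCf : 0 ≤ Cf := (abs_nonneg _).trans (hc.fb 0 (by simp))
  set ρ := min (1 / 2) (r / 4) with hρ
  have hρ0 : 0 < ρ := by positivity
  have hρ1 : ρ ≤ 1 / 2 := min_le_left _ _
  have hρ2 : ρ ≤ r / 4 := min_le_right _ _
  set K := 2 * K₀ / ρ with hK
  have hK0 : 0 ≤ K := by positivity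
  -- This choice of `l` makes the error `K C / l` of `time_est` at most `r / 4`.
  set l := 4 * (K * C) / r + 1 with hl
  have hl0 : 0 < l := by positivity
  set A := K * ((Cf + l) * (2 * (((n + 1 : ℕ) : ℝ) + 1))) with hA
  have hA0 : 0 ≤ A := by positivity
  refine ⟨r / (4 * (A + 1)), by positivity, fun ε hε u hH => ?_⟩
  have key : ∀ s ∈ Icc 0 T, ∀ t ∈ Icc 0 T, s ≤ t → |t - s| < r / (4 * (A + 1)) →
      ∀ x ∈ Icc (-(n:ℝ)) n,
        |prim (fun y => u.toFun (t, y)) x - prim (fun y => u.toFun (s, y)) x| ≤ r := by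
    intro s hs t ht hst hd x hx
    have hxR : |x| + ρ < ((n + 1 : ℕ) : ℝ) + 1 := by
      have := abs_le.2 hx
      push_cast
      linarith
    have h1 := hest ε hε u hH (stpTest hρ0 hxR) K l hl0 (stp_deriv hKb hρ0 x) s hs t ht hst
    change |(∫ z, u.toFun (t, z) * stp ρ x z) - ∫ z, u.toFun (s, z) * stp ρ x z| ≤ _ at h1
    have hst1 : ∀ p, |u.toFun p| ≤ 1 := fun p =>
      abs_le.2 ⟨by linarith [(u.mem01 p).1], (u.mem01 p).2⟩
    have hsi : Integrable (stp ρ x) :=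
      (stpTest hρ0 hxR).smooth.continuous.integrable_of_hasCompactSupport (stpTest hρ0 hxR).cpt
    have hi : ∀ t, Integrable fun z => u.toFun (t, z) * stp ρ x z := fun t =>
      hsi.bdd_mul (c := 1) (u.sl_meas t).aestronglyMeasurable (ae_of_all _ fun z => hst1 _)
    have hw := (u.sl_meas t).sub (u.sl_meas s)
    have h2 := stp_prim hw (fun z => sub_abs_le (u.mem01 (t, z)) (u.mem01 (s, z))) hρ0 hxR
    have e1 : ∫ z, ((fun y => u.toFun (t, y)) - fun y => u.toFun (s, y)) z * stp ρ x z =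
        (∫ z, u.toFun (t, z) * stp ρ x z) - ∫ z, u.toFun (s, z) * stp ρ x z := by
      rw [← integral_sub (hi t) (hi s)]
      exact integral_congr_ae (ae_of_all _ fun z => by simp only [Pi.sub_apply]; ring)
    have e2 : prim ((fun y => u.toFun (t, y)) - fun y => u.toFun (s, y)) x =
        prim (fun y => u.toFun (t, y)) x - prim (fun y => u.toFun (s, y)) x :=
      intervalIntegral.integral_sub (bdd_ii (u.sl_meas t) (fun z => hst1 _) _ _)
        (bdd_ii (u.sl_meas s) (fun z => hst1 _) _ _)
    rw [e1, e2] at h2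
    have h3 : A * (t - s) ≤ r / 4 := by
      have i1 : t - s ≤ r / (4 * (A + 1)) := (le_abs_self _).trans hd.le
      calc A * (t - s) ≤ (A + 1) * (t - s) :=
            mul_le_mul_of_nonneg_right (by linarith) (by linarith)
        _ ≤ (A + 1) * (r / (4 * (A + 1))) := mul_le_mul_of_nonneg_left i1 (by linarith)
        _ = r / 4 := by field_simp
    have h4 : K * (C / l) ≤ r / 4 := by
      rw [← mul_div_assoc, div_le_iff₀ hl0, hl]
      have : r / 4 * (4 * (K * C) / r + 1) = K * C + r / 4 := by field_simp
      linarith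
    have := abs_le.1 h1
    have := abs_le.1 h2
    rw [abs_le]
    constructor <;> linarith
  intro s hs t ht hd x hx
  rcases le_total s t with h | h
  · exact key s hs t ht h hd x hx
  · rw [abs_sub_comm]
    exact key t ht s hs h (by rwa [abs_sub_comm]) x hx

/-! ### Arzelà–Ascoli and the metric on `U` -/

/-- Arzelà–Ascoli: a pointwise bounded, equicontinuous sequence has a subsequence converging
uniformly on compact sets. -/
lemma ascoli {F : ℕ → ℝ × ℝ → ℝ} {b : ℝ × ℝ → ℝ} (hb : ∀ j p, |F j p| ≤ b p)
    (hF : ∀ p, ∀ r > 0, ∀ᶠ q in 𝓝 p, ∀ j, |F j p - F j q| ≤ r) :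
    ∃ G : ℝ × ℝ → ℝ, Continuous G ∧ ∃ s : ℕ → ℕ, StrictMono s ∧ ∀ K, IsCompact K →
      TendstoUniformlyOn (fun j => F (s j)) G atTop K := by
  let P : (ℝ × ℝ → ℝ) → Prop := fun g => (∀ p, |g p| ≤ b p) ∧
    ∀ p q r, (∀ j, |F j p - F j q| ≤ r) → |g p - g q| ≤ r
  have hPc : ∀ g, P g → Continuous g := fun g hg => continuous_iff_continuousAt.2 fun p => by
    rw [ContinuousAt, Metric.tendsto_nhds]
    intro r hr
    filter_upwards [hF p (r / 2) (by positivity)] with q hq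
    rw [dist_comm, Real.dist_eq]
    linarith [hg.2 p q _ hq]
  have hPF : ∀ j, P (F j) := fun j => ⟨hb j, fun p q r h => h j⟩
  let S : Set C(ℝ × ℝ, ℝ) := {g | P g}
  have hS1 : IsCompact (ContinuousMap.toFun '' S) := by
    have e : ContinuousMap.toFun '' S = {g | P g} := by
      ext g
      constructor
      · rintro ⟨g, hg, rfl⟩
        exact hg
      · exact fun hg => ⟨⟨g, hPc g hg⟩, hg, rfl⟩
    rw [e]
    refine IsCompact.of_isClosed_subset
      (isCompact_univ_pi fun p => isCompact_Icc (a := -b p) (b := b p)) ?_ fun g hg p _ =>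
        abs_le.1 (hg.1 p)
    have e2 : {g | P g} = (⋂ p, {g : ℝ × ℝ → ℝ | |g p| ≤ b p}) ∩
        ⋂ p, ⋂ q, ⋂ r, ⋂ _ : ∀ j, |F j p - F j q| ≤ r, {g : ℝ × ℝ → ℝ | |g p - g q| ≤ r} := by
      ext g
      simp [P]
    rw [e2]
    refine (isClosed_iInter fun p => isClosed_le (by fun_prop) continuous_const).inter
      (isClosed_iInter fun p => isClosed_iInter fun q => isClosed_iInter fun r =>
        isClosed_iInter fun _ => isClosed_le (by fun_prop) continuous_const)
  have hS2 : Equicontinuous ((↑) : S → ℝ × ℝ → ℝ) := fun p => by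
    rw [Metric.equicontinuousAt_iff_right]
    intro r hr
    filter_upwards [hF p (r / 2) (by positivity)] with q hq g
    rw [Real.dist_eq]
    linarith [g.2.2 p q _ hq]
  have hS := ArzelaAscoli.isCompact_of_equicontinuous S hS1 hS2
  obtain ⟨G, -, s, hs, hlim⟩ := hS.tendsto_subseq (x := fun j => ⟨F j, hPc _ (hPF j)⟩) hPF
  exact ⟨G, G.continuous, s, hs, ContinuousMap.tendsto_iff_forall_isCompact_tendstoUniformlyOn.1 hlim⟩

lemma dU_nonneg {u v : ℝ → ℝ} (hu : Measurable u) (hv : Measurable v)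
    (hu1 : ∀ x, u x ∈ Icc (0:ℝ) 1) (hv1 : ∀ x, v x ∈ Icc (0:ℝ) 1) : 0 ≤ dU u v :=
  tsum_nonneg fun n => mul_nonneg (by positivity)
    (frac_mem (negNorm_nonneg (N := (n:ℝ) + 1) (by positivity) (hu.sub hv)
      fun x => sub_abs_le (hu1 x) (hv1 x))).1

/-- Functions whose primitives are uniformly close on a large interval are close for `dU`. -/
lemma dU_small {δ : ℝ} (hδ : 0 < δ) : ∃ (N : ℕ) (m : ℝ), 0 < m ∧ ∀ u v : ℝ → ℝ, Measurable u →
    Measurable v → (∀ x, u x ∈ Icc (0:ℝ) 1) → (∀ x, v x ∈ Icc (0:ℝ) 1) →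
    (∀ x ∈ Icc (-(N:ℝ)) N, |prim u x - prim v x| ≤ m) → dU u v < δ := by
  have ht := tendsto_sum_nat_add fun n : ℕ => (2:ℝ)⁻¹ ^ (n + 1)
  obtain ⟨N, hN⟩ := (ht.eventually (gt_mem_nhds (half_pos hδ))).exists
  refine ⟨N, δ / (4 * ((N:ℝ) + 1) ^ 2), by positivity, fun u v hu hv hu1 hv1 h => ?_⟩
  set m := δ / (4 * ((N:ℝ) + 1) ^ 2) with hm
  have hm0 : 0 < m := by positivity
  have hb1 : ∀ x, |u x - v x| ≤ 1 := fun x => sub_abs_le (hu1 x) (hv1 x)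
  have hua : ∀ x, |u x| ≤ 1 := fun x => abs_le.2 ⟨by linarith [(hu1 x).1], (hu1 x).2⟩
  have hva : ∀ x, |v x| ≤ 1 := fun x => abs_le.2 ⟨by linarith [(hv1 x).1], (hv1 x).2⟩
  have hs := dU_summable hu hv hu1 hv1
  unfold dU
  rw [← hs.sum_add_tsum_nat_add N]
  have hq := fun n : ℕ => negNorm_nonneg (N := (n:ℝ) + 1) (by positivity) (hu.sub hv) hb1
  have t2 : ∑' n : ℕ, (2:ℝ)⁻¹ ^ (n + N + 1) * (negNorm (((n + N : ℕ):ℝ) + 1) (fun x => u x - v x) /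
      (1 + negNorm (((n + N : ℕ):ℝ) + 1) (fun x => u x - v x))) ≤
      ∑' n : ℕ, (2:ℝ)⁻¹ ^ (n + N + 1) :=
    ((summable_nat_add_iff N).2 hs).tsum_le_tsum (fun n =>
      mul_le_of_le_one_right (by positivity) (frac_mem (hq (n + N))).2)
      ((summable_nat_add_iff N).2 geo_summable)
  have t1 : ∑ n ∈ Finset.range N, (2:ℝ)⁻¹ ^ (n + 1) * (negNorm ((n:ℝ) + 1) (fun x => u x - v x) /
      (1 + negNorm ((n:ℝ) + 1) (fun x => u x - v x))) ≤
      ∑ n ∈ Finset.range N, m * ((N:ℝ) + 1) := by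
    refine Finset.sum_le_sum fun n hn => ?_
    have hnN : (n:ℝ) + 1 ≤ N := by exact_mod_cast Finset.mem_range.1 hn
    have i1 : negNorm ((n:ℝ) + 1) (fun x => u x - v x) ≤ m * ((n:ℝ) + 1 + 1) := by
      refine negNorm_le (by positivity) (hu.sub hv) hb1 fun x hx => ?_
      have e : prim (u - v) x = prim u x - prim v x :=
        intervalIntegral.integral_sub (bdd_ii hu hua _ _) (bdd_ii hv hva _ _)
      change |prim (u - v) x| ≤ m
      rw [e]
      exact h x ⟨by linarith [hx.1], by linarith [hx.2]⟩
    have i2 := frac_le (hq n) i1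
    have i3 : (2:ℝ)⁻¹ ^ (n + 1) ≤ 1 := pow_le_one₀ (by norm_num) (by norm_num)
    refine (mul_le_of_le_one_left (frac_mem (hq n)).1 i3).trans (i2.trans ?_)
    exact mul_le_mul_of_nonneg_left (by linarith) hm0.le
  rw [Finset.sum_const, Finset.card_range, nsmul_eq_mul] at t1
  have t3 : (N:ℝ) * (m * ((N:ℝ) + 1)) ≤ δ / 4 := by
    have : m * ((N:ℝ) + 1) ^ 2 = δ / 4 := by rw [hm]; field_simp
    nlinarith
  have hN' : ∑' n : ℕ, (2:ℝ)⁻¹ ^ (n + N + 1) < δ / 2 := hN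
  linarith

/-- The average of `v` over `[x, x + h]` is `L¹`-close to `v` when small translates of `v` are. -/
lemma avg_est {v : ℝ × ℝ → ℝ} (hv : Measurable v) (hv1 : ∀ p, v p ∈ Icc (0:ℝ) 1) {a b N h r : ℝ}
    (h0 : 0 < h) (hr : ∀ y, 0 < y → y ≤ h → ∫ p in Rect a b N, |dl y v p| ≤ r) :
    ∫ p in Rect a b N, |h⁻¹ * (prim (fun y => v (p.1, y)) (p.2 + h) -
      prim (fun y => v (p.1, y)) p.2) - v p| ≤ r := by
  have hva : ∀ p, |v p| ≤ 1 := fun x => abs_le.2 ⟨by linarith [(hv1 x).1], (hv1 x).2⟩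
  have hfin : IsFiniteMeasure (volume.restrict (Rect a b N)) :=
    ⟨by rw [Measure.restrict_apply_univ]; exact rect_lt_top a b N⟩
  have hfin2 : IsFiniteMeasure (volume.restrict (Ioc 0 h)) :=
    ⟨by rw [Measure.restrict_apply_univ]; exact measure_Ioc_lt_top⟩
  have hjm : Measurable fun q : (ℝ × ℝ) × ℝ => |dl q.2 v q.1| := by
    unfold dl
    exact ((hv.comp ((measurable_fst.comp measurable_fst).prodMk
      ((measurable_snd.comp measurable_fst).add measurable_snd))).sub
      (hv.comp measurable_fst)).abs
  have hjb : ∀ p y, |dl y v p| ≤ 1 := fun p y => sub_abs_le (hv1 _) (hv1 _)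
  have hji : Integrable (Function.uncurry fun (p : ℝ × ℝ) (y : ℝ) => |dl y v p|)
      ((volume.restrict (Rect a b N)).prod (volume.restrict (Ioc 0 h))) :=
    Integrable.mono' (integrable_const 1) hjm.aestronglyMeasurable (ae_of_all _ fun q => by
      simpa [Function.uncurry] using hjb q.1 q.2)
  have hswap := integral_integral_swap hji
  have hpt : ∀ p, |h⁻¹ * (prim (fun y => v (p.1, y)) (p.2 + h) -
      prim (fun y => v (p.1, y)) p.2) - v p| ≤ h⁻¹ * ∫ y in Ioc 0 h, |dl y v p| := fun p => by
    have hsm : Measurable fun y => v (p.1, y) := hv.comp (measurable_const.prodMk measurable_id)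
    have hsm2 : Measurable fun y => v (p.1, p.2 + y) :=
      hv.comp (measurable_const.prodMk (measurable_const.add measurable_id))
    have e1 : prim (fun y => v (p.1, y)) (p.2 + h) - prim (fun y => v (p.1, y)) p.2 =
        ∫ y in (0:ℝ)..h, v (p.1, p.2 + y) := by
      rw [prim_sub hsm (fun y => hva _),
        intervalIntegral.integral_comp_add_left (fun y => v (p.1, y)) p.2, add_zero]
    have e2 : h⁻¹ * (∫ y in (0:ℝ)..h, v (p.1, p.2 + y)) - v p =
        h⁻¹ * ∫ y in (0:ℝ)..h, dl y v p := by
      unfold dl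
      rw [intervalIntegral.integral_sub (bdd_ii hsm2 (fun y => hva _) _ _) (by simp),
        intervalIntegral.integral_const, smul_eq_mul]
      field_simp
      ring
    rw [e1, e2, abs_mul, abs_of_pos (inv_pos.2 h0), ← intervalIntegral.integral_of_le h0.le]
    exact mul_le_mul_of_nonneg_left (intervalIntegral.abs_integral_le_integral_abs h0.le)
      (inv_pos.2 h0).le
  calc _ ≤ ∫ p in Rect a b N, h⁻¹ * ∫ y in Ioc 0 h, |dl y v p| :=
        integral_mono_of_nonneg (ae_of_all _ fun p => abs_nonneg _)
          ((hji.integral_prod_left).const_mul _) (ae_of_all _ hpt)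
    _ = h⁻¹ * ∫ y in Ioc 0 h, ∫ p in Rect a b N, |dl y v p| := by
        rw [integral_const_mul, hswap]
    _ ≤ h⁻¹ * ∫ y in Ioc 0 h, r := by
        refine mul_le_mul_of_nonneg_left ?_ (inv_pos.2 h0).le
        exact setIntegral_mono_on hji.integral_prod_right (integrable_const _) measurableSet_Ioc
          fun y hy => hr y hy.1 hy.2
    _ = r := by
        rw [setIntegral_const, Real.volume_real_Ioc_of_le h0.le, smul_eq_mul]
        field_simp
        ring

/-! ### `L¹` convergence from convergence of primitives -/

/-- A continuous function of `(t, x)` that is, for each `t`, the primitive in `x` vanishing at `0`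
of a function with values in `[0,1]`. -/
structure Prm (B : ℝ × ℝ → ℝ) : Prop where
  cont : Continuous B
  zero : ∀ t, B (t, 0) = 0
  mono : ∀ t x y, x ≤ y → 0 ≤ B (t, y) - B (t, x) ∧ B (t, y) - B (t, x) ≤ y - x

/-- The space derivative of a function on the plane. -/
def slp (B : ℝ × ℝ → ℝ) (p : ℝ × ℝ) : ℝ := deriv (fun y => B (p.1, y)) p.2

section
variable {B : ℝ × ℝ → ℝ}

lemma Prm.lip (h : Prm B) (t : ℝ) : LipschitzWith 1 fun y => B (t, y) := by
  refine LipschitzWith.of_le_add fun x y => ?_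
  rw [Real.dist_eq]
  rcases le_total x y with hxy | hxy
  · have := (h.mono t x y hxy).1
    linarith [abs_nonneg (x - y)]
  · have := (h.mono t y x hxy).2
    linarith [le_abs_self (x - y)]

lemma Prm.slp_meas (h : Prm B) : Measurable (slp B) :=
  measurable_deriv_with_param (f := fun t y => B (t, y)) h.cont

lemma Prm.slp_mem (h : Prm B) (p : ℝ × ℝ) : slp B p ∈ Icc (0:ℝ) 1 := by
  have hm : Monotone fun y => B (p.1, y) := fun x y hxy => by
    have := (h.mono p.1 x y hxy).1
    simp only
    linarith
  refine ⟨hm.deriv_nonneg, ?_⟩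
  have := lip_deriv (h.lip p.1) p.2
  rw [NNReal.coe_one] at this
  exact (le_abs_self _).trans this

lemma Prm.prim_slp (h : Prm B) (t x : ℝ) : prim (fun y => slp B (t, y)) x = B (t, x) := by
  have := (lip_ac (h.lip t) 0 x).integral_deriv_eq_sub
  simp only [h.zero, sub_zero] at this
  exact this

/-- Difference quotients of `B` converge to its derivative in local `L¹`, by dominated convergence. -/
lemma Prm.quot (h : Prm B) (a b N : ℝ) :
    Tendsto (fun k : ℝ => ∫ p in Rect a b N, |k⁻¹ * (B (p.1, p.2 + k) - B p) - slp B p|)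
      (𝓝[>] 0) (𝓝 0) := by
  suffices key : Tendsto (fun k : ℝ => ∫ p in Rect a b N,
      |k⁻¹ * (B (p.1, p.2 + k) - B p) - slp B p|) (𝓝[>] 0) (𝓝 (∫ p in Rect a b N, (0:ℝ))) by
    rwa [integral_zero] at key
  have hd : ∀ᵐ p : ℝ × ℝ, DifferentiableAt ℝ (fun y => B (p.1, y)) p.2 := by
    rw [Measure.volume_eq_prod, Measure.ae_prod_iff_ae_ae
      (measurableSet_of_differentiableAt_with_param ℝ (f := fun t y => B (t, y)) h.cont)]
    exact ae_of_all _ fun t => (h.lip t).ae_differentiableAt_real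
  refine tendsto_integral_filter_of_dominated_convergence (fun _ => 1) ?_ ?_
    (rect_const a b N 1) ?_
  · refine Eventually.of_forall fun k => Measurable.aestronglyMeasurable ?_
    have h1 : Measurable fun p : ℝ × ℝ => B (p.1, p.2 + k) :=
      (h.cont.comp (by fun_prop)).measurable
    exact ((measurable_const.mul (h1.sub h.cont.measurable)).sub h.slp_meas).abs
  · filter_upwards [self_mem_nhdsWithin] with k hk
    refine ae_of_all _ fun p => ?_
    have hk : 0 < k := hk
    have h1 := h.mono p.1 p.2 (p.2 + k) (by linarith)
    rw [Real.norm_eq_abs, abs_abs]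
    refine sub_abs_le ⟨mul_nonneg (inv_pos.2 hk).le h1.1, ?_⟩ (h.slp_mem p)
    rw [inv_mul_le_iff₀ hk]
    linarith [h1.2]
  · filter_upwards [ae_restrict_of_ae hd] with p hp
    have h1 := hp.hasDerivAt.tendsto_slope_zero_right
    have h2 := (h1.sub_const (slp B p)).abs
    have e : deriv (fun y => B (p.1, y)) p.2 = slp B p := rfl
    rw [e, sub_self, abs_zero] at h2
    exact h2

/-- Locally uniform convergence of the primitives, together with a uniform modulus of continuity
for space translations, gives local `L¹` convergence. -/
lemma l1_conv (h : Prm B) {T N : ℝ} (hT : 0 ≤ T) (hN : 0 ≤ N) {v : ℕ → ℝ × ℝ → ℝ}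
    (hv : ∀ j, Measurable (v j)) (hv1 : ∀ j p, v j p ∈ Icc (0:ℝ) 1)
    (hB : TendstoUniformlyOn (fun j (p : ℝ × ℝ) => prim (fun y => v j (p.1, y)) p.2) B atTop
      (Rect 0 T (N + 1)))
    (htr : ∀ r > 0, ∃ d > 0, ∀ j, ∀ y, 0 < y → y < d → ∫ p in Rect 0 T N, |dl y (v j) p| ≤ r) :
    Tendsto (fun j => ∫ p in Rect 0 T N, |v j p - slp B p|) atTop (𝓝 0) := by
  rw [Metric.tendsto_atTop]
  intro r hr
  obtain ⟨d, hd, hdr⟩ := htr (r / 4) (by positivity)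
  have hev : ∀ᶠ k in 𝓝[>] (0:ℝ), k < min d 1 :=
    nhdsWithin_le_nhds (gt_mem_nhds (by positivity))
  obtain ⟨k, ⟨hk1, hk2⟩, hk0⟩ := (((h.quot 0 T N).eventually
    (gt_mem_nhds (show (0:ℝ) < r / 4 by positivity))).and hev |>.and self_mem_nhdsWithin).exists
  have hk0 : 0 < k := hk0
  have hkd : k < d := hk2.trans_le (min_le_left _ _)
  have hkl : k ≤ 1 := (hk2.trans_le (min_le_right _ _)).le
  set V := T * (2 * N) + 1 with hV
  have hV0 : 0 < V := by positivity
  set m := k * r / (8 * V) with hm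
  have hm0 : 0 < m := by positivity
  obtain ⟨J, hJ⟩ := eventually_atTop.1 (Metric.tendstoUniformlyOn_iff.1 hB m hm0)
  refine ⟨J, fun j hj => ?_⟩
  have h1 := avg_est (hv j) (hv1 j) (a := 0) (b := T) (N := N) hk0 (r := r / 4)
    fun y hy0 hy1 => hdr j y hy0 (hy1.trans_lt hkd)
  set Bj : ℝ × ℝ → ℝ := fun p => prim (fun y => v j (p.1, y)) p.2 with hBj
  have hva : ∀ p, |v j p| ≤ 1 := fun p =>
    abs_le.2 ⟨by linarith [(hv1 j p).1], (hv1 j p).2⟩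
  have hjm : Measurable Bj := by
    -- the primitive is a parametrised integral over a fixed interval
    have e : Bj = fun p => ∫ θ in (0:ℝ)..1, p.2 * v j (p.1, p.2 * θ) := by
      funext p
      rw [intervalIntegral.integral_const_mul]
      have := intervalIntegral.mul_integral_comp_mul_left (a := 0) (b := 1)
        (f := fun y => v j (p.1, y)) p.2
      rw [this, mul_zero, mul_one]
      rfl
    rw [e]
    simp_rw [intervalIntegral.integral_of_le (zero_le_one (α := ℝ))]
    refine (StronglyMeasurable.integral_prod_right' (f := fun (q : (ℝ × ℝ) × ℝ) =>
      q.1.2 * v j (q.1.1, q.1.2 * q.2)) (Measurable.stronglyMeasurable ?_)).measurable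
    exact (measurable_snd.comp measurable_fst).mul ((hv j).comp
      ((measurable_fst.comp measurable_fst).prodMk
        ((measurable_snd.comp measurable_fst).mul measurable_snd)))
  have hsh : Measurable fun p : ℝ × ℝ => (p.1, p.2 + k) :=
    measurable_fst.prodMk (measurable_snd.add_const k)
  set Q1 : ℝ × ℝ → ℝ := fun p => |k⁻¹ * (Bj (p.1, p.2 + k) - Bj p) - v j p| with hQ1
  set Q2 : ℝ × ℝ → ℝ := fun p => |k⁻¹ * (B (p.1, p.2 + k) - B p) - slp B p| with hQ2
  have hQ1i : IntegrableOn Q1 (Rect 0 T N) := by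
    refine Integrable.mono' (rect_const 0 T N 1) (Measurable.aestronglyMeasurable
      ((measurable_const.mul ((hjm.comp hsh).sub hjm)).sub (hv j)).abs) (ae_of_all _ fun p => ?_)
    rw [hQ1, Real.norm_eq_abs, abs_abs]
    refine sub_abs_le ?_ (hv1 j p)
    have hsm : Measurable fun y => v j (p.1, y) :=
      (hv j).comp (measurable_const.prodMk measurable_id)
    have e : Bj (p.1, p.2 + k) - Bj p = ∫ y in p.2..(p.2 + k), v j (p.1, y) :=
      prim_sub hsm (fun y => hva _) _ _
    rw [e]
    have i1 : 0 ≤ ∫ y in p.2..(p.2 + k), v j (p.1, y) :=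
      intervalIntegral.integral_nonneg (by linarith) fun y _ => (hv1 j _).1
    have i2 := intervalIntegral.norm_integral_le_of_norm_le_const (f := fun y => v j (p.1, y))
      (C := 1) (a := p.2) (b := p.2 + k) (fun y _ => hva _)
    rw [Real.norm_eq_abs, add_sub_cancel_left, one_mul, abs_of_pos hk0] at i2
    refine ⟨mul_nonneg (inv_pos.2 hk0).le i1, ?_⟩
    rw [inv_mul_le_iff₀ hk0, mul_one]
    exact (le_abs_self _).trans i2
  have hQ2i : IntegrableOn Q2 (Rect 0 T N) := by
    refine Integrable.mono' (rect_const 0 T N 1) (Measurable.aestronglyMeasurable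
      ((measurable_const.mul ((h.cont.measurable.comp hsh).sub h.cont.measurable)).sub
        h.slp_meas).abs) (ae_of_all _ fun p => ?_)
    rw [hQ2, Real.norm_eq_abs, abs_abs]
    have i1 := h.mono p.1 p.2 (p.2 + k) (by linarith)
    refine sub_abs_le ⟨mul_nonneg (inv_pos.2 hk0).le i1.1, ?_⟩ (h.slp_mem p)
    rw [inv_mul_le_iff₀ hk0]
    linarith [i1.2]
  have hpt : ∀ p ∈ Rect 0 T N, |v j p - slp B p| ≤ Q1 p + (Q2 p + r / (4 * V)) := fun p hp => by
    have a1 := hJ j hj p (rect_succ 0 T N hp)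
    have a2 := hJ j hj (p.1, p.2 + k) (rect_shift hk0.le hkl hp)
    rw [Real.dist_eq] at a1 a2
    change |B p - Bj p| < m at a1
    change |B (p.1, p.2 + k) - Bj (p.1, p.2 + k)| < m at a2
    have a3 : |k⁻¹ * ((Bj (p.1, p.2 + k) - B (p.1, p.2 + k)) - (Bj p - B p))| ≤ r / (4 * V) := by
      rw [abs_mul, abs_of_pos (inv_pos.2 hk0), inv_mul_le_iff₀ hk0]
      have e : k * (r / (4 * V)) = m + m := by rw [hm]; field_simp; ring
      rw [e]
      refine (abs_sub _ _).trans ?_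
      rw [abs_sub_comm (Bj _), abs_sub_comm (Bj _)]
      linarith
    have e : v j p - slp B p = -(k⁻¹ * (Bj (p.1, p.2 + k) - Bj p) - v j p) +
        ((k⁻¹ * (B (p.1, p.2 + k) - B p) - slp B p) +
        k⁻¹ * ((Bj (p.1, p.2 + k) - B (p.1, p.2 + k)) - (Bj p - B p))) := by ring
    rw [e]
    refine (abs_add_le _ _).trans ?_
    rw [abs_neg]
    exact add_le_add le_rfl ((abs_add_le _ _).trans (add_le_add le_rfl a3))
  have hle : ∫ p in Rect 0 T N, |v j p - slp B p| ≤
      ∫ p in Rect 0 T N, (Q1 p + (Q2 p + r / (4 * V))) := by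
    refine setIntegral_mono_on ?_ (hQ1i.add (hQ2i.add (rect_const _ _ _ _))) (rect_meas _ _ _) hpt
    exact Integrable.mono' (rect_const 0 T N 1) ((hv j).sub h.slp_meas).abs.aestronglyMeasurable
      (ae_of_all _ fun p => by
        rw [Real.norm_eq_abs, abs_abs]
        exact sub_abs_le (hv1 j p) (h.slp_mem p))
  have hi2 : IntegrableOn (fun p => Q2 p + r / (4 * V)) (Rect 0 T N) :=
    hQ2i.add (rect_const _ _ _ _)
  rw [integral_add hQ1i hi2, integral_add hQ2i (rect_const _ _ _ _),
    setIntegral_const, rect_vol hT hN, smul_eq_mul, sub_zero] at hle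
  have hlast : T * (2 * N) * (r / (4 * V)) ≤ r / 4 := by
    have e : V * (r / (4 * V)) = r / 4 := by field_simp
    rw [← e]
    exact mul_le_mul_of_nonneg_right (by linarith) (by positivity)
  rw [Real.dist_eq, sub_zero, abs_of_nonneg (integral_nonneg fun p => abs_nonneg _)]
  have h1' : ∫ p in Rect 0 T N, Q1 p ≤ r / 4 := h1
  linarith

end

/-! ### A compact set of paths -/

/-- The paths with prescribed moduli of continuity: `d1` for the primitives in time, uniformly on
bounded space intervals, and `d2` for space translations in local `L¹`. -/
def Kset (T : ℝ) (d1 d2 : ℕ → ℕ → ℝ) : Set (cU T) :=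
  {u | (∀ n k : ℕ, ∀ s ∈ Icc 0 T, ∀ t ∈ Icc 0 T, |t - s| < d1 n k → ∀ x ∈ Icc (-(n:ℝ)) n,
      |prim (fun y => u.toFun (t, y)) x - prim (fun y => u.toFun (s, y)) x| ≤ 1 / ((k:ℝ) + 1)) ∧
    ∀ n k : ℕ, ∀ h, 0 < h → h < d2 n k →
      ∫ p in Rect 0 T ((n:ℝ) + 1), |dl h u.toFun p| ≤ 1 / ((k:ℝ) + 1)}

lemma prim_mono01 {w : ℝ → ℝ} (hw : Measurable w) (h1 : ∀ x, w x ∈ Icc (0:ℝ) 1) {x y : ℝ}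
    (hxy : x ≤ y) : 0 ≤ prim w y - prim w x ∧ prim w y - prim w x ≤ y - x := by
  have ha : ∀ z, |w z| ≤ 1 := fun z => abs_le.2 ⟨by linarith [(h1 z).1], (h1 z).2⟩
  constructor
  · rw [prim_sub hw ha]
    exact intervalIntegral.integral_nonneg hxy fun z _ => (h1 z).1
  · have := (prim_lip hw ha).dist_le_mul y x
    rw [Real.dist_eq, Real.dist_eq, NNReal.coe_one, one_mul, abs_of_nonneg (sub_nonneg.2 hxy)]
      at this
    exact (le_abs_self _).trans this

lemma l1_int {T R : ℝ} {u v : ℝ × ℝ → ℝ} (hu : Measurable u) (hv : Measurable v)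
    (hu1 : ∀ p, u p ∈ Icc (0:ℝ) 1) (hv1 : ∀ p, v p ∈ Icc (0:ℝ) 1) :
    IntegrableOn (fun p => |u p - v p|) (Rect 0 T R) :=
  Integrable.mono' (rect_const 0 T R 1) (hu.sub hv).abs.aestronglyMeasurable
    (ae_of_all _ fun p => by
      rw [Real.norm_eq_abs, abs_abs]
      exact sub_abs_le (hu1 p) (hv1 p))

lemma l1_le {T R : ℝ} (hT : 0 ≤ T) (hR : 0 ≤ R) {u v : ℝ × ℝ → ℝ} (hu : Measurable u)
    (hv : Measurable v) (hu1 : ∀ p, u p ∈ Icc (0:ℝ) 1) (hv1 : ∀ p, v p ∈ Icc (0:ℝ) 1) :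
    ∫ p in Rect 0 T R, |u p - v p| ≤ T * (2 * R) := by
  have := setIntegral_mono_on (l1_int (T := T) (R := R) hu hv hu1 hv1) (rect_const 0 T R 1)
    (rect_meas _ _ _) fun p _ => sub_abs_le (hu1 p) (hv1 p)
  rwa [setIntegral_const, rect_vol hT hR, smul_eq_mul, sub_zero, mul_one] at this

lemma wt_summable (T : ℝ) :
    Summable fun n : ℕ => (2:ℝ)⁻¹ ^ (n + 1) * (T * (2 * ((n:ℝ) + 1))) := by
  have h := summable_pow_mul_geometric_of_norm_lt_one 1 (r := (2:ℝ)⁻¹) (by norm_num)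
  have h2 := ((summable_nat_add_iff 1).2 h).mul_left (T * 2)
  refine h2.congr fun n => ?_
  push_cast
  ring

/-- The translation modulus passes to local `L¹` limits. -/
lemma transl_limit {T R h r : ℝ} (h0 : 0 ≤ h) (h1 : h ≤ 1) {v : ℕ → ℝ × ℝ → ℝ} {w : ℝ × ℝ → ℝ}
    (hv : ∀ j, Measurable (v j)) (hw : Measurable w) (hv1 : ∀ j p, v j p ∈ Icc (0:ℝ) 1)
    (hw1 : ∀ p, w p ∈ Icc (0:ℝ) 1)
    (hR : Tendsto (fun j => ∫ p in Rect 0 T R, |v j p - w p|) atTop (𝓝 0))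
    (hR1 : Tendsto (fun j => ∫ p in Rect 0 T (R + 1), |v j p - w p|) atTop (𝓝 0))
    (hr : ∀ j, ∫ p in Rect 0 T R, |dl h (v j) p| ≤ r) :
    ∫ p in Rect 0 T R, |dl h w p| ≤ r := by
  have hlim : Tendsto (fun j => r + ((∫ p in Rect 0 T (R + 1), |v j p - w p|) +
      ∫ p in Rect 0 T R, |v j p - w p|)) atTop (𝓝 (r + (0 + 0))) :=
    tendsto_const_nhds.add (hR1.add hR)
  rw [add_zero, add_zero] at hlim
  refine ge_of_tendsto' hlim fun j => ?_
  have i1 : IntegrableOn (fun p => |dl h (v j) p|) (Rect 0 T R) :=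
    Integrable.mono' (rect_const 0 T R 1) (dl_meas (hv j)).abs.aestronglyMeasurable
      (ae_of_all _ fun p => by
        rw [Real.norm_eq_abs, abs_abs]
        exact sub_abs_le (hv1 j _) (hv1 j p))
  have i0 : IntegrableOn (fun p => |dl h w p|) (Rect 0 T R) :=
    Integrable.mono' (rect_const 0 T R 1) (dl_meas hw).abs.aestronglyMeasurable
      (ae_of_all _ fun p => by
        rw [Real.norm_eq_abs, abs_abs]
        exact sub_abs_le (hw1 _) (hw1 p))
  have i2 := l1_int (T := T) (R := R + 1) (hv j) hw (hv1 j) hw1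
  have i3 := l1_int (T := T) (R := R) (hv j) hw (hv1 j) hw1
  have i4 : IntegrableOn (fun p : ℝ × ℝ => |v j (p.1, p.2 + h) - w (p.1, p.2 + h)|)
    (Rect 0 T R) := shift_integrable h0 h1 i2
  have i5 : IntegrableOn (fun p : ℝ × ℝ => |v j (p.1, p.2 + h) - w (p.1, p.2 + h)| +
    |v j p - w p|) (Rect 0 T R) := i4.add i3
  have hle : ∫ p in Rect 0 T R, |dl h w p| ≤ ∫ p in Rect 0 T R, (|dl h (v j) p| +
      (|v j (p.1, p.2 + h) - w (p.1, p.2 + h)| + |v j p - w p|)) := by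
    refine setIntegral_mono_on i0 (i1.add i5) (rect_meas _ _ _) fun p _ => ?_
    have e : dl h w p = dl h (v j) p + (-(v j (p.1, p.2 + h) - w (p.1, p.2 + h)) +
        (v j p - w p)) := by
      simp only [dl]
      ring
    rw [e]
    refine (abs_add_le _ _).trans (add_le_add le_rfl ((abs_add_le _ _).trans ?_))
    rw [abs_neg]
  rw [integral_add i1 i5, integral_add i4 i3] at hle
  have := shift_le h0 h1 i2 fun p => abs_nonneg _
  linarith [hr j]

/-- The clamp of a time to `[0, T]`. -/
def ct (T t : ℝ) : ℝ := max 0 (min t T)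

lemma ct_mem {T : ℝ} (hT : 0 ≤ T) (t : ℝ) : ct T t ∈ Icc 0 T :=
  ⟨le_max_left _ _, max_le hT (min_le_right _ _)⟩

lemma ct_eq {T t : ℝ} (ht : t ∈ Icc 0 T) : ct T t = t := by
  rw [ct, min_eq_left ht.2, max_eq_right ht.1]

lemma ct_dist (T s t : ℝ) : |ct T t - ct T s| ≤ |t - s| := by
  have h1 := abs_max_sub_max_le_max 0 (min t T) 0 (min s T)
  have h2 := abs_min_sub_min_le_max t T s T
  rw [sub_self, abs_zero, max_eq_right (abs_nonneg (min t T - min s T))] at h1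
  rw [sub_self, abs_zero, max_eq_left (abs_nonneg (t - s))] at h2
  exact h1.trans h2

/-- Along a sequence in `Kset`, the primitives in space converge locally uniformly after passing to a
subsequence; the limit path is the space derivative of their limit, and the translation modulus
upgrades the convergence to local `L¹`. -/
lemma kset_compact {T : ℝ} (hT : 0 < T) {d1 d2 : ℕ → ℕ → ℝ} (h1 : ∀ n k, 0 < d1 n k)
    (h2 : ∀ n k, 0 < d2 n k) (h21 : ∀ n k, d2 n k ≤ 1) :
    SeqCompactIn (dX T) (Kset T d1 d2) := by
  intro u hu
  have hum : ∀ j t, Measurable fun x => (u j).toFun (t, x) := fun j t => (u j).sl_meas t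
  have hu1 : ∀ j t x, (u j).toFun (t, x) ∈ Icc (0:ℝ) 1 := fun j t x => (u j).mem01 _
  have hua : ∀ j t x, |(u j).toFun (t, x)| ≤ 1 := fun j t x =>
    abs_le.2 ⟨by linarith [(hu1 j t x).1], (hu1 j t x).2⟩
  set F : ℕ → ℝ × ℝ → ℝ := fun j p => prim (fun y => (u j).toFun (ct T p.1, y)) p.2 with hF
  have hFx : ∀ j t x y, |F j (t, x) - F j (t, y)| ≤ |x - y| := fun j t x y => by
    have := (prim_lip (hum j (ct T t)) (hua j _)).dist_le_mul x y
    rw [Real.dist_eq, Real.dist_eq, NNReal.coe_one, one_mul] at this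
    exact this
  have hF0 : ∀ j t, F j (t, 0) = 0 := fun j t => intervalIntegral.integral_same
  have hFt : ∀ n k s t, |t - s| < d1 n k → ∀ x ∈ Icc (-(n:ℝ)) n, ∀ j,
      |F j (t, x) - F j (s, x)| ≤ 1 / ((k:ℝ) + 1) := fun n k s t hst x hx j =>
    (hu j).1 n k _ (ct_mem hT.le s) _ (ct_mem hT.le t) ((ct_dist T s t).trans_lt hst) x hx
  -- `F j` is the primitive in space of the `j`-th path, with time clamped to `[0,T]`.
  obtain ⟨B, hBc, s, hs, hBu⟩ := ascoli (F := F) (b := fun p => |p.2|)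
    (fun j p => by
      have := hFx j p.1 p.2 0
      rwa [hF0, sub_zero, sub_zero] at this)
    (fun p r hr => by
      obtain ⟨k, hk⟩ := exists_nat_one_div_lt (half_pos hr)
      obtain ⟨n, hn⟩ := exists_nat_ge |p.2|
      have e1 : ∀ᶠ q : ℝ × ℝ in 𝓝 p, |p.1 - q.1| < d1 n k := by
        have hc : Continuous fun q : ℝ × ℝ => |p.1 - q.1| := by fun_prop
        exact hc.continuousAt.eventually_lt continuousAt_const (by simpa using h1 n k)
      have e2 : ∀ᶠ q : ℝ × ℝ in 𝓝 p, |p.2 - q.2| < r / 2 := by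
        have hc : Continuous fun q : ℝ × ℝ => |p.2 - q.2| := by fun_prop
        exact hc.continuousAt.eventually_lt continuousAt_const (by simpa using half_pos hr)
      filter_upwards [e1, e2] with q hq1 hq2 j
      have a1 := hFt n k q.1 p.1 hq1 p.2 (abs_le.1 hn) j
      have a2 := hFx j q.1 p.2 q.2
      have := abs_sub_le (F j (p.1, p.2)) (F j (q.1, p.2)) (F j (q.1, q.2))
      change |F j (p.1, p.2) - F j (q.1, q.2)| ≤ r
      linarith)
  have hBp : ∀ p, Tendsto (fun j => F (s j) p) atTop (𝓝 (B p)) := fun p =>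
    (hBu {p} isCompact_singleton).tendsto_at rfl
  have hP : Prm B := by
    refine ⟨hBc, fun t => ?_, fun t x y hxy => ?_⟩
    · have := hBp (t, 0)
      simp only [hF0] at this
      exact tendsto_nhds_unique this tendsto_const_nhds
    · have hl := (hBp (t, y)).sub (hBp (t, x))
      have hm := fun j => prim_mono01 (hum (s j) (ct T t)) (hu1 (s j) _) hxy
      exact ⟨ge_of_tendsto' hl fun j => (hm j).1, le_of_tendsto' hl fun j => (hm j).2⟩
  have hBt : ∀ n k s t, |t - s| < d1 n k → ∀ x ∈ Icc (-(n:ℝ)) n,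
      |B (t, x) - B (s, x)| ≤ 1 / ((k:ℝ) + 1) := fun n k a t hst x hx =>
    le_of_tendsto' ((hBp (t, x)).sub (hBp (a, x))).abs fun j => hFt n k a t hst x hx (s j)
  have hym : ∀ t, Measurable fun x => slp B (t, x) := fun t =>
    hP.slp_meas.comp (measurable_const.prodMk measurable_id)
  let y : cU T :=
    { toFun := slp B
      meas := hP.slp_meas
      mem01 := hP.slp_mem
      cont := fun t₀ _ δ hδ => by
        obtain ⟨n, m, hm, hd⟩ := dU_small hδ
        obtain ⟨k, hk⟩ := exists_nat_one_div_lt hm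
        refine ⟨d1 n k, h1 n k, fun t _ htt => hd _ _ (hym t) (hym t₀) (fun x => hP.slp_mem _)
          (fun x => hP.slp_mem _) fun x hx => ?_⟩
        rw [hP.prim_slp, hP.prim_slp]
        exact (hBt n k t₀ t htt x hx).trans hk.le }
  have hL1 : ∀ n : ℕ, Tendsto (fun j => ∫ p in Rect 0 T ((n:ℝ) + 1),
      |(u (s j)).toFun p - slp B p|) atTop (𝓝 0) := fun n => by
    refine l1_conv hP hT.le (by positivity) (fun j => (u (s j)).meas) (fun j => (u (s j)).mem01)
      ?_ fun r hr => ?_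
    · refine (hBu _ (rect_compact 0 T ((n:ℝ) + 1 + 1))).congr (Eventually.of_forall fun j p hp => ?_)
      simp only [hF, ct_eq hp.1]
    · obtain ⟨k, hk⟩ := exists_nat_one_div_lt hr
      exact ⟨d2 n k, h2 n k, fun j h h0 hd => ((hu (s j)).2 n k h h0 hd).trans hk.le⟩
  refine ⟨y, ⟨fun n k a ha t ht hat x hx => ?_, fun n k h h0 hd => ?_⟩, s, hs, ?_⟩
  · change |prim (fun z => slp B (t, z)) x - prim (fun z => slp B (a, z)) x| ≤ _
    rw [hP.prim_slp, hP.prim_slp]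
    exact hBt n k a t hat x hx
  · refine transl_limit h0.le (hd.le.trans (h21 n k)) (fun j => (u (s j)).meas) hP.slp_meas
      (fun j => (u (s j)).mem01) hP.slp_mem (hL1 n) ?_ fun j => (hu (s j)).2 n k h h0 hd
    have := hL1 (n + 1)
    push_cast at this
    exact this
  · rw [← add_zero (0:ℝ)]
    refine Tendsto.add ?_ ?_
    · suffices key : Tendsto (fun j => ∑' n : ℕ, (2:ℝ)⁻¹ ^ (n + 1) *
          ∫ p in Rect 0 T ((n:ℝ) + 1), |(u (s j)).toFun p - slp B p|) atTop
          (𝓝 (∑' n : ℕ, (2:ℝ)⁻¹ ^ (n + 1) * (0:ℝ))) by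
        simp only [mul_zero, tsum_zero] at key
        exact key
      refine tendsto_tsum_of_dominated_convergence (wt_summable T)
        (fun n => (hL1 n).const_mul _) (Eventually.of_forall fun j n => ?_)
      rw [Real.norm_eq_abs, abs_mul, abs_of_nonneg (by positivity : (0:ℝ) ≤ (2:ℝ)⁻¹ ^ (n + 1)),
        abs_of_nonneg (integral_nonneg fun p => abs_nonneg _)]
      exact mul_le_mul_of_nonneg_left (l1_le hT.le (by positivity) (u (s j)).meas hP.slp_meas
        (u (s j)).mem01 hP.slp_mem) (by positivity)
    · rw [Metric.tendsto_atTop]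
      intro δ hδ
      obtain ⟨n, m, hm, hd⟩ := dU_small (half_pos hδ)
      obtain ⟨J, hJ⟩ := eventually_atTop.1 (Metric.tendstoUniformlyOn_iff.1
        (hBu _ (rect_compact 0 T n)) m hm)
      refine ⟨J, fun j hj => ?_⟩
      have hnn : 0 ≤ dcU T (u (s j)) y := by
        refine Real.sSup_nonneg ?_
        rintro _ ⟨t, _, rfl⟩
        exact dU_nonneg (hum _ t) (hym t) (hu1 _ t) fun x => hP.slp_mem _
      rw [Real.dist_eq, sub_zero, abs_of_nonneg hnn]
      refine lt_of_le_of_lt (Real.sSup_le ?_ (half_pos hδ).le) (half_lt_self hδ)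
      rintro _ ⟨t, ht, rfl⟩
      refine (hd _ _ (hum _ t) (hym t) (hu1 _ t) (fun x => hP.slp_mem _) fun x hx => ?_).le
      change |_ - prim (fun z => slp B (t, z)) x| ≤ m
      rw [hP.prim_slp]
      have := hJ j hj (t, x) ⟨ht, hx⟩
      simp only [hF, ct_eq ht] at this
      rw [Real.dist_eq, abs_sub_comm] at this
      exact this.le

/-! ### Extension of the coefficients and equicoercivity -/

/-- The extension of a function on `[0,1]` by its boundary values. -/
def ext01 (f : ℝ → ℝ) (v : ℝ) : ℝ := f (projIcc (0:ℝ) 1 zero_le_one v)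

lemma ext01_eq (f : ℝ → ℝ) {v : ℝ} (hv : v ∈ Icc (0:ℝ) 1) : ext01 f v = f v := by
  rw [ext01, projIcc_of_mem _ hv]

lemma ext01_cont {f : ℝ → ℝ} (hf : ContinuousOn f (Icc 0 1)) : Continuous (ext01 f) :=
  (continuousOn_iff_continuous_domRestrict.1 hf).comp continuous_projIcc

/-- A path has values in `[0,1]`, so the functional only sees the coefficients there. -/
lemma heps_ext (f D σ : ℝ → ℝ) (T ε : ℝ) (u : cU T) :
    Heps (ext01 f) (ext01 D) (ext01 σ) T ε u = Heps f D σ T ε u := by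
  have h1 := fun p => ext01_eq f (u.mem01 p)
  have h2 := fun p => ext01_eq D (u.mem01 p)
  have h3 := fun p => ext01_eq σ (u.mem01 p)
  simp only [Heps, Ieps, IexprW, h1, h2, h3]

lemma bdd01 {f : ℝ → ℝ} (hf : ContinuousOn f (Icc 0 1)) :
    ∃ C, ∀ v ∈ Icc (0:ℝ) 1, |f v| ≤ C := by
  obtain ⟨C, hC⟩ := isCompact_Icc.exists_bound_of_continuousOn hf
  exact ⟨C, hC⟩

/-- If there is no interval in which `f` is affine, the sequence `{H_ε}`
is equicoercive on `𝒳`. -/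
theorem equicoercive_Heps (T : ℝ) (hT : 0 < T) (f D σ : ℝ → ℝ)
    (hf : ∃ C : NNReal, LipschitzOnWith C f (Icc 0 1))
    (hD : ContinuousOn D (Icc 0 1)) (hσ : ContinuousOn σ (Icc 0 1))
    (hDpos : ∃ c > 0, ∀ v ∈ Icc (0:ℝ) 1, c ≤ D v)
    (hσpos : ∀ v ∈ Ioo (0:ℝ) 1, 0 < σ v)
    (hNA : NoAffinePiece f) :
    Equicoercive (dX T) (fun ε => Heps f D σ T ε) := by
  obtain ⟨L, hL⟩ := hf
  obtain ⟨c, hc0, hc⟩ := hDpos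
  obtain ⟨Cf, hCf⟩ := bdd01 hL.continuousOn
  obtain ⟨CD, hCD⟩ := bdd01 hD
  obtain ⟨Cσ, hCσ⟩ := bdd01 hσ
  have hσ0 : ∀ v ∈ Icc (0:ℝ) 1, 0 ≤ σ v := by
    intro v hv
    have hcl : closure (Ioo (0:ℝ) 1) = Icc 0 1 := closure_Ioo zero_ne_one
    have := ContinuousWithinAt.closure_le (s := Ioo (0:ℝ) 1) (x := v) (f := fun _ => (0:ℝ)) (g := σ)
      (by rwa [hcl]) continuousWithinAt_const ((hσ v hv).mono Ioo_subset_Icc_self)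
      fun y hy => (hσpos y hy).le
    exact this
  have hcoef : Coef (ext01 f) (ext01 D) (ext01 σ) Cf c CD Cσ :=
    { fc := ext01_cont hL.continuousOn
      Dc := ext01_cont hD
      σc := ext01_cont hσ
      fb := fun v hv => by rw [ext01_eq f hv]; exact hCf v hv
      c0 := hc0
      Db := fun v hv => by
        rw [ext01_eq D hv]
        exact ⟨hc v hv, (le_abs_self _).trans (hCD v hv)⟩
      σb := fun v hv => by
        rw [ext01_eq σ hv]
        exact ⟨hσ0 v hv, (le_abs_self _).trans (hCσ v hv)⟩ }
  have hlip : LipschitzWith L (ext01 f) := by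
    have := hL.to_restrict.comp (LipschitzWith.projIcc (zero_le_one (α := ℝ)))
    rw [mul_one] at this
    exact this
  have hna : NoAffinePiece (ext01 f) := fun a b ha hab hb ⟨m, d, h⟩ =>
    hNA a b ha hab hb ⟨m, d, fun v hv => by
      rw [← h v hv, ext01_eq f ⟨ha.trans hv.1, hv.2.trans hb⟩]⟩
  intro M hM
  choose d1 h1 hd1 using fun n k : ℕ =>
    time_mod hcoef hM hT n (r := 1 / ((k:ℝ) + 1)) (by positivity)
  choose d2 h2 hd2 using fun n k : ℕ =>
    transl hcoef hlip hna hT hM (N := (n:ℝ) + 1) (r := 1 / ((k:ℝ) + 1)) (by positivity)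
      (by positivity)
  refine ⟨Kset T d1 fun n k => min (d2 n k) 1, kset_compact hT h1
    (fun n k => lt_min (h2 n k) one_pos) (fun n k => min_le_right _ _), fun ε hε u hu => ?_⟩
  have hu' : Heps (ext01 f) (ext01 D) (ext01 σ) T ε u ≤ ENNReal.ofReal M := by
    rw [heps_ext]
    exact hu
  exact ⟨fun n k => hd1 n k ε hε u hu', fun n k h h0 hh =>
    hd2 n k ε hε u hu' h h0 (hh.trans_le (min_le_left _ _))⟩

end GammaSCL
end
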